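/- arXiv:2406.06106 — 10 statements merged into one kernel-verified Lean document; each statement's English description precedes it below -/
import Mathlib

section
/- Let μ be a probability measure on ℝ that is absolutely continuous with respect to Lebesgue measure with density w, and suppose there exist a constant C > 0 and an exponent γ ∈ (0, 1/2) such that w(x) ≥ C·exp(−|x|^γ) for almost every x ∈ (−∞, 1]. Then there exists ε > 0 such that for every real polynomial q, ∫ |q(x) − sgn(x)| dμ(x) > ε. -/
open MeasureTheory ProbabilityTheory

/-- The sign function: `1` if `0 ≤ t`, `-1` otherwise. -/
noncomputable def sgn (t : ℝ) : ℝ := if 0 ≤ t then 1 else -1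

/-- The Stieltjes function with vanishing moments. -/
noncomputable def stF (a y : ℝ) : ℝ :=
  Real.exp (-(Real.cos (Real.pi * a)) * y ^ a) * Real.sin (Real.sin (Real.pi * a) * y ^ a)

lemma stF_measurable (a : ℝ) : Measurable (stF a) := by
  unfold stF
  fun_prop

lemma stF_abs_le (a y : ℝ) : |stF a y| ≤ Real.exp (-(Real.cos (Real.pi * a)) * y ^ a) := by
  unfold stF
  rw [abs_mul, Real.abs_exp]
  exact mul_le_of_le_one_right (Real.exp_pos _).le (Real.abs_sin_le_one _)

lemma cos_pos_aux {a : ℝ} (h0 : 0 < a) (h1 : a < 1 / 2) : 0 < Real.cos (Real.pi * a) := by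
  apply Real.cos_pos_of_mem_Ioo
  constructor <;> nlinarith [Real.pi_pos]

lemma stF_moment_int {a : ℝ} (h0 : 0 < a) (h1 : a < 1 / 2) (n : ℕ) :
    IntegrableOn (fun y => y ^ n * stF a y) (Set.Ioi 0) := by
  have h := integrableOn_rpow_mul_exp_neg_mul_rpow (p := a) (s := n)
    (b := Real.cos (Real.pi * a)) (by have : (0:ℝ) ≤ n := n.cast_nonneg
                                      linarith) h0 (cos_pos_aux h0 h1)
  refine Integrable.mono' h ?_ ?_
  · exact ((measurable_id.pow_const n).mul (stF_measurable a)).aestronglyMeasurable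
  · filter_upwards [self_mem_ae_restrict measurableSet_Ioi] with y hy
    have hy : 0 < y := hy
    rw [Real.norm_eq_abs, abs_mul, abs_of_pos (pow_pos hy n), Real.rpow_natCast]
    exact mul_le_mul_of_nonneg_left (stF_abs_le a y) (pow_pos hy n).le

lemma laplace_meas (s : ℝ) (r : ℂ) :
    Measurable (fun t : ℝ => ((t ^ s : ℝ) : ℂ) * Complex.exp (-r * t)) := by
  fun_prop

lemma laplace_norm {s : ℝ} (r : ℂ) {t : ℝ} (ht : 0 < t) :
    ‖((t ^ s : ℝ) : ℂ) * Complex.exp (-r * t)‖ = t ^ s * Real.exp (-r.re * t) := by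
  rw [norm_mul, Complex.norm_exp, Complex.norm_real, Real.norm_eq_abs,
    abs_of_pos (Real.rpow_pos_of_pos ht s)]
  simp only [Complex.re_mul_ofReal, Complex.neg_re]

lemma laplace_real_int {s b : ℝ} (hs : -1 < s) (hb : 0 < b) :
    IntegrableOn (fun t : ℝ => t ^ s * Real.exp (-b * t)) (Set.Ioi 0) := by
  have h := integrableOn_rpow_mul_exp_neg_mul_rpow hs one_pos hb
  simpa only [Real.rpow_one] using h

lemma laplace_diff {s : ℝ} (hs : -1 < s) {r : ℂ} (hr : 0 < r.re) :
    DifferentiableAt ℂ (fun r : ℂ => ∫ t in Set.Ioi (0:ℝ),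
      ((t ^ s : ℝ) : ℂ) * Complex.exp (-r * t)) r := by
  have hopen : IsOpen {z : ℂ | r.re / 2 < z.re} := isOpen_lt continuous_const Complex.continuous_re
  refine (hasDerivAt_integral_of_dominated_loc_of_deriv_le (𝕜 := ℂ)
    (F := fun (r : ℂ) (t : ℝ) => ((t ^ s : ℝ) : ℂ) * Complex.exp (-r * t))
    (F' := fun (r : ℂ) (t : ℝ) => -(((t ^ (s + 1) : ℝ) : ℂ) * Complex.exp (-r * t)))
    (bound := fun t : ℝ => t ^ (s + 1) * Real.exp (-(r.re / 2) * t))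
    (s := {z : ℂ | r.re / 2 < z.re}) (x₀ := r) (μ := volume.restrict (Set.Ioi (0:ℝ)))
    (hopen.mem_nhds (show r.re / 2 < r.re by linarith)) ?_ ?_ ?_ ?_ ?_ ?_).2.differentiableAt
  · exact Filter.Eventually.of_forall fun z => (laplace_meas s z).aestronglyMeasurable
  · refine Integrable.mono' (laplace_real_int hs hr) (laplace_meas s r).aestronglyMeasurable ?_
    filter_upwards [self_mem_ae_restrict measurableSet_Ioi] with t ht
    exact (laplace_norm r ht).le
  · exact (laplace_meas (s + 1) r).neg.aestronglyMeasurable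
  · filter_upwards [self_mem_ae_restrict measurableSet_Ioi] with t ht z hz
    have ht : 0 < t := ht
    have hz : r.re / 2 < z.re := hz
    rw [norm_neg, laplace_norm z ht]
    have := (Real.rpow_pos_of_pos ht (s + 1)).le
    gcongr
  · exact laplace_real_int (by linarith) (by linarith)
  · filter_upwards [self_mem_ae_restrict measurableSet_Ioi] with t ht z _
    have ht : 0 < t := ht
    have h1 : HasDerivAt (fun z : ℂ => -z * t) (-1 * t) z := (hasDerivAt_id z).neg.mul_const _
    have h2 := (h1.cexp).const_mul ((t ^ s : ℝ) : ℂ)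
    refine HasDerivAt.congr_deriv h2 ?_
    rw [Real.rpow_add ht, Real.rpow_one]
    push_cast
    ring

lemma laplace_eq {e : ℝ} (he : 0 < e) {c : ℂ} (hc : 0 < c.re) :
    ∫ t in Set.Ioi (0:ℝ), ((t ^ (e - 1) : ℝ) : ℂ) * Complex.exp (-c * t) =
      (1 / c) ^ (e : ℂ) * Complex.Gamma e := by
  have hopen : IsOpen {z : ℂ | 0 < z.re} := isOpen_lt continuous_const Complex.continuous_re
  have hconn : IsPreconnected {z : ℂ | 0 < z.re} := (convex_halfSpace_re_gt 0).isPreconnected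
  have hf : AnalyticOnNhd ℂ (fun r : ℂ => ∫ t in Set.Ioi (0:ℝ),
      ((t ^ (e - 1) : ℝ) : ℂ) * Complex.exp (-r * t)) {z : ℂ | 0 < z.re} :=
    DifferentiableOn.analyticOnNhd
      (fun z hz => (laplace_diff (by linarith) hz).differentiableWithinAt) hopen
  have hg : AnalyticOnNhd ℂ (fun r : ℂ => (1 / r) ^ (e : ℂ) * Complex.Gamma e)
      {z : ℂ | 0 < z.re} := by
    refine DifferentiableOn.analyticOnNhd (fun z hz => ?_) hopen
    have hz : 0 < z.re := hz
    have hz0 : z ≠ 0 := fun h => by simp [h] at hz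
    have hsl : 1 / z ∈ Complex.slitPlane := by
      left
      rw [one_div, Complex.inv_re]
      exact div_pos hz (Complex.normSq_pos.2 hz0)
    refine DifferentiableAt.differentiableWithinAt ?_
    refine DifferentiableAt.mul_const ?_ _
    exact ((differentiableAt_const _).div differentiableAt_id hz0).cpow_const hsl
  refine hf.eqOn_of_preconnected_of_frequently_eq hg hconn (z₀ := 1) (by simp) ?_ hc
  have ht : Filter.Tendsto (fun x : ℝ => (x : ℂ)) (nhdsWithin 1 {1}ᶜ) (nhdsWithin 1 {1}ᶜ) := by
    refine tendsto_nhdsWithin_iff.2 ⟨?_, ?_⟩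
    · have := (Complex.continuous_ofReal.tendsto (1:ℝ)).mono_left
        (nhdsWithin_le_nhds (s := {1}ᶜ))
      simpa using this
    · filter_upwards [self_mem_nhdsWithin] with x hx
      have : x ≠ 1 := hx
      simpa using this
  refine ht.frequently (Filter.Eventually.frequently ?_)
  filter_upwards [nhdsWithin_le_nhds (lt_mem_nhds (zero_lt_one' ℝ))] with r hr
  rw [← Complex.integral_cpow_mul_exp_neg_mul_Ioi (by simpa using he) hr]
  refine setIntegral_congr_fun measurableSet_Ioi fun t ht => ?_
  have ht : 0 < t := ht
  rw [Complex.ofReal_cpow ht.le]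
  push_cast
  rw [neg_mul]

lemma stF_moment {a : ℝ} (h0 : 0 < a) (h1 : a < 1 / 2) (n : ℕ) :
    ∫ y in Set.Ioi (0:ℝ), y ^ n * stF a y = 0 := by
  set c : ℂ := Complex.exp ((Real.pi * a : ℝ) * Complex.I) with hc
  have hcre : c.re = Real.cos (Real.pi * a) := by
    rw [hc, Complex.exp_ofReal_mul_I_re]
  have hcim : c.im = Real.sin (Real.pi * a) := by
    rw [hc, Complex.exp_ofReal_mul_I_im]
  have hpos := cos_pos_aux h0 h1
  set e : ℝ := (n + 1) / a with he
  have hepos : 0 < e := by positivity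
  have key := laplace_eq hepos (c := c) (by rw [hcre]; exact hpos)
  rw [← integral_comp_rpow_Ioi _ h0.ne'] at key
  -- integrand
  have hint : ∀ x ∈ Set.Ioi (0:ℝ), (|a| * x ^ (a - 1)) • ((((x ^ a) ^ (e - 1) : ℝ) : ℂ) *
      Complex.exp (-c * ((x ^ a : ℝ):ℂ))) =
      ((a * x ^ n : ℝ) : ℂ) * Complex.exp (-c * ((x ^ a : ℝ):ℂ)) := by
    intro x hx
    have hx : 0 < x := hx
    rw [Complex.real_smul, ← mul_assoc, ← Complex.ofReal_mul, abs_of_pos h0,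
      ← Real.rpow_mul hx.le, mul_assoc a, ← Real.rpow_add hx]
    have : a - 1 + a * (e - 1) = n := by
      rw [he]; field_simp; ring
    rw [this, Real.rpow_natCast]
  rw [setIntegral_congr_fun measurableSet_Ioi hint] at key
  have him : ∀ x : ℝ, (((a * x ^ n : ℝ) : ℂ) * Complex.exp (-c * ((x ^ a : ℝ):ℂ))).im
      = -(a * (x ^ n * stF a x)) := by
    intro x
    rw [Complex.im_ofReal_mul, Complex.exp_im]
    simp only [Complex.re_mul_ofReal, Complex.im_mul_ofReal, Complex.neg_re, Complex.neg_im,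
      hcre, hcim, stF]
    rw [neg_mul (Real.sin _), Real.sin_neg]
    ring
  have hinteg : IntegrableOn (fun x : ℝ => ((a * x ^ n : ℝ) : ℂ) *
      Complex.exp (-c * ((x ^ a : ℝ):ℂ))) (Set.Ioi 0) := by
    have h := (integrableOn_rpow_mul_exp_neg_mul_rpow (p := a) (s := n)
      (b := Real.cos (Real.pi * a)) (by have : (0:ℝ) ≤ n := n.cast_nonneg
                                        linarith) h0 hpos).const_mul a
    refine Integrable.mono' h ?_ ?_
    · apply Measurable.aestronglyMeasurable
      fun_prop
    · filter_upwards [self_mem_ae_restrict measurableSet_Ioi] with y hy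
      have hy : 0 < y := hy
      rw [norm_mul, Complex.norm_exp, Complex.norm_real, Real.norm_eq_abs,
        abs_of_pos (by positivity)]
      simp only [Complex.re_mul_ofReal, Complex.neg_re, hcre]
      rw [Real.rpow_natCast, mul_assoc]
  have h3 : (∫ x in Set.Ioi (0:ℝ), ((a * x ^ n : ℝ) : ℂ) *
      Complex.exp (-c * ((x ^ a : ℝ):ℂ))).im = 
      ∫ x in Set.Ioi (0:ℝ), -(a * (x ^ n * stF a x)) := by
    have := integral_im (𝕜 := ℂ) hinteg
    simp only [RCLike.im_to_complex] at this
    rw [← this]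
    simp only [him]
  have h4 : ((1 / c) ^ (e:ℂ) * Complex.Gamma e).im = 0 := by
    have h5 : (1 / c) ^ (e:ℂ) = ((Real.cos ((n+1 : ℕ) * Real.pi) : ℝ) : ℂ) := by
      have h6 : 1 / c = Complex.exp (-((Real.pi * a : ℝ) * Complex.I)) := by
        rw [hc, Complex.exp_neg, one_div]
      rw [h6, Complex.cpow_def_of_ne_zero (Complex.exp_ne_zero _), Complex.log_exp]
      · have : -((Real.pi * a : ℝ) * Complex.I) * (e:ℂ) =
          ((-((n+1 : ℕ) * Real.pi) : ℝ) : ℂ) * Complex.I := by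
          rw [he]; push_cast
          have : (a:ℂ) ≠ 0 := by exact_mod_cast h0.ne'
          field_simp
        rw [this]
        apply Complex.ext
        · rw [Complex.exp_ofReal_mul_I_re, Real.cos_neg, Complex.ofReal_re]
        · rw [Complex.exp_ofReal_mul_I_im, Complex.ofReal_im, Real.sin_neg, Real.sin_nat_mul_pi,
            neg_zero]
      · simp only [Complex.neg_im, Complex.im_ofReal_mul, Complex.I_im]
        nlinarith [Real.pi_pos]
      · simp only [Complex.neg_im, Complex.im_ofReal_mul, Complex.I_im]
        nlinarith [Real.pi_pos]
    rw [h5, Complex.Gamma_ofReal, ← Complex.ofReal_mul, Complex.ofReal_im]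
  rw [key, h4, integral_neg, integral_const_mul] at h3
  have := h3.symm
  rw [neg_eq_zero] at this
  exact (mul_eq_zero.mp this).resolve_left h0.ne'

lemma poly_eq (P : Polynomial ℝ) (a y : ℝ) : P.eval y * stF a y =
    ∑ i ∈ Finset.range (P.natDegree + 1), P.coeff i * (y ^ i * stF a y) := by
  rw [Polynomial.eval_eq_sum_range, Finset.sum_mul]
  exact Finset.sum_congr rfl fun i _ => by ring

lemma stF_poly_int {a : ℝ} (h0 : 0 < a) (h1 : a < 1 / 2) (P : Polynomial ℝ) :
    IntegrableOn (fun y => P.eval y * stF a y) (Set.Ioi 0) := by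
  simp only [poly_eq]
  exact integrable_finsetSum _ fun i _ => (stF_moment_int h0 h1 i).const_mul _

lemma stF_poly {a : ℝ} (h0 : 0 < a) (h1 : a < 1 / 2) (P : Polynomial ℝ) :
    ∫ y in Set.Ioi (0:ℝ), P.eval y * stF a y = 0 := by
  simp only [poly_eq]
  rw [integral_finsetSum _ fun i _ => (stF_moment_int h0 h1 i).const_mul _]
  refine Finset.sum_eq_zero fun i _ => ?_
  rw [integral_const_mul, stF_moment h0 h1, mul_zero]

lemma stF_pos {a : ℝ} (h0 : 0 < a) (h1 : a < 1 / 2) {y : ℝ} (hy : 0 < y) (hy1 : y ≤ 1) :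
    0 < stF a y := by
  unfold stF
  refine mul_pos (Real.exp_pos _) ?_
  have hs : 0 < Real.sin (Real.pi * a) := by
    apply Real.sin_pos_of_pos_of_lt_pi
    · exact mul_pos Real.pi_pos h0
    · nlinarith [Real.pi_pos]
  have hp := Real.rpow_pos_of_pos hy a
  have hp1 := Real.rpow_le_one hy.le hy1 h0.le
  apply Real.sin_pos_of_pos_of_lt_pi (mul_pos hs hp)
  have := Real.sin_le_one (Real.pi * a)
  nlinarith [Real.pi_gt_three]

lemma stF_int_pos {a : ℝ} (h0 : 0 < a) (h1 : a < 1 / 2) :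
    0 < ∫ y in Set.Ioc (0:ℝ) 1, stF a y := by
  have hi : IntegrableOn (stF a) (Set.Ioc 0 1) := by
    have := stF_moment_int h0 h1 0
    simp only [pow_zero, one_mul] at this
    exact this.mono_set Set.Ioc_subset_Ioi_self
  rw [← intervalIntegral.integral_of_le zero_le_one]
  apply intervalIntegral.intervalIntegral_pos_of_pos_on
  · rwa [intervalIntegrable_iff_integrableOn_Ioc_of_le zero_le_one]
  · intro x hx
    exact stF_pos h0 h1 hx.1 hx.2.le
  · exact zero_lt_one

lemma rpow_bound {γ a k : ℝ} (hγ : 0 < γ) (hγa : γ < a) (hk : 0 < k) :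
    ∃ K : ℝ, ∀ y : ℝ, 0 < y → y ^ γ ≤ K + k * y ^ a := by
  set Y : ℝ := k ^ (-1 / (a - γ)) with hY
  have hYp : 0 < Y := Real.rpow_pos_of_pos hk _
  refine ⟨Y ^ γ, fun y hy => ?_⟩
  have h1 := Real.rpow_pos_of_pos hy a
  have h2 := Real.rpow_pos_of_pos hYp γ
  rcases le_total y Y with h | h
  · have := Real.rpow_le_rpow hy.le h hγ.le
    nlinarith
  · have h3 : y ^ (-(a - γ)) ≤ k := by
      have := Real.rpow_le_rpow_of_nonpos hYp h (z := -(a - γ)) (by linarith)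
      refine this.trans_eq ?_
      rw [hY, ← Real.rpow_mul hk.le]
      have : a - γ ≠ 0 := by linarith
      rw [show -1 / (a - γ) * -(a - γ) = 1 by field_simp, Real.rpow_one]
    have h4 : y ^ γ = y ^ (-(a - γ)) * y ^ a := by
      rw [← Real.rpow_add hy]; congr 1; ring
    rw [h4]
    nlinarith

lemma stF_bound {γ a : ℝ} (hγ : 0 < γ) (hγa : γ < a) (h1 : a < 1 / 2) :
    ∃ M : ℝ, 0 < M ∧ ∀ y : ℝ, 0 < y → |stF a y| ≤ M * Real.exp (-(|1 - y| ^ γ)) := by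
  obtain ⟨K, hK⟩ := rpow_bound hγ hγa (cos_pos_aux (hγ.trans hγa) h1)
  refine ⟨Real.exp (1 + K), Real.exp_pos _, fun y hy => (stF_abs_le a y).trans ?_⟩
  rw [← Real.exp_add, Real.exp_le_exp]
  have h2 : |1 - y| ≤ 1 + y := by rw [abs_le]; constructor <;> linarith
  have h3 := Real.rpow_le_rpow (abs_nonneg _) h2 hγ.le
  have h4 := Real.rpow_add_le_add_rpow zero_le_one hy.le hγ.le (by linarith)
  rw [Real.one_rpow] at h4
  have := hK y hy
  linarith

lemma sgn_measurable : Measurable sgn := by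
  unfold sgn
  exact Measurable.ite measurableSet_Ici measurable_const measurable_const

theorem one_sided_LSL_inapproximability
    (μ : Measure ℝ) [IsProbabilityMeasure μ] (w : ℝ → ℝ)
    (hμ : μ = volume.withDensity fun x => ENNReal.ofReal (w x))
    (C γ : ℝ) (hC : 0 < C) (hγ : γ ∈ Set.Ioo (0 : ℝ) (1 / 2))
    (hw : ∀ᵐ x ∂volume, x ≤ 1 → C * Real.exp (-(|x| ^ γ)) ≤ w x) :
    ∃ ε > 0, ∀ q : Polynomial ℝ,
      ENNReal.ofReal ε < ∫⁻ x, ENNReal.ofReal |q.eval x - sgn x| ∂μ := by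
  obtain ⟨hγ0, hγ1⟩ := hγ
  obtain ⟨a, hγa, ha1⟩ := exists_between hγ1
  have ha0 : 0 < a := hγ0.trans hγa
  obtain ⟨M, hM, hb⟩ := stF_bound hγ0 hγa ha1
  have hδ := stF_int_pos ha0 ha1
  set δ := ∫ y in Set.Ioc (0:ℝ) 1, stF a y with hδdef
  set c : ℝ := C / M with hc
  have hcp : 0 < c := div_pos hC hM
  set F : ℝ → ℝ := Set.indicator (Set.Ioi 0) (fun y => c * stF a y) with hF
  have hFm : Measurable F := ((stF_measurable a).const_mul c).indicator measurableSet_Ioi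
  refine ⟨c * δ, mul_pos hcp hδ, fun q => ?_⟩
  have hle : volume.withDensity (fun x => ENNReal.ofReal |F (1 - x)|) ≤ μ := by
    rw [hμ]
    apply withDensity_mono
    filter_upwards [hw] with x hx
    by_cases h : x < 1
    · apply ENNReal.ofReal_le_ofReal
      refine le_trans ?_ (hx h.le)
      have hm : (1 - x) ∈ Set.Ioi (0:ℝ) := by simpa using h
      rw [hF, Set.indicator_of_mem hm, abs_mul, abs_of_pos hcp]
      have := hb (1 - x) hm
      rw [sub_sub_cancel] at this
      calc c * |stF a (1 - x)| ≤ c * (M * Real.exp (-(|x| ^ γ))) :=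
            mul_le_mul_of_nonneg_left this hcp.le
        _ = _ := by rw [hc]; field_simp
    · have hm : (1 - x) ∉ Set.Ioi (0:ℝ) := by simpa using h
      rw [hF, Set.indicator_of_notMem hm]
      simp
  have hqm : Measurable fun x => q.eval x - sgn x :=
    q.continuous.measurable.sub sgn_measurable
  have hL : ENNReal.ofReal (2 * (c * δ)) ≤ ∫⁻ x, ENNReal.ofReal |q.eval x - sgn x| ∂μ := by
    refine le_trans ?_ (lintegral_mono' hle le_rfl)
    rw [lintegral_withDensity_eq_lintegral_mul _ (by fun_prop) (by fun_prop)]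
    simp only [Pi.mul_apply]
    rw [← lintegral_sub_left_eq_self _ (1:ℝ)]
    simp only [sub_sub_cancel]
    have hI : ∫ y, F y * (q.eval (1 - y) - sgn (1 - y)) = -(2 * (c * δ)) := by
      set P : Polynomial ℝ := q.comp (1 - Polynomial.X) + 1 with hP
      have e1 : ∀ y, F y * (q.eval (1 - y) - sgn (1 - y)) =
          (Set.Ioi (0:ℝ)).indicator (fun y => c * (P.eval y * stF a y)) y
          - (Set.Ioc (0:ℝ) 1).indicator (fun y => 2 * c * stF a y) y := by
        intro y
        have hPe : P.eval y = q.eval (1 - y) + 1 := by simp [hP]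
        by_cases hy : 0 < y
        · by_cases hy1 : y ≤ 1
          · rw [hF, Set.indicator_of_mem (show y ∈ Set.Ioi (0:ℝ) from hy),
              Set.indicator_of_mem (show y ∈ Set.Ioi (0:ℝ) from hy),
              Set.indicator_of_mem (show y ∈ Set.Ioc (0:ℝ) 1 from ⟨hy, hy1⟩), hPe, sgn,
              if_pos (by linarith)]
            ring
          · rw [hF, Set.indicator_of_mem (show y ∈ Set.Ioi (0:ℝ) from hy),
              Set.indicator_of_mem (show y ∈ Set.Ioi (0:ℝ) from hy),
              Set.indicator_of_notMem (fun h : y ∈ Set.Ioc (0:ℝ) 1 => hy1 h.2), hPe, sgn,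
              if_neg (by linarith)]
            ring
        · rw [hF, Set.indicator_of_notMem (show y ∉ Set.Ioi (0:ℝ) from hy),
              Set.indicator_of_notMem (show y ∉ Set.Ioi (0:ℝ) from hy),
              Set.indicator_of_notMem (fun h : y ∈ Set.Ioc (0:ℝ) 1 => hy h.1)]
          ring
      have i2 : IntegrableOn (stF a) (Set.Ioc 0 1) := by
        have := stF_moment_int ha0 ha1 0
        simp only [pow_zero, one_mul] at this
        exact this.mono_set Set.Ioc_subset_Ioi_self
      simp only [e1]
      rw [integral_sub, integral_indicator measurableSet_Ioi, integral_indicator measurableSet_Ioc,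
        integral_const_mul, integral_const_mul, stF_poly ha0 ha1, ← hδdef]
      · ring
      · exact (integrable_indicator_iff measurableSet_Ioi).2 ((stF_poly_int ha0 ha1 P).const_mul c)
      · exact (integrable_indicator_iff measurableSet_Ioc).2 (i2.const_mul (2 * c))
    have h := enorm_integral_le_lintegral_enorm (μ := volume)
      (fun y => F y * (q.eval (1 - y) - sgn (1 - y)))
    rw [hI, enorm_neg, Real.enorm_of_nonneg (by positivity)] at h
    refine h.trans_eq ?_
    refine lintegral_congr fun y => ?_
    rw [enorm_mul, Real.enorm_eq_ofReal_abs, Real.enorm_eq_ofReal_abs]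
  refine lt_of_lt_of_le ?_ hL
  have := mul_pos hcp hδ
  rw [ENNReal.ofReal_lt_ofReal_iff (by linarith)]
  linarith
end

section
/- There exists a squarefree real polynomial p in one variable such that the set {x ∈ ℝ : p(x) ≥ 0} is compact, and there exists ε > 0 such that for every real polynomial q, ∫ |q(p(x)) − sgn(p(x))| dγ(x) > ε, where γ is the standard Gaussian measure N(0,1) on ℝ. -/
open MeasureTheory ProbabilityTheory

/-- The cube root of `-1` used as Gaussian parameter. -/
noncomputable def wC : ℂ := ⟨1/2, √3/2⟩

lemma wC_re : wC.re = 1/2 := rfl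

lemma wC_cube : wC ^ 3 = -1 := by
  have h : (√3:ℝ) * √3 = 3 := Real.mul_self_sqrt (by norm_num)
  apply Complex.ext
  · simp [wC, pow_succ, Complex.mul_re, Complex.mul_im]; nlinarith
  · simp [wC, pow_succ, Complex.mul_re, Complex.mul_im]; linear_combination (-√3/8) * h

lemma wC_int (k : ℕ) : Integrable fun x : ℝ => (x:ℂ) ^ k * Complex.exp (-wC * (x:ℂ)^2) := by
  have h := integrable_rpow_mul_exp_neg_mul_sq (b := 1/2) (by norm_num) (s := k)
    (by have : (0:ℝ) ≤ k := k.cast_nonneg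
        linarith)
  refine h.norm.mono' (by fun_prop) (Filter.Eventually.of_forall fun x => ?_)
  rw [norm_mul, norm_mul, norm_cexp_neg_mul_sq, Real.rpow_natCast, wC_re]
  simp

lemma wC_rec (k : ℕ) : 2 * wC * ∫ x : ℝ, (x:ℂ) ^ (k+2) * Complex.exp (-wC * (x:ℂ)^2) =
    (k+1) * ∫ x : ℝ, (x:ℂ) ^ k * Complex.exp (-wC * (x:ℂ)^2) := by
  have hd : ∀ x : ℝ, HasDerivAt (fun x : ℝ => (x:ℂ) ^ (k+1) * Complex.exp (-wC * (x:ℂ)^2))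
      ((k+1) * ((x:ℂ) ^ k * Complex.exp (-wC * (x:ℂ)^2)) -
        2 * wC * ((x:ℂ) ^ (k+2) * Complex.exp (-wC * (x:ℂ)^2))) x := by
    intro x
    have h1 : HasDerivAt (fun z : ℂ => z ^ (k+1) * Complex.exp (-wC * z^2))
      ((k+1) * ((x:ℂ) ^ k * Complex.exp (-wC * (x:ℂ)^2)) -
        2 * wC * ((x:ℂ) ^ (k+2) * Complex.exp (-wC * (x:ℂ)^2))) (x:ℂ) := by
      have := (hasDerivAt_pow (k+1) (x:ℂ)).mul
        (((hasDerivAt_pow 2 (x:ℂ)).const_mul (-wC)).cexp)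
      refine this.congr_deriv ?_
      push_cast
      ring
    exact h1.comp_ofReal
  have := integral_eq_zero_of_hasDerivAt_of_integrable hd
    (((wC_int k).const_mul _).sub ((wC_int (k+2)).const_mul _)) (wC_int (k+1))
  rw [integral_sub ((wC_int k).const_mul _) ((wC_int (k+2)).const_mul _),
    integral_const_mul, integral_const_mul] at this
  linear_combination -this

lemma wC_eq : wC = Complex.exp ((Real.pi / 3 : ℝ) * Complex.I) := by
  rw [Complex.exp_mul_I, ← Complex.ofReal_cos, ← Complex.ofReal_sin, Real.cos_pi_div_three,
    Real.sin_pi_div_three]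
  apply Complex.ext <;> simp [wC]

lemma wC_zero : ∫ x : ℝ, Complex.exp (-wC * (x:ℂ)^2) =
    (√Real.pi : ℝ) * Complex.exp (-(Real.pi / 6 : ℝ) * Complex.I) := by
  rw [integral_gaussian_complex (by rw [wC_re]; norm_num)]
  have hpi := Real.pi_pos
  have h1 : (Real.pi:ℂ) / wC = Complex.exp
      ((Real.log Real.pi : ℝ) + (-(Real.pi / 3) : ℝ) * Complex.I) := by
    rw [Complex.exp_add, ← Complex.ofReal_exp, Real.exp_log hpi, wC_eq, div_eq_mul_inv,
      ← Complex.exp_neg]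
    push_cast; ring_nf
  have h2 : √Real.pi = Real.exp (Real.log Real.pi / 2) := by
    rw [← Real.log_sqrt hpi.le, Real.exp_log (Real.sqrt_pos.2 hpi)]
  rw [h1, Complex.cpow_def_of_ne_zero (Complex.exp_ne_zero _), Complex.log_exp, h2,
    Complex.ofReal_exp, ← Complex.exp_add]
  · congr 1; push_cast; ring
  · simp; linarith
  · simp; linarith

lemma wC_moment (n : ℕ) : ∃ r : ℝ, ∫ x : ℝ, (x:ℂ) ^ (6*n) * Complex.exp (-wC * (x:ℂ)^2) =
    r * Complex.exp (-(Real.pi / 6 : ℝ) * Complex.I) := by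
  induction n with
  | zero => exact ⟨√Real.pi, by simpa using wC_zero⟩
  | succ n ih =>
    obtain ⟨r, hr⟩ := ih
    have h1 := wC_rec (6*n)
    have h2 := wC_rec (6*n+2)
    have h3 := wC_rec (6*n+4)
    rw [hr] at h1
    refine ⟨-((6*n+1)*(6*n+3)*(6*n+5)/8 * r), ?_⟩
    have e : 6*(n+1) = 6*n+4+2 := by ring
    rw [e]
    push_cast at h1 h2 h3 ⊢
    linear_combination (-wC^2/2) * h3 - (6*n+5) * wC/4 * h2 - (6*n+5)*(6*n+3)/8 * h1 +
      (∫ x : ℝ, (x:ℂ) ^ (6*n+4+2) * Complex.exp (-wC * (x:ℂ)^2)) * wC_cube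

/-- The annihilating function. -/
noncomputable def gF (x : ℝ) : ℝ := Real.sin (Real.pi / 6 - √3/2 * x^2)

lemma gF_cont : Continuous gF := by unfold gF; fun_prop

lemma gF_le (x : ℝ) : |gF x| ≤ 1 := Real.abs_sin_le_one _

lemma gF_im (n : ℕ) (x : ℝ) : x ^ n * (Real.exp (-x^2/2) * gF x) =
    (Complex.exp ((Real.pi / 6 : ℝ) * Complex.I) *
      ((x:ℂ) ^ n * Complex.exp (-wC * (x:ℂ)^2))).im := by
  have : Complex.exp ((Real.pi / 6 : ℝ) * Complex.I) *
      ((x:ℂ) ^ n * Complex.exp (-wC * (x:ℂ)^2)) =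
      ((x ^ n * Real.exp (-x^2/2) : ℝ) : ℂ) *
        Complex.exp ((Real.pi / 6 - √3/2 * x^2 : ℝ) * Complex.I) := by
    have hw : wC = 1/2 + (√3:ℝ)/2 * Complex.I := by apply Complex.ext <;> simp [wC]
    rw [mul_left_comm, ← Complex.exp_add, Complex.ofReal_mul, mul_assoc, Complex.ofReal_exp,
      ← Complex.exp_add, hw]
    push_cast
    ring_nf
  rw [this, Complex.im_ofReal_mul, Complex.exp_ofReal_mul_I_im, gF, mul_assoc]

lemma gF_moment (n : ℕ) : ∫ x, x ^ (6*n) * gF x ∂(gaussianReal 0 1) = 0 := by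
  rw [integral_gaussianReal_eq_integral_smul (by norm_num)]
  have : ∀ x : ℝ, gaussianPDFReal 0 1 x • (x ^ (6*n) * gF x) =
      (√(2 * Real.pi))⁻¹ * (Complex.exp ((Real.pi / 6 : ℝ) * Complex.I) *
      ((x:ℂ) ^ (6*n) * Complex.exp (-wC * (x:ℂ)^2))).im := by
    intro x
    rw [← gF_im, gaussianPDFReal]
    simp
    ring
  simp_rw [this]
  rw [integral_const_mul]
  have h := integral_im ((wC_int (6*n)).const_mul (Complex.exp ((Real.pi / 6 : ℝ) * Complex.I)))
  simp only [RCLike.im_eq_complex_im] at h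
  rw [h, integral_const_mul]
  obtain ⟨r, hr⟩ := wC_moment n
  rw [hr, mul_left_comm, ← Complex.exp_add]
  simp

lemma pow_int (k : ℕ) : Integrable (fun x : ℝ => x ^ k) (gaussianReal 0 1) := by
  have h := (memLp_id_gaussianReal' (μ := 0) (v := 1) (k : ENNReal) (by simp)).integrable_norm_pow'
  refine h.mono' (by fun_prop) (Filter.Eventually.of_forall fun x => ?_)
  simp

lemma poly_int (Q : Polynomial ℝ) :
    Integrable (fun x : ℝ => Q.eval x) (gaussianReal 0 1) := by
  induction Q using Polynomial.induction_on' with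
  | add p q hp hq => simp only [Polynomial.eval_add]; exact hp.add hq
  | monomial n a => simpa using (pow_int n).const_mul a

lemma mul_gF_int {f : ℝ → ℝ} (hf : Integrable f (gaussianReal 0 1)) :
    Integrable (fun x => f x * gF x) (gaussianReal 0 1) := by
  exact hf.mul_bdd (c := 1) gF_cont.aestronglyMeasurable
    (Filter.Eventually.of_forall fun x => gF_le x)

lemma poly6_int (Q : Polynomial ℝ) :
    Integrable (fun x : ℝ => Q.eval (x^6)) (gaussianReal 0 1) := by
  have h : (fun x : ℝ => Q.eval (x^6)) =
      fun x : ℝ => (Q.comp (Polynomial.X ^ 6)).eval x := by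
    funext x
    rw [Polynomial.eval_comp, Polynomial.eval_pow, Polynomial.eval_X]
  rw [h]
  exact poly_int _

lemma poly_annih (Q : Polynomial ℝ) :
    ∫ x, Q.eval (x^6) * gF x ∂(gaussianReal 0 1) = 0 := by
  induction Q using Polynomial.induction_on' with
  | add p q hp hq =>
    simp only [Polynomial.eval_add, add_mul]
    rw [integral_add (mul_gF_int (poly6_int p)) (mul_gF_int (poly6_int q)), hp, hq, add_zero]
  | monomial n a =>
    simp only [Polynomial.eval_monomial, mul_assoc, ← pow_mul]
    rw [integral_const_mul, gF_moment, mul_zero]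

lemma gF_pos {x : ℝ} (hx : x ∈ Set.Icc (-(1/2):ℝ) (1/2)) : 0 < gF x := by
  have h3 : √3 ≤ 2 := by rw [Real.sqrt_le_left (by norm_num)]; norm_num
  have h0 : 0 ≤ √3 := Real.sqrt_nonneg _
  have hx2 : x^2 ≤ 1/4 := by nlinarith [hx.1, hx.2]
  have hpi := Real.pi_gt_three
  have : √3/2 * x^2 ≤ 1 * (1/4) := by gcongr; linarith
  have : 0 ≤ √3/2 * x^2 := by positivity
  apply Real.sin_pos_of_pos_of_lt_pi <;> linarith

lemma gF_setInt_pos : 0 < ∫ x in Set.Icc (-(1/2):ℝ) (1/2), gF x ∂(gaussianReal 0 1) := by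
  have hi : Integrable gF (gaussianReal 0 1) := by
    simpa using mul_gF_int (f := fun _ => 1) (integrable_const _)
  rw [setIntegral_pos_iff_support_of_nonneg_ae _ hi.integrableOn]
  · have hsub : Set.Icc (-(1/2):ℝ) (1/2) ⊆ Function.support gF := fun x hx =>
      Function.mem_support.2 (gF_pos hx).ne'
    rw [Set.inter_eq_right.2 hsub, pos_iff_ne_zero]
    intro h
    have := gaussianReal_absolutelyContinuous' 0 (v := 1) (by norm_num) h
    rw [Real.volume_Icc] at this
    norm_num at this
  · exact (ae_restrict_mem measurableSet_Icc).mono fun x hx => (gF_pos hx).le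

open Polynomial in
lemma pos_set : {x : ℝ | 0 ≤ (C (1/64) - X ^ 6 : ℝ[X]).eval x} = Set.Icc (-(1/2):ℝ) (1/2) := by
  ext x
  simp only [Set.mem_ofPred_eq, eval_sub, eval_C, eval_pow, eval_X, sub_nonneg, Set.mem_Icc,
    ← abs_le]
  rw [← Even.pow_abs (by decide : Even 6), show (1/64:ℝ) = (1/2)^6 by norm_num]
  exact pow_le_pow_iff_left₀ (abs_nonneg x) (by norm_num) (by norm_num)

theorem exists_squarefree_compact_PTF_inapproximable :
    ∃ p : Polynomial ℝ, Squarefree p ∧ IsCompact {x : ℝ | 0 ≤ p.eval x} ∧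
      ∃ ε > 0, ∀ q : Polynomial ℝ,
        ε < ∫ x, |q.eval (p.eval x) - sgn (p.eval x)| ∂(gaussianReal 0 1) := by
  refine ⟨Polynomial.C (1/64) - Polynomial.X ^ 6, ?_, ?_,
    ∫ x in Set.Icc (-(1/2):ℝ) (1/2), gF x ∂(gaussianReal 0 1), gF_setInt_pos, fun q => ?_⟩
  · have h := (Polynomial.separable_X_pow_sub_C (n := 6) (1/64 : ℝ) (by norm_num)
      (by norm_num)).squarefree
    rw [← neg_sub]
    exact (Associated.neg_left (Associated.refl _)).squarefree_iff.2 h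
  · rw [pos_set]; exact isCompact_Icc
  set p : Polynomial ℝ := Polynomial.C (1/64) - Polynomial.X ^ 6 with hp
  set μ := gaussianReal 0 1
  have hi : Integrable gF μ := by
    simpa using mul_gF_int (f := fun _ => 1) (integrable_const _)
  have hg0 : ∫ x, gF x ∂μ = 0 := by simpa using gF_moment 0
  have hq : ∀ x : ℝ, q.eval (p.eval x) =
      (q.comp (Polynomial.C (1/64) - Polynomial.X)).eval (x^6) := by
    intro x; simp [hp]
  have hqi : Integrable (fun x => q.eval (p.eval x)) μ := by
    simp_rw [hq]; exact poly6_int _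
  have hqg : ∫ x, q.eval (p.eval x) * gF x ∂μ = 0 := by
    simp_rw [hq]; exact poly_annih _
  have hs : ∀ x : ℝ, sgn (p.eval x) =
      2 * (Set.Icc (-(1/2):ℝ) (1/2)).indicator (fun _ => (1:ℝ)) x - 1 := by
    intro x
    rw [← pos_set, sgn, Set.indicator]
    simp only [Set.mem_ofPred_eq, ← hp]
    split_ifs <;> norm_num
  have hind : Integrable ((Set.Icc (-(1/2):ℝ) (1/2)).indicator (fun _ => (1:ℝ))) μ :=
    (integrable_const 1).indicator measurableSet_Icc
  have hsi : Integrable (fun x => sgn (p.eval x)) μ := by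
    simp_rw [hs]; exact (hind.const_mul 2).sub (integrable_const 1)
  have hsg : ∫ x, sgn (p.eval x) * gF x ∂μ =
      2 * ∫ x in Set.Icc (-(1/2):ℝ) (1/2), gF x ∂μ := by
    have : ∀ x, sgn (p.eval x) * gF x =
        2 * (Set.Icc (-(1/2):ℝ) (1/2)).indicator gF x - gF x := by
      intro x
      rw [hs]
      simp only [Set.indicator]
      split_ifs <;> ring
    simp_rw [this]
    rw [integral_sub ((hi.indicator measurableSet_Icc).const_mul 2) hi, integral_const_mul, hg0,
      integral_indicator measurableSet_Icc, sub_zero]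
  have hd := hqi.sub hsi
  have key : ∫ x, (sgn (p.eval x) * gF x - q.eval (p.eval x) * gF x) ∂μ ≤
      ∫ x, |q.eval (p.eval x) - sgn (p.eval x)| ∂μ := by
    refine integral_mono ((mul_gF_int hsi).sub (mul_gF_int hqi)) hd.abs fun x => ?_
    have h1 := neg_abs_le ((q.eval (p.eval x) - sgn (p.eval x)) * gF x)
    rw [abs_mul] at h1
    have h2 := mul_le_of_le_one_right (abs_nonneg (q.eval (p.eval x) - sgn (p.eval x))) (gF_le x)
    simp only
    linarith
  rw [integral_sub (mul_gF_int hsi) (mul_gF_int hqi), hqg, hsg] at key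
  have := gF_setInt_pos
  change 0 < ∫ x in Set.Icc (-(1/2):ℝ) (1/2), gF x ∂μ at this
  linarith
end

section
/- For every γ ∈ (0, 1/2) there exists a constant M > 0, depending only on γ, such that for every real polynomial q in one variable: sup over x with |x − 1| ≤ 1/4 of |q'(x)| is at most M·∫₀^∞ |q(x)|·exp(−x^γ) dx. -/
open MeasureTheory

lemma bn_poisson_R (G : ℂ → ℂ) (B J : ℝ)
    (hc : ContinuousOn G {w | 0 ≤ w.im})
    (hd : ∀ w : ℂ, 0 < w.im → DifferentiableAt ℂ G w)
    (hB : ∀ w : ℂ, 0 ≤ w.im → ‖G w‖ ≤ B)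
    (hJ : ∀ R : ℝ, 0 < R → ∫ t in (-R)..R, ‖G t‖ ≤ J)
    (z : ℂ) (hz : 0 < z.im) (R : ℝ) (hR : 2 * (‖z‖ + 1) ≤ R) :
    ‖G z‖ / z.im ≤ J / z.im ^ 2 + 32 * B / R := by
  have hRpos : 0 < R := by have := norm_nonneg z; linarith
  have hre := Complex.abs_re_le_norm z
  have him := Complex.abs_im_le_norm z
  rw [abs_le] at hre him
  set y := z.im with hy
  let zb : ℂ := (starRingEnd ℂ) z
  have hzb : zb = (starRingEnd ℂ) z := rfl
  have hzbn : ‖zb‖ = ‖z‖ := by simp [hzb]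
  have hzbim : zb.im = -y := by simp [hzb, hy]
  let f : ℂ → ℂ := fun w => dslope G z w / (w - zb)
  have hne : ∀ w : ℂ, 0 ≤ w.im → w - zb ≠ 0 := by
    intro w hw h
    have := congrArg Complex.im h
    simp [hzbim] at this
    linarith
  have hfe : ∀ w : ℂ, w ≠ z → f w = (G w - G z) / ((w - z) * (w - zb)) := by
    intro w hw
    simp only [f]
    rw [dslope_of_ne _ hw, slope_def_field, div_div]
  have hB0 : 0 ≤ B := (norm_nonneg _).trans (hB z hz.le)
  have hfar : ∀ w : ℂ, 0 ≤ w.im → R ≤ ‖w‖ → ‖f w‖ ≤ 8 * B / R ^ 2 := by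
    intro w hw hwR
    have h1 : R / 2 ≤ ‖w - z‖ := by
      have := norm_sub_norm_le w z
      linarith
    have h2 : R / 2 ≤ ‖w - zb‖ := by
      have := norm_sub_norm_le w zb
      linarith
    have hwz : w ≠ z := by
      rintro rfl
      have := norm_nonneg w
      linarith
    rw [hfe w hwz, norm_div, norm_mul]
    have h3 : ‖G w - G z‖ ≤ 2 * B := by
      have := norm_sub_le (G w) (G z)
      have := hB w hw
      have := hB z hz.le
      linarith
    calc _ ≤ (2 * B) / ((R / 2) * (R / 2)) := by gcongr
      _ = _ := by field_simp; ring
  have key := Complex.integral_boundary_rect_eq_zero_of_differentiable_on_off_countable f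
    (⟨-R, 0⟩ : ℂ) (⟨R, R⟩ : ℂ) {z} (Set.countable_singleton z) (by
      have hs : {w : ℂ | 0 ≤ w.im} ∈ nhds z := by
        filter_upwards [(isOpen_lt continuous_const Complex.continuous_im).mem_nhds hz] with w hw
        exact le_of_lt hw
      have h1 : ContinuousOn f {w : ℂ | 0 ≤ w.im} := by
        refine ContinuousOn.div ((continuousOn_dslope hs).2 ⟨hc, hd z hz⟩) (by fun_prop) ?_
        intro w hw
        exact hne w hw
      refine h1.mono ?_
      intro w hw
      have := hw.2
      simp only [Set.mem_preimage, Set.uIcc_of_le hRpos.le] at this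
      exact this.1) (by
      intro w hw
      have h0 : 0 < w.im := by
        have := hw.1.2
        simp only [Set.mem_preimage, min_eq_left hRpos.le] at this
        exact this.1
      have hwz : w ≠ z := fun h => hw.2 (by simp [h])
      exact ((differentiableAt_dslope_of_ne hwz).2 (hd w h0)).div (by fun_prop) (hne w h0.le))
  simp only at key
  set k : ℝ → ℝ := fun t => 1 / ((t - z.re) ^ 2 + y ^ 2) with hk
  have hden : ∀ t : ℝ, 0 < (t - z.re) ^ 2 + y ^ 2 := fun t => by positivity
  have hkc : Continuous k := by
    apply Continuous.div (by fun_prop) (by fun_prop)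
    intro t; exact (hden t).ne'
  have hk0 : ∀ t, 0 ≤ k t := fun t => by simp only [hk]; have := hden t; positivity
  have hGc : Continuous (fun t : ℝ => G t) := by
    apply hc.comp_continuous Complex.continuous_ofReal
    intro t; simp
  have hfk : ∀ t : ℝ, f t = G t * (k t : ℂ) - G z * (k t : ℂ) := by
    intro t
    have htz : (t : ℂ) ≠ z := by
      intro h
      have := congrArg Complex.im h
      simp at this; linarith
    have hp : ((t : ℂ) - z) * (t - zb) = (((t - z.re) ^ 2 + y ^ 2 : ℝ) : ℂ) := by
      apply Complex.ext <;> simp [hzb, hy, pow_two] <;> ring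
    rw [hfe _ htz, hp]
    simp only [hk]
    push_cast
    ring
  have hb : (∫ x : ℝ in (-R)..R, f (x + (0 : ℝ) * Complex.I)) =
      (∫ t : ℝ in (-R)..R, G t * (k t : ℂ)) - G z * ((∫ t : ℝ in (-R)..R, k t : ℝ) : ℂ) := by
    rw [← intervalIntegral.integral_ofReal, ← intervalIntegral.integral_const_mul,
      ← intervalIntegral.integral_sub]
    · congr 1; ext t; rw [← hfk]; simp
    · exact (hGc.mul (Complex.continuous_ofReal.comp hkc)).intervalIntegrable _ _
    · apply Continuous.intervalIntegrable; fun_prop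
  have e1 : ‖∫ x : ℝ in (-R)..R, f (x + (R : ℝ) * Complex.I)‖ ≤ 8 * B / R ^ 2 * |R - (-R)| := by
    apply intervalIntegral.norm_integral_le_of_norm_le_const
    intro t _
    apply hfar
    · simp [hRpos.le]
    · refine le_trans (le_of_eq ?_) (Complex.abs_im_le_norm _)
      simp [abs_of_pos hRpos]
  have e2 : ‖∫ s : ℝ in (0:ℝ)..R, f ((R : ℝ) + s * Complex.I)‖ ≤ 8 * B / R ^ 2 * |R - 0| := by
    apply intervalIntegral.norm_integral_le_of_norm_le_const
    intro s hs
    rw [Set.uIoc_of_le hRpos.le] at hs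
    apply hfar
    · simp [hs.1.le]
    · refine le_trans (le_of_eq ?_) (Complex.abs_re_le_norm _)
      simp [abs_of_pos hRpos]
  have e3 : ‖∫ s : ℝ in (0:ℝ)..R, f ((-R : ℝ) + s * Complex.I)‖ ≤ 8 * B / R ^ 2 * |R - 0| := by
    apply intervalIntegral.norm_integral_le_of_norm_le_const
    intro s hs
    rw [Set.uIoc_of_le hRpos.le] at hs
    apply hfar
    · simp [hs.1.le]
    · refine le_trans (le_of_eq ?_) (Complex.abs_re_le_norm _)
      simp [abs_of_pos hRpos]
  have e4 : ‖∫ t : ℝ in (-R)..R, G t * (k t : ℂ)‖ ≤ J / y ^ 2 := by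
    calc _ ≤ ∫ t : ℝ in (-R)..R, ‖G t * (k t : ℂ)‖ :=
          intervalIntegral.norm_integral_le_integral_norm (by linarith)
      _ ≤ ∫ t : ℝ in (-R)..R, ‖G t‖ * (1 / y ^ 2) := by
          apply intervalIntegral.integral_mono_on (by linarith)
          · exact (hGc.mul (Complex.continuous_ofReal.comp hkc)).norm.intervalIntegrable _ _
          · exact (hGc.norm.mul continuous_const).intervalIntegrable _ _
          intro t _
          rw [norm_mul, Complex.norm_real, Real.norm_of_nonneg (hk0 t)]
          apply mul_le_mul_of_nonneg_left _ (norm_nonneg _)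
          apply one_div_le_one_div_of_le (by positivity)
          nlinarith [sq_nonneg (t - z.re)]
      _ = (∫ t : ℝ in (-R)..R, ‖G t‖) * (1 / y ^ 2) := by
          rw [intervalIntegral.integral_mul_const]
      _ ≤ J * (1 / y ^ 2) := by
          apply mul_le_mul_of_nonneg_right (hJ R hRpos) (by positivity)
      _ = _ := by ring
  have e5 : 1 / y ≤ ∫ t : ℝ in (-R)..R, k t := by
    calc 1 / y = ∫ t : ℝ in (z.re - y)..(z.re + y), 1 / (2 * y ^ 2) := by
          rw [intervalIntegral.integral_const, smul_eq_mul]; field_simp; ring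
      _ ≤ ∫ t : ℝ in (z.re - y)..(z.re + y), k t := by
          apply intervalIntegral.integral_mono_on (by linarith)
          · simp
          · exact hkc.intervalIntegrable _ _
          intro t ht
          apply one_div_le_one_div_of_le (hden t)
          nlinarith [ht.1, ht.2]
      _ ≤ _ := by
          apply intervalIntegral.integral_mono_interval
          · linarith
          · linarith
          · linarith
          · exact Filter.Eventually.of_forall hk0
          · exact hkc.intervalIntegrable _ _
  rw [hb] at key
  set K := ∫ t : ℝ in (-R)..R, k t
  set A := ∫ t : ℝ in (-R)..R, G t * (k t : ℂ)
  set E1 := ∫ x : ℝ in (-R)..R, f (x + (R : ℝ) * Complex.I)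
  set E2 := ∫ s : ℝ in (0:ℝ)..R, f ((R : ℝ) + s * Complex.I)
  set E3 := ∫ s : ℝ in (0:ℝ)..R, f ((-R : ℝ) + s * Complex.I)
  have hK0 : 0 ≤ K := le_trans (by positivity) e5
  have h6 : G z * (K : ℂ) = A - E1 + Complex.I * E2 - Complex.I * E3 := by
    simp only [smul_eq_mul] at key
    linear_combination -key
  have h7 : ‖G z‖ * K ≤ ‖A‖ + ‖E1‖ + ‖E2‖ + ‖E3‖ := by
    calc ‖G z‖ * K = ‖G z * (K : ℂ)‖ := by
          rw [norm_mul, Complex.norm_real, Real.norm_of_nonneg hK0]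
      _ ≤ ‖A‖ + ‖E1‖ + ‖Complex.I * E2‖ + ‖Complex.I * E3‖ := by
          rw [h6]
          have a1 := norm_sub_le (A - E1 + Complex.I * E2) (Complex.I * E3)
          have a2 := norm_add_le (A - E1) (Complex.I * E2)
          have a3 := norm_sub_le A E1
          linarith
      _ = _ := by simp
  have h8 : ‖G z‖ / y ≤ ‖G z‖ * K := by
    rw [div_eq_mul_one_div]
    exact mul_le_mul_of_nonneg_left e5 (norm_nonneg _)
  rw [abs_of_pos (by linarith)] at e1 e2 e3
  have h9 : 8 * B / R ^ 2 * (R - (-R)) + 8 * B / R ^ 2 * (R - 0) + 8 * B / R ^ 2 * (R - 0)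
      = 32 * B / R := by field_simp; ring
  linarith

lemma bn_poisson (G : ℂ → ℂ) (B J : ℝ)
    (hc : ContinuousOn G {w | 0 ≤ w.im})
    (hd : ∀ w : ℂ, 0 < w.im → DifferentiableAt ℂ G w)
    (hB : ∀ w : ℂ, 0 ≤ w.im → ‖G w‖ ≤ B)
    (hJ : ∀ R : ℝ, 0 < R → ∫ t in (-R)..R, ‖G t‖ ≤ J)
    (z : ℂ) (hz : 0 < z.im) :
    ‖G z‖ * z.im ≤ J := by
  have h1 : ‖G z‖ / z.im ≤ J / z.im ^ 2 + 0 := by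
    apply ge_of_tendsto (x := Filter.atTop) (f := fun R : ℝ => J / z.im ^ 2 + 32 * B / R)
    · exact tendsto_const_nhds.add (tendsto_const_nhds.div_atTop Filter.tendsto_id)
    · filter_upwards [Filter.eventually_ge_atTop (2 * (‖z‖ + 1))] with R hR
      exact bn_poisson_R G B J hc hd hB hJ z hz R hR
  rw [add_zero, div_le_div_iff₀ hz (by positivity)] at h1
  nlinarith

lemma bn_local (p : Polynomial ℂ) (A : ℝ)
    (h : ∀ w : ℂ, ‖w‖ ≤ 2 → ‖p.eval w‖ * |w.im| ≤ A) (x : ℂ) (hx : ‖x - 1‖ ≤ 1 / 4) :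
    ‖p.derivative.eval x‖ ≤ 16 * A := by
  have h1 : ∀ w : ℂ, ‖w - 1‖ ≤ 1 → ‖((w - 1) ^ 2 - 1) * p.eval w‖ ≤ 2 * A := by
    intro w hw
    refine Complex.norm_le_of_forall_mem_frontier_norm_le (U := Metric.ball (1 : ℂ) 1)
      (f := fun w => ((w - 1) ^ 2 - 1) * p.eval w) Metric.isBounded_ball ?_ ?_ ?_
    · apply Differentiable.diffContOnCl
      exact (by fun_prop : Differentiable ℂ fun w : ℂ => (w - 1) ^ 2 - 1).mul p.differentiable
    · intro v hv
      rw [frontier_ball _ one_ne_zero, mem_sphere_iff_norm] at hv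
      have hv2 : ‖v‖ ≤ 2 := by
        have := norm_sub_norm_le v 1
        simp only [norm_one] at this
        linarith
      have e : ‖(v - 1) ^ 2 - 1‖ = 2 * |v.im| := by
        have hs : (v.re - 1) ^ 2 + v.im ^ 2 = 1 := by
          have := Complex.sq_norm (v - 1)
          rw [hv, Complex.normSq_apply] at this
          simp at this
          linarith
        have h2 : (v - 1) ^ 2 - 1 = (v - 1) * (2 * v.im * Complex.I) := by
          apply Complex.ext
          · simp [pow_two]; nlinarith
          · simp [pow_two]; ring
        rw [h2, norm_mul, hv]
        simp
      show ‖((v - 1) ^ 2 - 1) * p.eval v‖ ≤ 2 * A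
      rw [norm_mul, e]
      have := h v hv2
      linarith
    · rw [closure_ball _ one_ne_zero]
      simpa [dist_eq_norm] using hw
  have h2 : ∀ w : ℂ, ‖w - 1‖ ≤ 1 / 2 → ‖p.eval w‖ ≤ 4 * A := by
    intro w hw
    have h3 := h1 w (by linarith)
    rw [norm_mul] at h3
    have h4 : 3 / 4 ≤ ‖(w - 1) ^ 2 - 1‖ := by
      have := norm_sub_norm_le (1 : ℂ) ((w - 1) ^ 2)
      rw [norm_one, norm_pow, norm_sub_rev 1 ((w - 1) ^ 2)] at this
      nlinarith [norm_nonneg (w - 1)]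
    nlinarith [norm_nonneg (p.eval w)]
  have h5 := Complex.norm_deriv_le_of_forall_mem_sphere_norm_le (f := fun w => p.eval w) (c := x)
    (R := 1 / 4) (C := 4 * A) (by norm_num) p.differentiable.diffContOnCl (by
      intro w hw
      apply h2
      rw [mem_sphere_iff_norm] at hw
      have := norm_add_le (w - x) (x - 1)
      rw [sub_add_sub_cancel] at this
      linarith)
  rw [Polynomial.deriv] at h5
  linarith

lemma bn_pow_bdd (α : ℝ) (hα : 0 < α) (n : ℕ) :
    ∃ B : ℝ, ∀ r : ℝ, 0 ≤ r → r ^ n * Real.exp (-(r ^ α)) ≤ B := by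
  have h1 : Filter.Tendsto (fun r : ℝ => r ^ n * Real.exp (-(r ^ α))) Filter.atTop (nhds 0) := by
    have := (tendsto_rpow_mul_exp_neg_mul_atTop_nhds_zero (n / α) 1 one_pos).comp
      (tendsto_rpow_atTop hα)
    refine this.congr' ?_
    filter_upwards [Filter.eventually_ge_atTop 0] with r hr
    simp only [Function.comp]
    rw [← Real.rpow_mul hr, mul_div_cancel₀ _ hα.ne', Real.rpow_natCast]
    simp
  obtain ⟨R, hR⟩ := Filter.eventually_atTop.1 (h1.eventually_le_const zero_lt_one)
  have hcont : Continuous (fun r : ℝ => r ^ n * Real.exp (-(r ^ α))) := by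
    have := Real.continuous_rpow_const hα.le
    fun_prop
  obtain ⟨B, hB⟩ := (isCompact_Icc (a := (0 : ℝ)) (b := R)).bddAbove_image hcont.continuousOn
  refine ⟨max B 1, fun r hr => ?_⟩
  rcases le_total r R with h | h
  · exact le_max_of_le_left (hB ⟨r, ⟨hr, h⟩, rfl⟩)
  · exact le_max_of_le_right (hR r h)

lemma bn_poly_bdd (α : ℝ) (hα : 0 < α) (p : Polynomial ℂ) :
    ∃ B : ℝ, ∀ t : ℂ, ‖p.eval t‖ * Real.exp (-(‖t‖ ^ α)) ≤ B := by
  induction p using Polynomial.induction_on' with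
  | add p q hp hq =>
    obtain ⟨B1, h1⟩ := hp
    obtain ⟨B2, h2⟩ := hq
    refine ⟨B1 + B2, fun t => ?_⟩
    refine le_trans ?_ (add_le_add (h1 t) (h2 t))
    rw [← add_mul, Polynomial.eval_add]
    exact mul_le_mul_of_nonneg_right (norm_add_le _ _) (Real.exp_nonneg _)
  | monomial n a =>
    obtain ⟨B, h⟩ := bn_pow_bdd α hα n
    refine ⟨‖a‖ * B, fun t => ?_⟩
    rw [Polynomial.eval_monomial, norm_mul, norm_pow, mul_assoc]
    exact mul_le_mul_of_nonneg_left (h _ (norm_nonneg _)) (norm_nonneg _)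

lemma bn_weight (γ : ℝ) (h0 : 0 < γ) (h1 : γ < 1 / 2) :
    ∃ (F : ℂ → ℂ) (C : ℝ), 0 < C ∧ ContinuousOn F {w | 0 ≤ w.im} ∧
      (∀ w : ℂ, 0 < w.im → DifferentiableAt ℂ F w) ∧
      (∀ w : ℂ, 0 ≤ w.im → ‖F w‖ ≤ Real.exp (-(‖w‖ ^ (2 * γ)))) ∧
      (∀ w : ℂ, 0 ≤ w.im → Real.exp (-(C * ‖w‖ ^ (2 * γ))) ≤ ‖F w‖) := by
  have hpi := Real.pi_pos
  have hcos : 0 < Real.cos (Real.pi * γ) := by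
    apply Real.cos_pos_of_mem_Ioo
    constructor <;> nlinarith
  set C := 1 / Real.cos (Real.pi * γ) with hC
  have hC0 : 0 < C := by positivity
  set F : ℂ → ℂ := fun w => Complex.exp (-(C : ℂ) * (-Complex.I * w) ^ ((2 * γ : ℝ) : ℂ)) with hF
  have hn : ∀ w : ℂ, ‖F w‖ = Real.exp (-(C * (‖w‖ ^ (2 * γ) *
      Real.cos (Complex.arg (-Complex.I * w) * (2 * γ))))) := by
    intro w
    simp only [hF]
    rw [Complex.norm_exp, ← Complex.ofReal_neg, Complex.re_ofReal_mul, Complex.cpow_ofReal_re]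
    simp
  refine ⟨F, C, hC0, ?_, ?_, ?_, ?_⟩
  · intro w hw
    apply ContinuousAt.continuousWithinAt
    have a1 : ContinuousAt (fun u : ℂ => u ^ ((2 * γ : ℝ) : ℂ)) (-Complex.I * w) := by
      apply Complex.continuousAt_cpow_const_of_re_pos
      · left; simpa using hw
      · simpa using h0
    have a2 : ContinuousAt (fun w : ℂ => (-Complex.I * w) ^ ((2 * γ : ℝ) : ℂ)) w :=
      ContinuousAt.comp (f := fun w : ℂ => -Complex.I * w) a1 (by fun_prop)
    exact (continuousAt_const.mul a2).cexp
  · intro w hw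
    have a2 : DifferentiableAt ℂ (fun w : ℂ => (-Complex.I * w) ^ ((2 * γ : ℝ) : ℂ)) w := by
      apply DifferentiableAt.cpow (by fun_prop) (by fun_prop)
      left; simpa using hw
    exact (a2.const_mul _).cexp
  · intro w hw
    rw [hn, Real.exp_le_exp, neg_le_neg_iff]
    have harg : |Complex.arg (-Complex.I * w)| ≤ Real.pi / 2 := by
      rw [Complex.abs_arg_le_pi_div_two_iff]; simpa using hw
    have : Real.cos (Real.pi * γ) ≤ Real.cos (Complex.arg (-Complex.I * w) * (2 * γ)) := by
      rw [← Real.cos_abs (Complex.arg (-Complex.I * w) * (2 * γ))]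
      rw [abs_mul, abs_of_pos (by linarith : 0 < 2 * γ)]
      apply Real.cos_le_cos_of_nonneg_of_le_pi
      · positivity
      · nlinarith
      · nlinarith
    have hp : 0 ≤ ‖w‖ ^ (2 * γ) := by positivity
    calc ‖w‖ ^ (2 * γ) = C * (‖w‖ ^ (2 * γ) * Real.cos (Real.pi * γ)) := by
          rw [hC, mul_left_comm, one_div_mul_cancel hcos.ne', mul_one]
      _ ≤ _ := by gcongr
  · intro w hw
    rw [hn, Real.exp_le_exp, neg_le_neg_iff]
    have hp : 0 ≤ ‖w‖ ^ (2 * γ) := by positivity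
    apply mul_le_mul_of_nonneg_left _ hC0.le
    have := Real.cos_le_one (Complex.arg (-Complex.I * w) * (2 * γ))
    nlinarith

lemma bn_int (γ : ℝ) (h0 : 0 < γ) (q : Polynomial ℝ) :
    IntegrableOn (fun t : ℝ => |q.eval t| * Real.exp (-(t ^ γ))) (Set.Ioi 0) := by
  have hc : Continuous (fun t : ℝ => |q.eval t| * Real.exp (-(t ^ γ))) := by
    have := Real.continuous_rpow_const h0.le
    have := q.continuous
    fun_prop
  obtain ⟨B, hB⟩ := bn_poly_bdd γ h0 ((q * (1 + Polynomial.X ^ 2)).map Complex.ofRealHom)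
  have hi : IntegrableOn (fun t : ℝ => B * (1 + t ^ 2)⁻¹) (Set.Ioi 0) :=
    (integrable_inv_one_add_sq.const_mul B).integrableOn
  refine Integrable.mono' hi hc.aestronglyMeasurable ?_
  refine (ae_restrict_iff' measurableSet_Ioi).2 (Filter.Eventually.of_forall fun t ht => ?_)
  have ht' : 0 < t := ht
  rw [Real.norm_of_nonneg (by positivity), ← div_eq_mul_inv, le_div_iff₀ (by positivity)]
  have := hB (t : ℂ)
  rw [Polynomial.eval_map, ← Complex.ofRealHom_eq_coe, Polynomial.eval₂_at_apply,
    Complex.ofRealHom_eq_coe, Complex.norm_real, Complex.ofRealHom_eq_coe, Complex.norm_real,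
    Real.norm_of_nonneg ht'.le] at this
  simp only [Polynomial.eval_mul, Polynomial.eval_add, Polynomial.eval_one, Polynomial.eval_pow,
    Polynomial.eval_X, norm_mul, Real.norm_eq_abs, abs_of_pos (by positivity : 0 < 1 + t ^ 2)] at this
  linarith

lemma bn_subst (γ : ℝ) (h0 : 0 < γ) (q : Polynomial ℝ) (R : ℝ) (hR : 0 < R) :
    ∫ t in (-R)..R, |t| * |q.eval (t ^ 2)| * Real.exp (-(|t| ^ (2 * γ))) ≤
      ∫ t in Set.Ioi (0 : ℝ), |q.eval t| * Real.exp (-(t ^ γ)) := by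
  set g : ℝ → ℝ := fun t => |q.eval t| * Real.exp (-(t ^ γ)) with hg
  set h : ℝ → ℝ := fun t => |t| * |q.eval (t ^ 2)| * Real.exp (-(|t| ^ (2 * γ))) with hh
  have hgc : Continuous g := by
    have := Real.continuous_rpow_const h0.le
    have := q.continuous
    fun_prop
  have hhe : ∀ t, h t = |t| * g (t ^ 2) := by
    intro t
    simp only [hh, hg]
    rw [mul_assoc, Real.rpow_mul (abs_nonneg t), Real.rpow_two, sq_abs]
  have hhc : Continuous h := by
    have : h = fun t => |t| * g (t ^ 2) := funext hhe
    rw [this]; fun_prop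
  have s1 : ∫ t in (-R)..0, h t = ∫ t in (0 : ℝ)..R, h t := by
    have := intervalIntegral.integral_comp_neg (a := 0) (b := R) h
    rw [neg_zero] at this
    rw [← this]
    simp [hh]
  have s2 : ∫ t in (0 : ℝ)..R, h t * 2 = ∫ x in (0 : ℝ)..(R ^ 2), g x := by
    have := intervalIntegral.integral_comp_mul_deriv (a := 0) (b := R) (f := fun t : ℝ => t ^ 2)
      (f' := fun t => 2 * t) (g := g) (fun t _ => by simpa using hasDerivAt_pow 2 t)
      (by fun_prop) hgc
    simp only [ne_eq, OfNat.ofNat_ne_zero, not_false_eq_true, zero_pow] at this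
    rw [← this]
    apply intervalIntegral.integral_congr
    intro t ht
    rw [Set.uIcc_of_le hR.le] at ht
    simp only [hhe, abs_of_nonneg ht.1, Function.comp]
    ring
  rw [← intervalIntegral.integral_add_adjacent_intervals (hhc.intervalIntegrable (-R) 0)
    (hhc.intervalIntegrable 0 R), s1, ← mul_two, ← intervalIntegral.integral_mul_const, s2,
    intervalIntegral.integral_of_le (by positivity)]
  apply setIntegral_mono_set (bn_int γ h0 q)
  · exact Filter.Eventually.of_forall fun t => by simp only [Pi.zero_apply]; positivity
  · exact (Set.Ioc_subset_Ioi_self).eventuallyLE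

theorem one_sided_bernstein_nikolskii (γ : ℝ) (hγ : γ ∈ Set.Ioo (0 : ℝ) (1 / 2)) :
    ∃ M > 0, ∀ q : Polynomial ℝ, ∀ x : ℝ, |x - 1| ≤ 1 / 4 →
      |q.derivative.eval x| ≤
        M * ∫ t in Set.Ioi (0 : ℝ), |q.eval t| * Real.exp (-(t ^ γ)) := by
  obtain ⟨h0, h1⟩ := hγ
  obtain ⟨F, C, hC, hFc, hFd, hFu, hFl⟩ := bn_weight γ h0 h1
  refine ⟨16 * (2 * Real.exp (C * 2)), by positivity, fun q x hx => ?_⟩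
  set J := ∫ t in Set.Ioi (0 : ℝ), |q.eval t| * Real.exp (-(t ^ γ)) with hJ
  have hJ0 : 0 ≤ J := by
    apply setIntegral_nonneg measurableSet_Ioi
    intro t _; positivity
  set p := q.map Complex.ofRealHom with hp
  have hpr : ∀ t : ℝ, p.eval (t : ℂ) = ((q.eval t : ℝ) : ℂ) := by
    intro t
    rw [hp, Polynomial.eval_map, ← Complex.ofRealHom_eq_coe, Polynomial.eval₂_at_apply]
    rfl
  set P : Polynomial ℂ := Polynomial.X * p.comp (Polynomial.X ^ 2) with hP
  have hPe : ∀ t, P.eval t = t * p.eval (t ^ 2) := by intro t; simp [hP, Polynomial.eval_comp]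
  obtain ⟨B, hB⟩ := bn_poly_bdd (2 * γ) (by linarith) P
  have hG : ∀ z : ℂ, 0 < z.im → ‖P.eval z * F z‖ * z.im ≤ J := by
    apply bn_poisson (fun z => P.eval z * F z) B J
    · exact P.continuous.continuousOn.mul hFc
    · intro w hw
      exact P.differentiableAt.mul (hFd w hw)
    · intro w hw
      rw [norm_mul]
      exact le_trans (mul_le_mul_of_nonneg_left (hFu w hw) (norm_nonneg _)) (hB w)
    · intro R hR
      refine le_trans ?_ (bn_subst γ h0 q R hR)
      have hFr : Continuous (fun t : ℝ => F t) := by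
        apply hFc.comp_continuous Complex.continuous_ofReal
        intro t; simp
      have hPr : Continuous (fun t : ℝ => P.eval (t : ℂ)) :=
        P.continuous.comp Complex.continuous_ofReal
      apply intervalIntegral.integral_mono_on (by linarith)
      · exact (hPr.mul hFr).norm.intervalIntegrable _ _
      · apply Continuous.intervalIntegrable
        have := Real.continuous_rpow_const (by linarith : 0 ≤ 2 * γ)
        have := q.continuous
        fun_prop
      intro t _
      have := hFu t (by simp)
      rw [Complex.norm_real, Real.norm_eq_abs] at this
      rw [norm_mul, hPe, ← Complex.ofReal_pow, hpr, norm_mul, Complex.norm_real,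
        Complex.norm_real, Real.norm_eq_abs, Real.norm_eq_abs]
      exact mul_le_mul_of_nonneg_left this (by positivity)
  have hup : ∀ z : ℂ, 0 < z.im → ‖z‖ ^ 2 ≤ 2 →
      ‖p.eval (z ^ 2)‖ * |(z ^ 2).im| ≤ 2 * Real.exp (C * 2) * J := by
    intro z hz hz2
    have a1 := hG z hz
    have a2 := hFl z hz.le
    have a3 : ‖z‖ ^ (2 * γ) ≤ 2 := by
      rw [Real.rpow_mul (norm_nonneg _), Real.rpow_two]
      calc (‖z‖ ^ 2) ^ γ ≤ 2 ^ γ := Real.rpow_le_rpow (by positivity) hz2 h0.le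
        _ ≤ 2 ^ (1 : ℝ) := Real.rpow_le_rpow_of_exponent_le (by norm_num) (by linarith)
        _ = 2 := by simp
    have a4 : 1 ≤ Real.exp (C * 2) * ‖F z‖ := by
      calc 1 = Real.exp (C * 2) * Real.exp (-(C * 2)) := by rw [← Real.exp_add]; simp
        _ ≤ Real.exp (C * 2) * ‖F z‖ := by
          apply mul_le_mul_of_nonneg_left _ (Real.exp_nonneg _)
          refine le_trans ?_ a2
          rw [Real.exp_le_exp, neg_le_neg_iff]
          exact mul_le_mul_of_nonneg_left a3 hC.le
    have a5 : |(z ^ 2).im| ≤ 2 * ‖z‖ * z.im := by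
      have : (z ^ 2).im = 2 * z.re * z.im := by simp [pow_two]; ring
      rw [this, abs_mul, abs_mul, abs_of_pos hz, abs_two]
      have := Complex.abs_re_le_norm z
      gcongr
    rw [norm_mul, hPe, norm_mul] at a1
    set e := ‖p.eval (z ^ 2)‖
    have he : 0 ≤ e := norm_nonneg _
    calc e * |(z ^ 2).im| ≤ e * (2 * ‖z‖ * z.im) := by gcongr
      _ = 2 * (‖z‖ * e * z.im) * 1 := by ring
      _ ≤ 2 * (‖z‖ * e * z.im) * (Real.exp (C * 2) * ‖F z‖) := by gcongr
      _ = 2 * Real.exp (C * 2) * (‖z‖ * e * ‖F z‖ * z.im) := by ring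
      _ ≤ _ := by gcongr
  have hall : ∀ w : ℂ, ‖w‖ ≤ 2 → ‖p.eval w‖ * |w.im| ≤ 2 * Real.exp (C * 2) * J := by
    intro w hw
    obtain ⟨z, rfl⟩ := IsAlgClosed.exists_pow_nat_eq w (n := 2) (by norm_num)
    rw [norm_pow] at hw
    rcases lt_trichotomy z.im 0 with h | h | h
    · have := hup (-z) (by simpa using h) (by simpa using hw)
      simpa using this
    · have : (z ^ 2).im = 0 := by simp [pow_two, h]
      rw [this, abs_zero, mul_zero]; positivity
    · exact hup z h hw
  have hfin := bn_local p _ hall (x : ℂ) (by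
    rw [← Complex.ofReal_one, ← Complex.ofReal_sub, Complex.norm_real]; exact hx)
  rw [hp, Polynomial.derivative_map, Polynomial.eval_map, ← Complex.ofRealHom_eq_coe,
    Polynomial.eval₂_at_apply, Complex.ofRealHom_eq_coe, Complex.norm_real, Real.norm_eq_abs] at hfin
  linarith
end

section
/- Let μ be a probability measure on ℝ that is absolutely continuous with respect to Lebesgue measure with density w, and suppose there exist a constant C > 0 and an exponent γ ∈ (0, 1/2) such that w(x) ≥ C·exp(−|x|^γ) for almost every x ∈ (−∞, 1]. Then there exists a constant K > 0 (depending on μ) such that for every real polynomial q: sup over x ∈ [−1/4, 1/4] of |q'(x)| is at most K·∫ |q(x)| dμ(x). -/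
open MeasureTheory ProbabilityTheory

noncomputable def lslG (A β : ℝ) (q : Polynomial ℝ) (s : ℂ) : ℂ :=
  (q.aeval (1 + s ^ 2) * s) * Complex.exp (-(A * s ^ (β : ℂ)))

lemma lsl_re {β : ℝ} (hβ : 0 < β) (hβ1 : β < 1) {s : ℂ} (hs : 0 ≤ s.re) :
    ‖s‖ ^ β ≤ (Real.cos (β * (Real.pi / 2)))⁻¹ * (s ^ (β : ℂ)).re := by
  have hp := Real.pi_pos
  have hc : 0 < Real.cos (β * (Real.pi / 2)) := by
    apply Real.cos_pos_of_mem_Ioo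
    constructor <;> nlinarith
  rw [Complex.cpow_ofReal_re, le_inv_mul_iff₀ hc, mul_comm]
  apply mul_le_mul_of_nonneg_left _ (by positivity)
  have ha := Complex.abs_arg_le_pi_div_two_iff.2 hs
  rw [← Real.cos_abs (s.arg * β), abs_mul, abs_of_pos hβ]
  apply Real.cos_le_cos_of_nonneg_of_le_pi
  · positivity
  · nlinarith
  · nlinarith

lemma lslG_norm_le {β : ℝ} (hβ : 0 < β) (hβ1 : β < 1) (q : Polynomial ℝ) {s : ℂ} (hs : 0 ≤ s.re) :
    ‖lslG (Real.cos (β * (Real.pi / 2)))⁻¹ β q s‖ ≤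
      ‖q.aeval (1 + s ^ 2) * s‖ * Real.exp (-‖s‖ ^ β) := by
  unfold lslG
  rw [norm_mul, Complex.norm_exp]
  gcongr
  rw [Complex.neg_re, Complex.re_ofReal_mul]
  exact neg_le_neg (lsl_re hβ hβ1 hs)

lemma lslG_le_norm {A β : ℝ} (hA : 0 ≤ A) (hβ : 0 < β) (hβ1 : β < 1) (q : Polynomial ℝ) {s : ℂ}
    (hs : ‖s‖ ≤ 2) :
    ‖q.aeval (1 + s ^ 2) * s‖ * Real.exp (-(2 * A)) ≤ ‖lslG A β q s‖ := by
  unfold lslG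
  rw [norm_mul (_ * _), Complex.norm_exp]
  gcongr
  rw [Complex.neg_re, Complex.re_ofReal_mul, Complex.cpow_ofReal_re]
  have h1 : ‖s‖ ^ β * Real.cos (s.arg * β) ≤ ‖s‖ ^ β * 1 := by
    gcongr; exact Real.cos_le_one _
  have h2 : ‖s‖ ^ β ≤ 2 := by
    calc ‖s‖ ^ β ≤ 2 ^ β := by gcongr
      _ ≤ 2 ^ (1:ℝ) := by gcongr; norm_num
      _ = 2 := by simp
  nlinarith

lemma lsl_mono_tendsto {β : ℝ} (hβ : 0 < β) (n : ℕ) :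
    Filter.Tendsto (fun x : ℝ => x ^ n * Real.exp (-x ^ β)) Filter.atTop (nhds 0) := by
  have h := (tendsto_rpow_mul_exp_neg_mul_atTop_nhds_zero (n / β) 1 one_pos).comp
    (tendsto_rpow_atTop hβ)
  refine h.congr' ?_
  filter_upwards [Filter.eventually_ge_atTop 0] with x hx
  simp only [Function.comp]
  rw [← Real.rpow_mul hx, mul_div_cancel₀ _ hβ.ne', Real.rpow_natCast]
  simp

lemma lsl_poly_tendsto {β : ℝ} (hβ : 0 < β) (Q : Polynomial ℂ) :
    Filter.Tendsto (fun s : ℂ => ‖Q.eval s‖ * Real.exp (-‖s‖ ^ β)) (Bornology.cobounded ℂ)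
      (nhds 0) := by
  induction Q using Polynomial.induction_on' with
  | add p r hp hr =>
    have := hp.add hr
    rw [add_zero] at this
    refine squeeze_zero (fun _ => by positivity) (fun s => ?_) this
    rw [← add_mul, Polynomial.eval_add]
    gcongr
    exact norm_add_le _ _
  | monomial n a =>
    have := ((lsl_mono_tendsto hβ n).comp (tendsto_norm_cobounded_atTop (E := ℂ))).const_mul ‖a‖
    rw [mul_zero] at this
    refine this.congr fun s => ?_
    simp [mul_assoc]

lemma lslG_tendsto {β : ℝ} (hβ : 0 < β) (hβ1 : β < 1) (q : Polynomial ℝ) :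
    Filter.Tendsto (lslG (Real.cos (β * (Real.pi / 2)))⁻¹ β q)
      (Bornology.cobounded ℂ ⊓ Filter.principal {s | 0 ≤ s.re}) (nhds 0) := by
  have h := (lsl_poly_tendsto hβ
    (((q.map (algebraMap ℝ ℂ)).comp (1 + Polynomial.X ^ 2)) * Polynomial.X)).mono_left
    (inf_le_left (b := Filter.principal {s : ℂ | 0 ≤ s.re}))
  refine squeeze_zero_norm' ?_ h
  refine Filter.eventually_inf_principal.2 (Filter.Eventually.of_forall fun s hs => ?_)
  have := lslG_norm_le hβ hβ1 q hs
  simpa [Polynomial.eval_map_algebraMap] using this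

lemma lslG_cont (A : ℝ) {β : ℝ} (hβ : 0 < β) (q : Polynomial ℝ) {s : ℂ} (hs : 0 ≤ s.re) :
    ContinuousAt (lslG A β q) s := by
  unfold lslG
  have h1 : ContinuousAt (fun s : ℂ => s ^ (β : ℂ)) s := by
    by_cases h0 : s = 0
    · subst h0
      have := Complex.continuousAt_cpow_zero_of_re_pos (z := (β : ℂ)) (by simpa using hβ)
      exact ContinuousAt.comp (f := fun s : ℂ => (s, (β : ℂ))) (x := (0:ℂ)) this (by fun_prop)
    · apply continuousAt_cpow_const
      rw [Complex.mem_slitPlane_iff]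
      by_contra hh
      push Not at hh
      exact h0 (Complex.ext (le_antisymm hh.1 hs) hh.2)
  have h2 : Continuous fun s : ℂ => q.aeval (1 + s ^ 2) * s := by
    fun_prop
  exact h2.continuousAt.mul (Complex.continuous_exp.continuousAt.comp (h1.const_mul _).neg)

lemma lslG_diff (A : ℝ) {β : ℝ} (q : Polynomial ℝ) {s : ℂ} (hs : 0 < s.re) :
    DifferentiableAt ℂ (lslG A β q) s := by
  unfold lslG
  have h1 : DifferentiableAt ℂ (fun s : ℂ => s ^ (β : ℂ)) s := by
    apply DifferentiableAt.cpow_const differentiableAt_id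
    exact Or.inl hs
  have h2 : Differentiable ℂ fun s : ℂ => q.aeval (1 + s ^ 2) * s := by
    have : Differentiable ℂ fun s : ℂ => q.aeval s := q.differentiable_aeval
    exact (this.comp (f := fun s : ℂ => 1 + s ^ 2) (by fun_prop)).mul differentiable_id
  exact (h2 s).mul ((h1.const_mul _).neg.cexp)

noncomputable def lslM (z : ℂ) : ℂ := 2 * (1 - z)⁻¹ - 1

noncomputable def lslg (A β : ℝ) (q : Polynomial ℝ) : ℂ → ℂ :=
  Function.update (fun z => lslG A β q (lslM z)) 1 0

lemma lslM_re {z : ℂ} (hz : z ≠ 1) : (lslM z).re = (1 - ‖z‖ ^ 2) / ‖1 - z‖ ^ 2 := by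
  have h : (1 - z) ≠ 0 := sub_ne_zero.2 hz.symm
  have h2 : Complex.normSq (1 - z) ≠ 0 := by simpa using h
  unfold lslM
  rw [Complex.sq_norm, Complex.sq_norm]
  simp only [Complex.sub_re, Complex.mul_re, Complex.inv_re, Complex.inv_im, Complex.one_re]
  rw [eq_div_iff h2]
  field_simp
  simp [Complex.normSq_apply]
  ring

lemma lslM_tendsto : Filter.Tendsto lslM (nhdsWithin 1 {1}ᶜ) (Bornology.cobounded ℂ) := by
  have h0 : Filter.Tendsto (fun z : ℂ => 1 - z) (nhdsWithin 1 {1}ᶜ) (nhdsWithin 0 {0}ᶜ) := by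
    refine tendsto_nhdsWithin_iff.2 ⟨?_, ?_⟩
    · have : ContinuousAt (fun z : ℂ => 1 - z) 1 := by fun_prop
      have := this.tendsto
      rw [sub_self] at this
      exact this.mono_left nhdsWithin_le_nhds
    · filter_upwards [self_mem_nhdsWithin] with z hz
      exact sub_ne_zero.2 (Ne.symm hz)
  have h1 := (tendsto_norm_cobounded_atTop (E := ℂ)).comp (Filter.tendsto_inv₀_nhdsNE_zero.comp h0)
  rw [← tendsto_norm_atTop_iff_cobounded]
  refine Filter.tendsto_atTop_mono' _ ?_
    (Filter.tendsto_atTop_add_const_right _ (-1) (h1.const_mul_atTop (zero_lt_two' ℝ)))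
  refine Filter.Eventually.of_forall fun z => ?_
  have := norm_sub_norm_le (2 * (1 - z)⁻¹) (1 : ℂ)
  simp [lslM] at this ⊢
  linarith

lemma lslg_cont {β : ℝ} (hβ : 0 < β) (hβ1 : β < 1) (q : Polynomial ℝ) :
    ContinuousOn (lslg (Real.cos (β * (Real.pi / 2)))⁻¹ β q) (Metric.closedBall 0 1) := by
  intro z hz
  have hre : ∀ z ∈ Metric.closedBall (0:ℂ) 1, z ≠ 1 → 0 ≤ (lslM z).re := by
    intro z hz h1
    rw [lslM_re h1]
    have : ‖z‖ ≤ 1 := by simpa using hz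
    have : ‖z‖ ^ 2 ≤ 1 := by nlinarith [norm_nonneg z]
    apply div_nonneg <;> nlinarith [sq_nonneg ‖1 - z‖]
  by_cases h1 : z = 1
  · subst h1
    unfold lslg
    rw [continuousWithinAt_update_same]
    refine (lslG_tendsto hβ hβ1 q).comp (Filter.tendsto_inf.2 ⟨?_, ?_⟩)
    · exact lslM_tendsto.mono_left (nhdsWithin_mono _ fun x hx => hx.2)
    · refine Filter.tendsto_principal.2 ?_
      filter_upwards [self_mem_nhdsWithin] with x hx
      exact hre x hx.1 hx.2
  · apply ContinuousAt.continuousWithinAt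
    unfold lslg
    rw [continuousAt_update_of_ne h1]
    refine ContinuousAt.comp (lslG_cont _ hβ q (hre z hz h1)) ?_
    unfold lslM
    have : 1 - z ≠ 0 := sub_ne_zero.2 (Ne.symm h1)
    fun_prop (disch := assumption)

lemma lslg_diff (A β : ℝ) (q : Polynomial ℝ) {z : ℂ} (hz : z ∈ Metric.ball (0:ℂ) 1) :
    DifferentiableAt ℂ (lslg A β q) z := by
  have hz' : ‖z‖ < 1 := by simpa using hz
  have h1 : z ≠ 1 := by rintro rfl; simp at hz'
  have h2 : 1 - z ≠ 0 := sub_ne_zero.2 (Ne.symm h1)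
  have he : lslg A β q =ᶠ[nhds z] fun z => lslG A β q (lslM z) := by
    filter_upwards [isOpen_ne.mem_nhds h1] with x hx
    exact Function.update_of_ne hx _ _
  rw [he.differentiableAt_iff]
  have h3 : 0 < (lslM z).re := by
    rw [lslM_re h1]
    have : 0 < ‖1 - z‖ := by simpa using h2
    apply div_pos _ (by positivity)
    nlinarith [norm_nonneg z]
  refine DifferentiableAt.comp z (lslG_diff A q h3) ?_
  unfold lslM
  fun_prop (disch := assumption)

lemma lsl_cauchy {g : ℂ → ℂ} (hc : ContinuousOn g (Metric.closedBall 0 1))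
    (hd : ∀ z ∈ Metric.ball (0:ℂ) 1, DifferentiableAt ℂ g z) {z : ℂ} (hz : ‖z‖ < 1) :
    ENNReal.ofReal (1 - ‖z‖) * ‖g z‖ₑ ≤
      ∫⁻ θ in Set.Ioo 0 (2 * Real.pi), ‖g (circleMap 0 1 θ)‖ₑ := by
  have h := Complex.two_pi_I_inv_smul_circleIntegral_sub_inv_smul_of_differentiable_on_off_countable
    (s := ∅) Set.countable_empty (w := z) (by simpa using hz) hc (fun x hx => hd x hx.1)
  have h1 : ‖g z‖ₑ ≤ ‖∮ (w : ℂ) in C(0, 1), (w - z)⁻¹ • g w‖ₑ := by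
    rw [← h, enorm_smul]
    refine mul_le_of_le_one_left (by simp) ?_
    rw [← ofReal_norm, ENNReal.ofReal_le_one]
    have : (1:ℝ) ≤ 2 * Real.pi := by linarith [Real.pi_gt_three]
    simp only [norm_inv, norm_mul, Complex.norm_I, Complex.norm_real, Real.norm_eq_abs,
      abs_of_pos Real.pi_pos, RCLike.norm_ofNat, mul_one]
    exact inv_le_one_of_one_le₀ this
  rw [circleIntegral, intervalIntegral.integral_of_le (by positivity),
    ← restrict_Ioo_eq_restrict_Ioc] at h1
  calc _ ≤ ENNReal.ofReal (1 - ‖z‖) * ∫⁻ θ in Set.Ioo 0 (2 * Real.pi), _ :=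
        mul_le_mul_right (h1.trans (enorm_integral_le_lintegral_enorm _)) _
    _ = ∫⁻ θ in Set.Ioo 0 (2 * Real.pi), _ := (lintegral_const_mul' _ _ (by simp)).symm
    _ ≤ _ := by
      refine lintegral_mono fun θ => ?_
      rw [enorm_smul, enorm_smul, ← mul_assoc, ← mul_assoc]
      refine mul_le_of_le_one_left (by simp) ?_
      rw [← ofReal_norm, ← ofReal_norm, ← ENNReal.ofReal_mul (by linarith),
        ← ENNReal.ofReal_mul (by positivity [sub_pos.2 hz]), ENNReal.ofReal_le_one]
      have h3 : ‖circleMap 0 1 θ‖ = 1 := by simp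
      have h2 := norm_sub_norm_le (circleMap 0 1 θ) z
      rw [h3] at h2
      rw [deriv_circleMap, norm_mul, h3, Complex.norm_I, norm_inv, mul_one, mul_one,
        ← div_eq_mul_inv]
      exact div_le_one_of_le₀ h2 (by positivity)

lemma lslM_circle {θ : ℝ} (h : Real.sin (θ / 2) ≠ 0) :
    circleMap 0 1 θ ≠ 1 ∧
      lslM (circleMap 0 1 θ) = Complex.I * ((Real.cos (θ / 2) / Real.sin (θ / 2) : ℝ) : ℂ) := by
  set a := θ / 2 with ha
  have hc : circleMap 0 1 θ = (Real.cos a + Complex.I * Real.sin a : ℂ) ^ 2 := by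
    have := Complex.exp_mul_I (a : ℂ)
    rw [Complex.ofReal_cos, Complex.ofReal_sin, mul_comm Complex.I, ← this, ← Complex.exp_nat_mul,
      circleMap_zero]
    simp only [Complex.ofReal_one, one_mul]
    congr 1
    rw [ha]; push_cast; ring
  have hs : (Real.sin a : ℂ) ≠ 0 := by exact_mod_cast h
  have h1 : (Real.sin a : ℂ) ^ 2 + (Real.cos a : ℂ) ^ 2 = 1 := by
    exact_mod_cast Real.sin_sq_add_cos_sq a
  have hI := Complex.I_sq
  have hden : 1 - circleMap 0 1 θ
      = -2 * Complex.I * Real.sin a * (Real.cos a + Complex.I * Real.sin a : ℂ) := by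
    rw [hc, ← h1]
    linear_combination ((Real.sin a : ℂ) ^ 2) * hI
  have hu : (Real.cos a + Complex.I * Real.sin a : ℂ) * (Real.cos a - Complex.I * Real.sin a) = 1 := by
    rw [← h1]
    linear_combination (-(Real.sin a : ℂ) ^ 2) * hI
  have hu0 := left_ne_zero_of_mul_eq_one hu
  have hne : 1 - circleMap 0 1 θ ≠ 0 := by
    rw [hden]
    simp only [ne_eq, mul_eq_zero, not_or]
    exact ⟨⟨⟨by norm_num, Complex.I_ne_zero⟩, hs⟩, hu0⟩
  refine ⟨fun hh => hne (by rw [hh, sub_self]), ?_⟩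
  unfold lslM
  rw [sub_eq_iff_eq_add, ← div_eq_mul_inv, div_eq_iff hne, hden]
  push_cast [-Complex.ofReal_cos, -Complex.ofReal_sin]
  field_simp
  linear_combination (-1) * h1 + ((Real.cos a : ℂ) ^ 2 + Real.cos a * Complex.I * Real.sin a
    + (Real.sin a : ℂ) ^ 2) * hI

noncomputable def lslJ (γ : ℝ) (q : Polynomial ℝ) : ENNReal :=
  ∫⁻ t in Set.Iic (1:ℝ), ENNReal.ofReal (|q.eval t| * Real.exp (-(1 - t) ^ γ))

lemma lsl_cov {γ : ℝ} (hγ : 0 < γ) (hγ1 : γ < 1 / 2) (q : Polynomial ℝ) {S : Set ℝ}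
    (hS : MeasurableSet S) (hS0 : S ⊆ Set.Ioo 0 (2 * Real.pi))
    (hsgn : ∀ x ∈ S, ∀ y ∈ S, 0 ≤ Real.cos (x / 2) * Real.cos (y / 2)) :
    ∫⁻ θ in S, ‖lslg (Real.cos (2 * γ * (Real.pi / 2)))⁻¹ (2 * γ) q (circleMap 0 1 θ)‖ₑ ≤
      lslJ γ q := by
  set φ : ℝ → ℝ := fun θ => 1 - (Real.cos (θ / 2) / Real.sin (θ / 2)) ^ 2 with hφ
  set φ' : ℝ → ℝ := fun θ => (Real.cos (θ / 2) / Real.sin (θ / 2)) / Real.sin (θ / 2) ^ 2 with hφ'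
  have hsin : ∀ θ ∈ S, 0 < Real.sin (θ / 2) := fun θ hθ =>
    Real.sin_pos_of_pos_of_lt_pi (by linarith [(hS0 hθ).1]) (by linarith [(hS0 hθ).2])
  have hder : ∀ θ ∈ S, HasDerivWithinAt φ (φ' θ) S θ := by
    intro θ hθ
    have hs := (hsin θ hθ).ne'
    have h2 : HasDerivAt (fun θ : ℝ => θ / 2) (1 / 2) θ := (hasDerivAt_id θ).div_const 2
    have h3 := (((h2.cos).div (h2.sin) hs).pow 2).const_sub 1
    refine (h3.congr_deriv ?_).hasDerivWithinAt
    have h4 := Real.sin_sq_add_cos_sq (θ / 2)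
    simp only [hφ', Pi.div_apply, Nat.add_one_sub_one, pow_one, Nat.cast_ofNat]
    field_simp
    linear_combination Real.cos (θ / 2) * h4
  have hinj : Set.InjOn φ S := by
    intro x hx y hy hxy
    have hsx := hsin x hx
    have hsy := hsin y hy
    have h1 := Real.sin_sq_add_cos_sq (x / 2)
    have h2 := Real.sin_sq_add_cos_sq (y / 2)
    have h3 : Real.cos (x / 2) ^ 2 = Real.cos (y / 2) ^ 2 := by
      simp only [hφ] at hxy
      have h4 : (Real.cos (x / 2) / Real.sin (x / 2)) ^ 2
        = (Real.cos (y / 2) / Real.sin (y / 2)) ^ 2 := by linarith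
      rw [div_pow, div_pow, div_eq_div_iff (by positivity) (by positivity)] at h4
      nlinarith
    have h5 : Real.cos (x / 2) = Real.cos (y / 2) := by
      rcases sq_eq_sq_iff_eq_or_eq_neg.1 h3 with h | h
      · exact h
      · have := hsgn x hx y hy
        rw [h] at this ⊢
        have : Real.cos (y / 2) = 0 := by nlinarith
        simp [this]
    have := Real.injOn_cos (x₁ := x / 2) (x₂ := y / 2)
      ⟨by linarith [(hS0 hx).1], by linarith [(hS0 hx).2]⟩
      ⟨by linarith [(hS0 hy).1], by linarith [(hS0 hy).2]⟩ h5
    linarith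
  have hcov := lintegral_image_eq_lintegral_abs_deriv_mul hS hder hinj
    (fun t => ENNReal.ofReal (|q.eval t| * Real.exp (-(1 - t) ^ γ)))
  calc _ ≤ ∫⁻ θ in S, ENNReal.ofReal |φ' θ| *
        ENNReal.ofReal (|q.eval (φ θ)| * Real.exp (-(1 - φ θ) ^ γ)) := by
        refine setLIntegral_mono' hS fun θ hθ => ?_
        have hs := hsin θ hθ
        obtain ⟨hne, hM⟩ := lslM_circle hs.ne'
        rw [← ENNReal.ofReal_mul (abs_nonneg _), ← ofReal_norm]
        apply ENNReal.ofReal_le_ofReal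
        rw [lslg, Function.update_of_ne hne, hM]
        set c := Real.cos (θ / 2) / Real.sin (θ / 2) with hc
        refine (lslG_norm_le (by linarith) (by linarith) q (by simp)).trans ?_
        have e1 : (1 + (Complex.I * (c : ℂ)) ^ 2) = ((φ θ : ℝ) : ℂ) := by
          simp only [hφ, ← hc]
          push_cast
          linear_combination ((c : ℂ) ^ 2) * Complex.I_sq
        have e2 : ‖Complex.I * (c : ℂ)‖ = |c| := by simp
        have e3 : ‖(Polynomial.aeval ((φ θ : ℝ) : ℂ)) q‖ = |q.eval (φ θ)| := by
          have := Polynomial.aeval_algebraMap_apply ℂ (φ θ) q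
          rw [Complex.coe_algebraMap] at this
          rw [this, Complex.norm_real, Real.norm_eq_abs, Polynomial.coe_aeval_eq_eval]
        have e4 : (1 - φ θ) ^ γ = |c| ^ (2 * γ) := by
          rw [Real.rpow_mul (abs_nonneg _)]
          simp only [hφ, ← hc]
          congr 1
          simp
        have e5 : |c| ≤ |φ' θ| := by
          simp only [hφ', ← hc]
          rw [abs_div c]
          rw [abs_of_pos (show 0 < Real.sin (θ / 2) ^ 2 by positivity), le_div_iff₀ (by positivity)]
          refine mul_le_of_le_one_right (abs_nonneg _) ?_
          nlinarith [Real.sin_le_one (θ / 2)]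
        rw [e1, norm_mul, e3, e2, e4, mul_comm _ |c|, mul_assoc]
        gcongr
    _ = _ := hcov.symm
    _ ≤ _ := by
        unfold lslJ
        apply lintegral_mono_set
        rintro _ ⟨θ, -, rfl⟩
        simp only [hφ, Set.mem_Iic]
        nlinarith [sq_nonneg (Real.cos (θ / 2) / Real.sin (θ / 2))]

lemma lsl_circle {γ : ℝ} (hγ : 0 < γ) (hγ1 : γ < 1 / 2) (q : Polynomial ℝ) :
    ∫⁻ θ in Set.Ioo 0 (2 * Real.pi),
      ‖lslg (Real.cos (2 * γ * (Real.pi / 2)))⁻¹ (2 * γ) q (circleMap 0 1 θ)‖ₑ ≤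
      2 * lslJ γ q := by
  have hp := Real.pi_pos
  have h : Set.Ioo 0 (2 * Real.pi) ⊆ Set.Ioc 0 Real.pi ∪ Set.Ioo Real.pi (2 * Real.pi) := by
    intro x hx
    rcases le_or_gt x Real.pi with h | h
    · exact Or.inl ⟨hx.1, h⟩
    · exact Or.inr ⟨h, hx.2⟩
  refine (lintegral_mono_set h).trans ((lintegral_union_le _ _ _).trans ?_)
  rw [two_mul (lslJ γ q)]
  refine add_le_add (lsl_cov hγ hγ1 q measurableSet_Ioc ?_ ?_)
    (lsl_cov hγ hγ1 q measurableSet_Ioo ?_ ?_)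
  · intro x hx
    exact ⟨hx.1, by linarith [hx.2]⟩
  · have : ∀ x ∈ Set.Ioc 0 Real.pi, 0 ≤ Real.cos (x / 2) := fun x hx =>
      Real.cos_nonneg_of_mem_Icc ⟨by linarith [hx.1], by linarith [hx.2]⟩
    exact fun x hx y hy => mul_nonneg (this x hx) (this y hy)
  · intro x hx
    exact ⟨by linarith [hx.1], hx.2⟩
  · have : ∀ x ∈ Set.Ioo Real.pi (2 * Real.pi), Real.cos (x / 2) ≤ 0 := fun x hx =>
      Real.cos_nonpos_of_pi_div_two_le_of_le (by linarith [hx.1]) (by linarith [hx.2])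
    exact fun x hx y hy => mul_nonneg_of_nonpos_of_nonpos (this x hx) (this y hy)

lemma lsl_point {γ : ℝ} (hγ : 0 < γ) (hγ1 : γ < 1 / 2) (q : Polynomial ℝ)
    (hJ : lslJ γ q ≠ ⊤) {z : ℂ} (hz : ‖z‖ ≤ 1 / 2) :
    ‖q.aeval z‖ * |z.im| ≤
      72 * Real.exp (2 * (Real.cos (2 * γ * (Real.pi / 2)))⁻¹) * (lslJ γ q).toReal := by
  by_cases him : z.im = 0
  · rw [him]; simp; positivity
  obtain ⟨s, hs2, hsre⟩ : ∃ s : ℂ, s ^ 2 = z - 1 ∧ 0 < s.re := by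
    obtain ⟨s, hs⟩ := IsAlgClosed.exists_pow_nat_eq (z - 1) (n := 2) (by norm_num)
    have h0 : s.re ≠ 0 := by
      intro h
      have := congrArg Complex.im hs
      rw [pow_two, Complex.mul_im, h] at this
      simp at this
      exact him this.symm
    rcases lt_or_gt_of_ne h0 with h | h
    · exact ⟨-s, by rw [neg_sq, hs], by simpa using h⟩
    · exact ⟨s, hs, h⟩
  have hz1 : 1 + s ^ 2 = z := by rw [hs2]; ring
  have hn : ‖s‖ ^ 2 = ‖z - 1‖ := by rw [← norm_pow, hs2]
  have hn1 : ‖s‖ ^ 2 ≤ 3 / 2 := by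
    rw [hn]; have := norm_sub_le z 1; simp at this; linarith
  have hn2 : 1 / 2 ≤ ‖s‖ ^ 2 := by
    rw [hn, norm_sub_rev]; have := norm_sub_norm_le 1 z; simp at this; linarith
  have hsn := norm_nonneg s
  have hs_le : ‖s‖ ≤ 2 := by nlinarith
  have hs_ge : 1 / 2 ≤ ‖s‖ := by nlinarith
  have him2 : |z.im| ≤ 4 * s.re := by
    have h := congrArg Complex.im hz1
    rw [pow_two] at h
    simp at h
    have h2 := (Complex.abs_im_le_norm s).trans hs_le
    rw [← h, show s.re * s.im + s.im * s.re = 2 * s.re * s.im by ring, abs_mul, abs_of_pos (by linarith)]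
    nlinarith
  have hs1 : s + 1 ≠ 0 := by
    intro h
    have := congrArg Complex.re h
    simp at this; linarith
  have hζ1 : (s - 1) / (s + 1) ≠ 1 := by
    rw [ne_eq, div_eq_one_iff_eq hs1]
    intro h
    have := congrArg Complex.re h
    simp at this; linarith
  have h1ζ : 1 - (s - 1) / (s + 1) = 2 / (s + 1) := by field_simp; ring
  have hM : lslM ((s - 1) / (s + 1)) = s := by
    unfold lslM
    rw [h1ζ]; field_simp; ring
  set ζ := (s - 1) / (s + 1) with hζ
  have hre := lslM_re hζ1
  have hs1n : ‖s + 1‖ ≤ 3 := (norm_add_le _ _).trans (by simp; linarith)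
  have hs1p : 0 < ‖s + 1‖ := norm_pos_iff.2 hs1
  have h49 : 4 / 9 ≤ (‖(2:ℂ)‖ / ‖s + 1‖) ^ 2 := by
    rw [div_pow, div_le_div_iff₀ (by norm_num) (by positivity)]
    simp
    nlinarith
  have hζn := norm_nonneg ζ
  rw [hM, h1ζ, norm_div 2, eq_div_iff (by linarith)] at hre
  have hd : s.re * (4 / 9) ≤ 1 - ‖ζ‖ ^ 2 := by
    rw [← hre]; gcongr
  have hζlt : ‖ζ‖ < 1 := by nlinarith
  have hd2 : s.re * (2 / 9) ≤ 1 - ‖ζ‖ := by nlinarith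
  set A := (Real.cos (2 * γ * (Real.pi / 2)))⁻¹ with hA
  have hA0 : 0 ≤ A := by
    rw [hA]
    have := Real.pi_pos
    refine inv_nonneg.2 (Real.cos_nonneg_of_mem_Icc ⟨by nlinarith, by nlinarith⟩)
  have hmain := (lsl_cauchy (lslg_cont (by linarith) (by linarith) q)
    (fun z hz => lslg_diff A (2 * γ) q hz) hζlt).trans (lsl_circle hγ hγ1 q)
  rw [← ofReal_norm, ← ENNReal.ofReal_mul (by linarith), ← ENNReal.ofReal_toReal hJ,
    show (2 : ENNReal) = ENNReal.ofReal 2 by simp, ← ENNReal.ofReal_mul (by norm_num),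
    ENNReal.ofReal_le_ofReal_iff (by positivity), lslg, Function.update_of_ne hζ1, hM] at hmain
  have hlow := lslG_le_norm hA0 (β := 2 * γ) (by linarith) (by linarith) q hs_le
  rw [hz1, norm_mul] at hlow
  have hq := norm_nonneg (q.aeval z)
  set Q := ‖q.aeval z‖
  set J := (lslJ γ q).toReal
  have hE := Real.exp_pos (-(2 * A))
  have hE2 : Real.exp (2 * A) * Real.exp (-(2 * A)) = 1 := by rw [← Real.exp_add]; simp
  have h5 : (|z.im| / 18) * (Q * (1 / 2) * Real.exp (-(2 * A))) ≤ 2 * J := by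
    refine le_trans ?_ hmain
    refine mul_le_mul (by linarith) (le_trans ?_ hlow) (by positivity) (by linarith)
    gcongr
  have h6 := mul_le_mul_of_nonneg_left h5 (Real.exp_pos (2 * A)).le
  have h7 : Real.exp (2 * A) * (|z.im| / 18 * (Q * (1 / 2) * Real.exp (-(2 * A)))) = Q * |z.im| / 36 := by
    linear_combination (Q * |z.im| / 36) * hE2
  rw [h7] at h6
  linarith

lemma lsl_deriv {γ : ℝ} (hγ : 0 < γ) (hγ1 : γ < 1 / 2) (q : Polynomial ℝ)
    (hJ : lslJ γ q ≠ ⊤) {x : ℝ} (hx : x ∈ Set.Icc (-(1 / 4) : ℝ) (1 / 4)) :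
    |q.derivative.eval x| ≤
      32 * (72 * Real.exp (2 * (Real.cos (2 * γ * (Real.pi / 2)))⁻¹)) * (lslJ γ q).toReal := by
  set B := 72 * Real.exp (2 * (Real.cos (2 * γ * (Real.pi / 2)))⁻¹) * (lslJ γ q).toReal with hB
  set h : ℂ → ℂ := fun z => q.aeval z * ((z - x) ^ 2 - (1 / 4) ^ 2) with hh
  have hd : ∀ z, HasDerivAt h (q.derivative.aeval z * ((z - x) ^ 2 - (1 / 4) ^ 2)
      + q.aeval z * (2 * (z - x))) z := by
    intro z
    have h1 := q.hasDerivAt_aeval z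
    have h2 := (((hasDerivAt_id z).sub_const (x : ℂ)).pow 2).sub_const ((1 / 4 : ℂ) ^ 2)
    refine (h1.mul h2).congr_deriv ?_
    simp
  have hdiff : Differentiable ℂ h := fun z => (hd z).differentiableAt
  have hb := Complex.norm_deriv_le_of_forall_mem_sphere_norm_le (c := (x : ℂ)) (R := 1 / 4)
    (C := B / 2) (f := h) (by norm_num) hdiff.diffContOnCl (by
      intro z hz
      have hz' : ‖z - x‖ = 1 / 4 := by simpa [dist_eq_norm] using hz
      have hzn : ‖z‖ ≤ 1 / 2 := by
        have := norm_add_le (z - x) x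
        rw [sub_add_cancel, hz', Complex.norm_real, Real.norm_eq_abs] at this
        have := abs_le.2 hx
        linarith
      have hp := lsl_point hγ hγ1 q hJ hzn
      rw [← hB] at hp
      have hsq : (z.re - x) ^ 2 + z.im ^ 2 = (1 / 4) ^ 2 := by
        rw [← hz', Complex.sq_norm, Complex.normSq_apply]
        simp; ring
      have e : ‖(z - x) ^ 2 - (1 / 4) ^ 2‖ = |z.im| / 2 := by
        have e0 : (z - x) ^ 2 - (1 / 4) ^ 2 = 2 * Complex.I * z.im * (z - x) := by
          have hsq' : ((z.re : ℂ) - x) ^ 2 + (z.im : ℂ) ^ 2 = (1 / 4) ^ 2 := by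
            have := congrArg (fun t : ℝ => (t : ℂ)) hsq
            push_cast at this
            exact this
          rw [← hsq']
          linear_combination (-(z - x - z.im * Complex.I + z.re - x)) * Complex.re_add_im z
            - (z.im : ℂ) ^ 2 * Complex.I_sq
        rw [e0, norm_mul, norm_mul, norm_mul, hz', Complex.norm_I, Complex.norm_real,
          Real.norm_eq_abs]
        simp; ring
      rw [hh]
      simp only
      rw [norm_mul, e]
      linarith)
  rw [(hd x).deriv] at hb
  have e1 : ‖(Polynomial.aeval (x : ℂ)) q.derivative‖ = |q.derivative.eval x| := by
    have := Polynomial.aeval_algebraMap_apply ℂ x q.derivative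
    rw [Complex.coe_algebraMap] at this
    rw [this, Complex.norm_real, Real.norm_eq_abs, Polynomial.coe_aeval_eq_eval]
  simp only [sub_self, mul_zero, add_zero, norm_mul, e1] at hb
  norm_num at hb
  linarith

theorem one_sided_LSL_derivative_bound
    (μ : Measure ℝ) [IsProbabilityMeasure μ] (w : ℝ → ℝ)
    (hμ : μ = volume.withDensity fun x => ENNReal.ofReal (w x))
    (C γ : ℝ) (hC : 0 < C) (hγ : γ ∈ Set.Ioo (0 : ℝ) (1 / 2))
    (hw : ∀ᵐ x ∂volume, x ≤ 1 → C * Real.exp (-(|x| ^ γ)) ≤ w x) :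
    ∃ K > 0, ∀ q : Polynomial ℝ, ∀ x ∈ Set.Icc (-(1 / 4) : ℝ) (1 / 4),
      ENNReal.ofReal |q.derivative.eval x| ≤
        ENNReal.ofReal K * ∫⁻ y, ENNReal.ofReal |q.eval y| ∂μ := by
  obtain ⟨hγ0, hγ1⟩ := hγ
  set D := C * Real.exp (-1) with hD
  have hD0 : 0 < D := by positivity
  set v : ℝ → ENNReal := (Set.Iic (1:ℝ)).indicator
    (fun t => ENNReal.ofReal (D * Real.exp (-(1 - t) ^ γ))) with hv
  have hvm : Measurable v := by
    apply Measurable.indicator _ measurableSet_Iic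
    fun_prop
  have hle : volume.withDensity v ≤ μ := by
    rw [hμ]
    apply withDensity_mono
    filter_upwards [hw] with t ht
    by_cases h1 : t ≤ 1
    · rw [hv, Set.indicator_of_mem (by exact h1)]
      apply ENNReal.ofReal_le_ofReal
      refine le_trans ?_ (ht h1)
      rw [hD, mul_assoc, ← Real.exp_add]
      gcongr
      have h2 : |t| ^ γ ≤ ((1 - t) + 1) ^ γ := by
        gcongr
        rw [abs_le]; constructor <;> linarith
      have h3 := Real.rpow_add_le_add_rpow (a := 1 - t) (b := 1) (by linarith) zero_le_one hγ0.le
        (by linarith)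
      rw [Real.one_rpow] at h3
      linarith
    · rw [hv, Set.indicator_of_notMem (by exact h1)]
      exact zero_le
  have hJ : ∀ q : Polynomial ℝ, lslJ γ q ≤ ENNReal.ofReal D⁻¹ * ∫⁻ y, ENNReal.ofReal |q.eval y| ∂μ := by
    intro q
    have hqm : Measurable fun y => ENNReal.ofReal |q.eval y| := by
      have : Continuous fun y => q.eval y := q.continuous
      fun_prop
    refine le_trans ?_ (mul_le_mul_right (lintegral_mono' hle le_rfl) _)
    rw [lintegral_withDensity_eq_lintegral_mul _ hvm hqm, ← lintegral_const_mul' _ _ (by simp),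
      lslJ, ← lintegral_indicator measurableSet_Iic]
    refine lintegral_mono fun t => ?_
    simp only [Pi.mul_apply, hv]
    by_cases h1 : t ∈ Set.Iic (1:ℝ)
    · rw [Set.indicator_of_mem h1, Set.indicator_of_mem h1, ← ENNReal.ofReal_mul (by positivity),
        ← ENNReal.ofReal_mul (by positivity)]
      apply ENNReal.ofReal_le_ofReal
      apply le_of_eq
      field_simp
    · rw [Set.indicator_of_notMem h1]
      exact zero_le
  set E := 32 * (72 * Real.exp (2 * (Real.cos (2 * γ * (Real.pi / 2)))⁻¹)) with hE
  refine ⟨E * D⁻¹, by positivity, fun q x hx => ?_⟩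
  have hE0 : 0 < E := by positivity
  rw [ENNReal.ofReal_mul hE0.le, mul_assoc]
  refine le_trans ?_ (mul_le_mul_right (hJ q) _)
  by_cases hfin : lslJ γ q = ⊤
  · rw [hfin, ENNReal.mul_top (by simpa using hE0)]
    exact le_top
  · rw [← ENNReal.ofReal_toReal hfin, ← ENNReal.ofReal_mul hE0.le]
    exact ENNReal.ofReal_le_ofReal (lsl_deriv hγ0 hγ1 q hfin hx)
end

section
/- Let p be the real polynomial p(x) = −x(x−1)(x−2)(x−3)(x−4)(x−5). Then: (i) p is squarefree; (ii) the set {x ∈ ℝ : p(x) ≥ 0} is compact; and (iii) there exist a constant C > 0 and an exponent γ ∈ (0, 1/2) such that for every Borel set A ⊆ (−∞, 1], the pushforward measure of the standard Gaussian N(0,1) under the evaluation map x ↦ p(x) satisfies (p_# N(0,1))(A) ≥ C·∫_A exp(−|y|^γ) dy. -/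
open MeasureTheory ProbabilityTheory Polynomial

noncomputable def ff (x : ℝ) : ℝ := -(x * (x - 1) * (x - 2) * (x - 3) * (x - 4) * (x - 5))
noncomputable def ff' (x : ℝ) : ℝ :=
  120 - 548 * x + 675 * x ^ 2 - 340 * x ^ 3 + 75 * x ^ 4 - 6 * x ^ 5

lemma ff_expand (x : ℝ) : ff x =
    120 * x - 274 * x ^ 2 + 225 * x ^ 3 - 85 * x ^ 4 + 15 * x ^ 5 - x ^ 6 := by
  unfold ff; ring

lemma ff_cont : Continuous ff := by unfold ff; fun_prop

lemma ff_deriv (x : ℝ) : HasDerivAt ff (ff' x) x := by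
  have h : ff = (fun x : ℝ => (120 * X - 274 * X ^ 2 + 225 * X ^ 3 - 85 * X ^ 4 + 15 * X ^ 5
      - X ^ 6 : Polynomial ℝ).eval x) := by
    funext x; rw [ff_expand]; simp
  rw [h]
  refine (Polynomial.hasDerivAt _ x).congr_deriv ?_
  simp [ff']
  ring

lemma ff'_pos {x : ℝ} (hx : x ≤ 1 / 10) : 0 < ff' x := by
  unfold ff'
  rcases le_total x 0 with h | h
  · have h3 : x ^ 3 ≤ 0 := by
      have : x ^ 3 = x * x ^ 2 := by ring
      rw [this]; exact mul_nonpos_of_nonpos_of_nonneg h (sq_nonneg x)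
    have h5 : x ^ 5 ≤ 0 := by
      have : x ^ 5 = x * (x ^ 2) ^ 2 := by ring
      rw [this]; exact mul_nonpos_of_nonpos_of_nonneg h (sq_nonneg _)
    have h2 : 0 ≤ x ^ 2 := sq_nonneg x
    have h4 : 0 ≤ x ^ 4 := by positivity
    linarith
  · have h3 : x ^ 3 ≤ x ^ 2 := pow_le_pow_of_le_one h (by linarith) (by norm_num)
    have h5 : x ^ 5 ≤ x ^ 4 := pow_le_pow_of_le_one h (by linarith) (by norm_num)
    have h2 : 0 ≤ x ^ 2 := sq_nonneg x
    have h4 : 0 ≤ x ^ 4 := by positivity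
    linarith

lemma ff_inj : Set.InjOn ff (Set.Iic (1 / 10)) := by
  apply StrictMonoOn.injOn
  apply strictMonoOn_of_deriv_pos (convex_Iic _) ff_cont.continuousOn
  intro x hx
  rw [(ff_deriv x).deriv]
  have hx' : x ∈ Set.Iic (1 / 10 : ℝ) := interior_subset hx
  exact ff'_pos hx'

lemma ff_neg {t : ℝ} (ht : 0 ≤ t) : ff (-t) ≤ -t ^ 6 ∧ ff (-t) ≤ -t := by
  rw [ff_expand]
  have h2 : 0 ≤ t ^ 2 := by positivity
  have h3 : 0 ≤ t ^ 3 := by positivity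
  have h4 : 0 ≤ t ^ 4 := by positivity
  have h5 : 0 ≤ t ^ 5 := by positivity
  have h6 : 0 ≤ t ^ 6 := by positivity
  constructor <;> ring_nf <;> linarith

lemma ff_surj {y : ℝ} (hy : y ≤ 1) : ∃ x ≤ 1 / 10, ff x = y := by
  have h := intermediate_value_Icc (f := ff) (a := -|y|) (b := 1 / 10)
    (by have := abs_nonneg y; linarith) ff_cont.continuousOn
  have hy' : y ∈ Set.Icc (ff (-|y|)) (ff (1 / 10)) := by
    constructor
    · exact (ff_neg (abs_nonneg y)).2.trans (neg_abs_le y)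
    · refine hy.trans ?_
      unfold ff; norm_num
  obtain ⟨x, hx, hxy⟩ := h hy'
  exact ⟨x, hx.2, hxy⟩

lemma ff'_bound (x : ℝ) : |ff' x| ≤ 14400 * Real.exp (1 + |x|) := by
  have h := Real.pow_div_factorial_le_exp (1 + |x|) (by positivity) 5
  have h1 : |ff' x| ≤ 120 * (1 + |x|) ^ 5 := by
    set t := |x| with htd
    have ht : 0 ≤ t := abs_nonneg x
    have h2 : 0 ≤ t ^ 2 := by positivity
    have h3 : 0 ≤ t ^ 3 := by positivity
    have h4 : 0 ≤ t ^ 4 := by positivity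
    have h5 : 0 ≤ t ^ 5 := by positivity
    have a1 := abs_le.1 (le_refl |x|)
    have a2 := abs_le.1 (abs_pow x 2).le
    have a3 := abs_le.1 (abs_pow x 3).le
    have a4 := abs_le.1 (abs_pow x 4).le
    have a5 := abs_le.1 (abs_pow x 5).le
    rw [← htd] at a1 a2 a3 a4 a5
    unfold ff'
    rw [abs_le]
    constructor <;> ring_nf <;> linarith [a1.1, a1.2, a2.1, a2.2, a3.1, a3.2, a4.1, a4.2, a5.1, a5.2]
  have : ((Nat.factorial 5 : ℕ) : ℝ) = 120 := by norm_num [Nat.factorial]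
  rw [this, div_le_iff₀ (by norm_num)] at h
  linarith

lemma ff_rpow {x : ℝ} (hx : x ≤ 1 / 10) :
    x ^ 2 / 2 + |x| - 1 ≤ |ff x| ^ (5 / 12 : ℝ) := by
  rcases le_total x 0 with h | h
  · obtain ⟨t, rfl⟩ : ∃ t, x = -t := ⟨-x, by ring⟩
    have ht : 0 ≤ t := by linarith
    obtain ⟨s, hs, rfl⟩ : ∃ s : ℝ, 0 ≤ s ∧ t = s ^ 2 :=
      ⟨√t, Real.sqrt_nonneg t, (Real.sq_sqrt ht).symm⟩
    have h1 : s ^ 12 ≤ |ff (-s ^ 2)| := by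
      have := (ff_neg ht).1
      calc s ^ 12 = (s ^ 2) ^ 6 := by ring
        _ ≤ - ff (-s ^ 2) := by linarith
        _ ≤ _ := neg_le_abs _
    have h2 : s ^ 5 ≤ |ff (-s ^ 2)| ^ (5 / 12 : ℝ) := by
      calc s ^ 5 = (s ^ 12) ^ (5 / 12 : ℝ) := by
            rw [← Real.rpow_natCast s 12, ← Real.rpow_mul hs, ← Real.rpow_natCast s 5]
            norm_num
        _ ≤ _ := Real.rpow_le_rpow (by positivity) h1 (by norm_num)
    refine le_trans ?_ h2
    rw [abs_neg, abs_of_nonneg ht]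
    have e : s ^ 5 - ((-s ^ 2) ^ 2 / 2 + s ^ 2 - 1) = s ^ 5 - s ^ 4 / 2 - s ^ 2 + 1 := by ring
    have : 0 ≤ s ^ 5 - s ^ 4 / 2 - s ^ 2 + 1 := by
      nlinarith [mul_nonneg hs (sq_nonneg (s ^ 2 - s)), mul_nonneg hs (sq_nonneg (s - 1)),
        mul_nonneg hs (sq_nonneg (s ^ 2 - 1)), sq_nonneg (s ^ 2 - 1), sq_nonneg (s - 1),
        sq_nonneg (s ^ 2 - s), mul_nonneg hs (sq_nonneg (s ^ 2 - 3 / 4)), pow_nonneg hs 3]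
    linarith
  · have : 0 ≤ |ff x| ^ (5 / 12 : ℝ) := by positivity
    rw [abs_of_nonneg h]
    nlinarith

lemma squarefree_part :
    Squarefree (-(X * (X - C 1) * (X - C 2) * (X - C 3) * (X - C 4) * (X - C 5)) :
        Polynomial ℝ) := by
  have h : (∏ i ∈ Finset.range 6, (X - C ((i : ℕ) : ℝ))).Separable := by
    rw [separable_prod_X_sub_C_iff']
    intro a _ b _ hab
    exact_mod_cast hab
  refine h.squarefree.squarefree_of_dvd ?_
  rw [neg_dvd]
  apply dvd_of_eq
  have h2 : (C (2 : ℝ)) = 2 := map_ofNat C 2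
  have h3 : (C (3 : ℝ)) = 3 := map_ofNat C 3
  have h4 : (C (4 : ℝ)) = 4 := map_ofNat C 4
  have h5 : (C (5 : ℝ)) = 5 := map_ofNat C 5
  simp [Finset.prod_range_succ, h2, h3, h4, h5]

lemma eval_part (x : ℝ) :
    (-(X * (X - C 1) * (X - C 2) * (X - C 3) * (X - C 4) * (X - C 5)) :
        Polynomial ℝ).eval x = ff x := by
  simp [ff]

lemma compact_part : IsCompact {x : ℝ | 0 ≤ ff x} := by
  refine (isCompact_Icc (a := (0 : ℝ)) (b := 5)).of_isClosed_subset
    (isClosed_le continuous_const ff_cont) ?_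
  intro x hx
  simp only [Set.mem_ofPred_eq] at hx
  constructor
  · by_contra! h
    have := (ff_neg (t := -x) (by linarith)).2
    rw [neg_neg] at this
    linarith
  · by_contra! h
    have : 0 < x * (x - 1) * (x - 2) * (x - 3) * (x - 4) * (x - 5) := by
      have h0 : 0 < x := by linarith
      have h1 : 0 < x - 1 := by linarith
      have h2 : 0 < x - 2 := by linarith
      have h3 : 0 < x - 3 := by linarith
      have h4 : 0 < x - 4 := by linarith
      have h5 : 0 < x - 5 := by linarith
      positivity
    unfold ff at hx
    linarith

lemma pointwise {x : ℝ} (hx : x ≤ 1 / 10) :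
    (14400 * Real.exp 2 * √(2 * Real.pi))⁻¹ *
      (|ff' x| * Real.exp (-(|ff x| ^ (5 / 12 : ℝ)))) ≤ gaussianPDFReal 0 1 x := by
  have h1 := ff'_bound x
  have h2 := ff_rpow hx
  have h3 : |ff' x| * Real.exp (-(|ff x| ^ (5 / 12 : ℝ))) ≤
      14400 * Real.exp 2 * Real.exp (-(x ^ 2 / 2)) := by
    calc _ ≤ (14400 * Real.exp (1 + |x|)) * Real.exp (-(x ^ 2 / 2 + |x| - 1)) := by
          gcongr
      _ = _ := by
          rw [mul_assoc, mul_assoc, ← Real.exp_add, ← Real.exp_add]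
          congr 2; ring
  have hpi : 0 < √(2 * Real.pi) := by positivity
  rw [inv_mul_le_iff₀ (by positivity)]
  refine h3.trans (le_of_eq ?_)
  simp [gaussianPDFReal]
  field_simp

lemma main_part (A : Set ℝ) (hA : MeasurableSet A) (hA1 : A ⊆ Set.Iic 1) :
    ENNReal.ofReal ((14400 * Real.exp 2 * √(2 * Real.pi))⁻¹) *
      ∫⁻ y in A, ENNReal.ofReal (Real.exp (-(|y| ^ (5 / 12 : ℝ)))) ≤
      Measure.map ff (gaussianReal 0 1) A := by
  rw [Measure.map_apply ff_cont.measurable hA]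
  set S := Set.Iic (1 / 10 : ℝ) ∩ ff ⁻¹' A with hS
  have hSm : MeasurableSet S := measurableSet_Iic.inter (ff_cont.measurable hA)
  have himg : ff '' S = A := by
    ext y
    constructor
    · rintro ⟨x, hx, rfl⟩; exact hx.2
    · intro hy
      obtain ⟨x, hx, rfl⟩ := ff_surj (hA1 hy)
      exact ⟨x, ⟨hx, hy⟩, rfl⟩
  calc _ = ENNReal.ofReal ((14400 * Real.exp 2 * √(2 * Real.pi))⁻¹) *
      ∫⁻ x in S, ENNReal.ofReal |ff' x| *
        ENNReal.ofReal (Real.exp (-(|ff x| ^ (5 / 12 : ℝ)))) := by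
        rw [← lintegral_image_eq_lintegral_abs_deriv_mul hSm
          (fun x _ => (ff_deriv x).hasDerivWithinAt) (ff_inj.mono Set.inter_subset_left)
          (fun y => ENNReal.ofReal (Real.exp (-(|y| ^ (5 / 12 : ℝ))))), himg]
    _ = ∫⁻ x in S, ENNReal.ofReal ((14400 * Real.exp 2 * √(2 * Real.pi))⁻¹) *
        (ENNReal.ofReal |ff' x| *
        ENNReal.ofReal (Real.exp (-(|ff x| ^ (5 / 12 : ℝ))))) := by
        rw [lintegral_const_mul' _ _ ENNReal.ofReal_ne_top]
    _ ≤ ∫⁻ x in S, gaussianPDF 0 1 x := by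
        apply setLIntegral_mono' hSm
        intro x hx
        rw [← ENNReal.ofReal_mul (abs_nonneg _), ← ENNReal.ofReal_mul (by positivity)]
        exact ENNReal.ofReal_le_ofReal (pointwise hx.1)
    _ = gaussianReal 0 1 S := (gaussianReal_apply 0 one_ne_zero S).symm
    _ ≤ _ := measure_mono Set.inter_subset_right

theorem degree_six_polynomial_one_sided_LSL :
    Squarefree (-(X * (X - C 1) * (X - C 2) * (X - C 3) * (X - C 4) * (X - C 5)) :
        Polynomial ℝ) ∧
    IsCompact {x : ℝ |
      0 ≤ (-(X * (X - C 1) * (X - C 2) * (X - C 3) * (X - C 4) * (X - C 5)) :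
        Polynomial ℝ).eval x} ∧
    ∃ c > (0 : ℝ), ∃ γ ∈ Set.Ioo (0 : ℝ) (1 / 2), ∀ A : Set ℝ,
      MeasurableSet A → A ⊆ Set.Iic 1 →
        ENNReal.ofReal c * ∫⁻ y in A, ENNReal.ofReal (Real.exp (-(|y| ^ γ))) ≤
          Measure.map
            (fun x => (-(X * (X - C 1) * (X - C 2) * (X - C 3) * (X - C 4) * (X - C 5)) :
              Polynomial ℝ).eval x)
            (gaussianReal 0 1) A := by
  refine ⟨squarefree_part, ?_, ?_⟩
  · simp only [eval_part]
    exact compact_part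
  · have hpi : 0 < √(2 * Real.pi) := by positivity
    refine ⟨(14400 * Real.exp 2 * √(2 * Real.pi))⁻¹, by positivity, 5 / 12,
      ⟨by norm_num, by norm_num⟩, ?_⟩
    simp only [eval_part]
    exact main_part
end

section
/- Let μ be a probability measure on ℝ^n that approximately matches the moments of the standard Gaussian up to degree k with slack η. Let P be a polynomial in n real variables of total degree at most d whose sum of absolute values of coefficients is at most n^{d/2}, and let ℓ be a positive integer with d·ℓ ≤ k. Then ∫ P(x)^ℓ dμ(x) ≤ ∫ P(y)^ℓ dγₙ(y) + η·n^{dℓ/2}. -/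
open MeasureTheory ProbabilityTheory

/-- The standard Gaussian measure on `ι → ℝ` (product of `N(0,1)`). -/
noncomputable def stdGaussianPi (ι : Type) [Fintype ι] : Measure (ι → ℝ) :=
  Measure.pi fun _ => gaussianReal 0 1

/-- `μ` approximately matches the moments of the standard Gaussian up to degree `k`
with slack `η`. -/
def MomentMatches {ι : Type} [Fintype ι] (k : ℕ) (η : ℝ)
    (μ : Measure (ι → ℝ)) : Prop :=
  ∀ α : ι → ℕ, (∑ i, α i) ≤ k →
    Integrable (fun x => ∏ i, |x i| ^ α i) μ ∧
    |(∫ x, ∏ i, (x i) ^ α i ∂μ) - ∫ y, ∏ i, (y i) ^ α i ∂(stdGaussianPi ι)| ≤ η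

lemma integrable_mono_gauss {n : ℕ} (α : Fin n → ℕ) :
    Integrable (fun y : Fin n → ℝ => ∏ i, (y i) ^ α i) (stdGaussianPi (Fin n)) := by
  unfold stdGaussianPi
  refine Integrable.fintype_prod (f := fun i (t : ℝ) => t ^ α i) (fun i => ?_)
  have h := (memLp_id_gaussianReal (μ := 0) (v := 1) (α i : NNReal)).integrable_norm_pow'
  refine (integrable_norm_iff (by fun_prop)).1 ?_
  simpa [norm_pow] using h

lemma eval_pow_expand {n : ℕ} (P : MvPolynomial (Fin n) ℝ) (ℓ : ℕ) (x : Fin n → ℝ) :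
    (MvPolynomial.eval x P) ^ ℓ =
      ∑ p ∈ Fintype.piFinset (fun _ : Fin ℓ => P.support),
        (∏ i, P.coeff (p i)) * ∏ j, x j ^ (∑ i, p i j) := by
  rw [MvPolynomial.eval_eq']
  have h := Finset.prod_univ_sum (fun _ : Fin ℓ => P.support)
    (fun _ m => P.coeff m * ∏ j, x j ^ m j)
  rw [Finset.prod_const, Finset.card_univ, Fintype.card_fin] at h
  rw [h]
  refine Finset.sum_congr rfl fun p _ => ?_
  rw [Finset.prod_mul_distrib, Finset.prod_comm]
  simp_rw [Finset.prod_pow_eq_pow_sum]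

theorem moment_bound_of_momentMatches (n k d ℓ : ℕ) (hℓ : 1 ≤ ℓ) (hdl : d * ℓ ≤ k)
    (η : ℝ) (μ : Measure (Fin n → ℝ)) [IsProbabilityMeasure μ]
    (hμ : MomentMatches k η μ)
    (P : MvPolynomial (Fin n) ℝ) (hdeg : P.totalDegree ≤ d)
    (hcoeff : ∑ m ∈ P.support, |P.coeff m| ≤ (n : ℝ) ^ ((d : ℝ) / 2)) :
    (∫ x, (MvPolynomial.eval x P) ^ ℓ ∂μ) ≤
      (∫ y, (MvPolynomial.eval y P) ^ ℓ ∂(stdGaussianPi (Fin n))) +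
        η * (n : ℝ) ^ (((d * ℓ : ℕ) : ℝ) / 2) := by
  have hη : 0 ≤ η := (abs_nonneg _).trans (hμ 0 (by simp)).2
  have hd : ∀ p ∈ Fintype.piFinset (fun _ : Fin ℓ => P.support),
      ∑ j, (∑ i, p i j) ≤ k := by
    intro p hp
    rw [Fintype.mem_piFinset] at hp
    rw [Finset.sum_comm]
    have h1 : ∀ i ∈ (Finset.univ : Finset (Fin ℓ)), ∑ j, p i j ≤ d := by
      intro i _
      have h2 := (MvPolynomial.le_totalDegree (hp i)).trans hdeg
      rwa [Finsupp.sum_fintype _ _ (fun _ => rfl)] at h2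
    have h3 := Finset.sum_le_card_nsmul _ _ _ h1
    rw [Finset.card_univ, Fintype.card_fin, smul_eq_mul, mul_comm] at h3
    exact h3.trans hdl
  have hi : ∀ p ∈ Fintype.piFinset (fun _ : Fin ℓ => P.support),
      Integrable (fun x : Fin n → ℝ => (∏ i, P.coeff (p i)) * ∏ j, x j ^ (∑ i, p i j)) μ := by
    intro p hp
    refine Integrable.const_mul ?_ _
    refine (integrable_norm_iff (Continuous.aestronglyMeasurable
      (continuous_finset_prod _ fun j _ => (continuous_apply j).pow _))).1 ?_
    simpa [norm_prod, norm_pow] using (hμ (fun j => ∑ i, p i j) (hd p hp)).1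
  simp_rw [eval_pow_expand]
  rw [integral_finsetSum _ hi,
    integral_finsetSum _ (fun p _ => (integrable_mono_gauss _).const_mul _)]
  simp_rw [integral_const_mul]
  rw [← sub_le_iff_le_add', ← Finset.sum_sub_distrib]
  have hN : (∑ m ∈ P.support, |P.coeff m|) ^ ℓ ≤ (n : ℝ) ^ (((d * ℓ : ℕ) : ℝ) / 2) := by
    have h := pow_le_pow_left₀ (Finset.sum_nonneg fun m _ => abs_nonneg (P.coeff m)) hcoeff ℓ
    rw [← Real.rpow_mul_natCast (Nat.cast_nonneg n)] at h
    have e : ((d * ℓ : ℕ) : ℝ) / 2 = (d : ℝ) / 2 * (ℓ : ℝ) := by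
      push_cast
      ring
    rw [e]
    exact h
  have hs : (∑ m ∈ P.support, |P.coeff m|) ^ ℓ =
      ∑ p ∈ Fintype.piFinset (fun _ : Fin ℓ => P.support), ∏ i, |P.coeff (p i)| := by
    have h := Finset.prod_univ_sum (fun _ : Fin ℓ => P.support) (fun _ m => |P.coeff m|)
    rwa [Finset.prod_const, Finset.card_univ, Fintype.card_fin] at h
  refine le_trans ?_ (mul_le_mul_of_nonneg_left hN hη)
  rw [hs, Finset.mul_sum]
  refine Finset.sum_le_sum fun p hp => ?_
  rw [← mul_sub, ← Finset.abs_prod, mul_comm η]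
  refine (le_abs_self _).trans ?_
  rw [abs_mul]
  exact mul_le_mul_of_nonneg_left (hμ (fun j => ∑ i, p i j) (hd p hp)).2 (abs_nonneg _)
end

section
/- There exists an absolute constant c > 0 with the following property. For all integers n, k ≥ 1, every η ∈ (0,1), and every integer m ≥ c·(2kn)^k·η^{-2}: if x^{(1)}, …, x^{(m)} are drawn independently from the standard Gaussian measure γₙ on ℝ^n (i.e., from the m-fold product measure γₙ^{⊗m}), then with probability at least 0.99 the following holds simultaneously for every multi-index α ∈ ℕ^n with |α| ≤ k: |(1/m)·Σ_{i=1}^m (x^{(i)})^α − ∫ y^α dγₙ(y)| ≤ η. -/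
open MeasureTheory ProbabilityTheory

lemma em_bern (a b : ℕ) : a ^ (b + 1) + (b + 1) * a ^ b ≤ (a + 1) ^ (b + 1) := by
  induction b with
  | zero => simp
  | succ b ih =>
    calc a ^ (b + 1 + 1) + (b + 1 + 1) * a ^ (b + 1)
        ≤ (a ^ (b + 1) + (b + 1) * a ^ b) * (a + 1) := by
          have : 0 ≤ (b + 1) * a ^ b := by positivity
          ring_nf at this ⊢; nlinarith
      _ ≤ (a + 1) ^ (b + 1) * (a + 1) := by gcongr
      _ = _ := by ring

open scoped Nat in
lemma em_df_le (a : ℕ) : (2 * a - 1)‼ ≤ a ^ a := by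
  induction a with
  | zero => simp
  | succ a ih =>
    rcases Nat.eq_zero_or_pos a with rfl | ha
    · simp
    have h1 : 2 * (a + 1) - 1 = (2 * a - 1) + 2 := by omega
    rw [h1, Nat.doubleFactorial_add_two]
    have h2 : 2 * a ^ a ≤ (a + 1) ^ a := by
      obtain ⟨b, rfl⟩ : ∃ b, a = b + 1 := ⟨a - 1, by omega⟩
      have h3 := em_bern (b + 1) b
      have h4 : (b + 1) * (b + 1) ^ b = (b + 1) ^ (b + 1) := by ring
      omega
    calc (2 * a - 1 + 2) * (2 * a - 1)‼ ≤ (2 * (a + 1)) * a ^ a := by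
          gcongr; omega
      _ = (a + 1) * (2 * a ^ a) := by ring
      _ ≤ (a + 1) * (a + 1) ^ a := by gcongr
      _ = _ := by ring

lemma em_moment (a : ℕ) :
    ∫ x, x ^ (2 * a) ∂(gaussianReal 0 1) = ((2 * a - 1).doubleFactorial : ℝ) := by
  rw [integral_gaussianReal_eq_integral_smul (by simp)]
  have h1 : ∀ x : ℝ, gaussianPDFReal 0 1 x • x ^ (2 * a) =
      (√(2 * Real.pi))⁻¹ * ((fun y : ℝ => y ^ (2 * a : ℝ) * Real.exp (-(1/2) * y ^ (2 : ℝ))) |x|) := by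
    intro x
    have : |x| ^ (2 * a : ℝ) = x ^ (2 * a) := by
      rw [← (even_two_mul a).pow_abs x, ← Real.rpow_natCast]
      push_cast; rfl
    simp only [gaussianPDFReal, this, smul_eq_mul, Real.rpow_two, sq_abs]
    simp
    ring_nf
  simp_rw [h1]
  rw [integral_const_mul, integral_comp_abs
      (f := fun y : ℝ => y ^ (2 * a : ℝ) * Real.exp (-(1/2) * y ^ (2 : ℝ))),
    integral_rpow_mul_exp_neg_mul_rpow (by norm_num) (by linarith [a.cast_nonneg (α := ℝ)]) (by norm_num)]
  have h2 : ((2 * a : ℝ) + 1) / 2 = a + 1 / 2 := by ring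
  rw [neg_div, h2, Real.Gamma_nat_add_half, show ((1 : ℝ) / 2) = 2⁻¹ by norm_num, Real.inv_rpow (by norm_num),
    Real.rpow_neg (by norm_num), inv_inv, Real.rpow_add (by norm_num), Real.rpow_natCast,
    ← one_div (2 : ℝ), ← Real.sqrt_eq_rpow, Real.sqrt_mul (by norm_num)]
  have : √Real.pi ≠ 0 := by positivity
  field_simp

lemma em_integrable (a : ℕ) : Integrable (fun x : ℝ => x ^ a) (gaussianReal 0 1) := by
  have h := memLp_id_gaussianReal (μ := 0) (v := 1) a
  have := MemLp.integrable_norm_pow' h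
  rw [← integrable_norm_iff (by fun_prop)]
  simpa using this

instance em_inst (n : ℕ) : IsProbabilityMeasure (stdGaussianPi (Fin n)) := by
  unfold stdGaussianPi; infer_instance

lemma em_memLp {n : ℕ} (α : Fin n → ℕ) :
    MemLp (fun y : Fin n → ℝ => ∏ j, (y j) ^ α j) 2 (stdGaussianPi (Fin n)) := by
  rw [memLp_two_iff_integrable_sq
    (Continuous.aestronglyMeasurable (by fun_prop))]
  simp_rw [← Finset.prod_pow, ← pow_mul]
  exact Integrable.fintype_prod (f := fun j x => x ^ (α j * 2)) fun j => em_integrable _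

lemma em_var {n k : ℕ} (α : Fin n → ℕ) (hk : 1 ≤ k) (h : ∑ j, α j ≤ k) :
    Var[fun y : Fin n → ℝ => ∏ j, (y j) ^ α j; stdGaussianPi (Fin n)] ≤ (k : ℝ) ^ k := by
  refine (variance_le_expectation_sq (em_memLp α).1).trans ?_
  simp only [Pi.pow_apply]
  simp_rw [← Finset.prod_pow, ← pow_mul, mul_comm _ 2]
  rw [stdGaussianPi, integral_fintype_prod_eq_prod (f := fun j x => x ^ (2 * α j))]
  simp_rw [em_moment]
  have hk' : (1 : ℝ) ≤ k := by exact_mod_cast hk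
  calc _ ≤ ∏ j, (k : ℝ) ^ α j := by
        refine Finset.prod_le_prod (fun _ _ => by positivity) fun j _ => ?_
        have h1 : α j ≤ k := (Finset.single_le_sum (f := α) (by simp) (Finset.mem_univ j)).trans h
        have := (em_df_le (α j)).trans (Nat.pow_le_pow_left h1 _)
        exact_mod_cast this
    _ = (k : ℝ) ^ (∑ j, α j) := Finset.prod_pow_eq_pow_sum _ _ _
    _ ≤ _ := pow_le_pow_right₀ hk' h

lemma em_cheb {n k m : ℕ} (α : Fin n → ℕ) (hk : 1 ≤ k) (h : ∑ j, α j ≤ k) (hm : 0 < m)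
    {η : ℝ} (hη : 0 < η) :
    Measure.pi (fun _ : Fin m => stdGaussianPi (Fin n))
      {x | η ≤ |(1 / (m : ℝ)) * ∑ i, ∏ j, (x i j) ^ α j -
                ∫ y, ∏ j, (y j) ^ α j ∂(stdGaussianPi (Fin n))|} ≤
      ENNReal.ofReal ((k : ℝ) ^ k / (m * η ^ 2)) := by
  set g : (Fin n → ℝ) → ℝ := fun y => ∏ j, (y j) ^ α j with hg
  have hgm := em_memLp α
  rw [← hg] at hgm
  have hm' : (0 : ℝ) < m := by exact_mod_cast hm
  have hme : ∀ i : Fin m, MemLp (fun x : Fin m → Fin n → ℝ => g (x i)) 2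
      (Measure.pi (fun _ : Fin m => stdGaussianPi (Fin n))) := fun i =>
    hgm.comp_measurePreserving (measurePreserving_eval (fun _ : Fin m => stdGaussianPi (Fin n)) i)
  have hint : ∀ i : Fin m, ∫ x : Fin m → Fin n → ℝ, g (x i)
      ∂(Measure.pi (fun _ : Fin m => stdGaussianPi (Fin n))) = ∫ y, g y ∂(stdGaussianPi (Fin n)) := by
    intro i
    exact integral_comp_eval (μ := fun _ : Fin m => stdGaussianPi (Fin n)) hgm.1
  have hX : MemLp (fun x : Fin m → Fin n → ℝ => (1 / (m : ℝ)) * ∑ i, g (x i)) 2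
      (Measure.pi (fun _ : Fin m => stdGaussianPi (Fin n))) :=
    (memLp_finsetSum _ fun i _ => hme i).const_mul _
  have hE : ∫ x : Fin m → Fin n → ℝ, (1 / (m : ℝ)) * ∑ i, g (x i)
      ∂(Measure.pi (fun _ : Fin m => stdGaussianPi (Fin n))) = ∫ y, g y ∂(stdGaussianPi (Fin n)) := by
    rw [integral_const_mul, integral_finsetSum _ fun i _ => (hme i).integrable (by norm_num)]
    simp_rw [hint]
    simp
    field_simp
  have hV : Var[fun x : Fin m → Fin n → ℝ => (1 / (m : ℝ)) * ∑ i, g (x i);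
      Measure.pi (fun _ : Fin m => stdGaussianPi (Fin n))] =
      Var[g; stdGaussianPi (Fin n)] / m := by
    rw [variance_const_mul]
    have := variance_sum_pi (μ := fun _ : Fin m => stdGaussianPi (Fin n))
      (X := fun _ => g) (fun i => hgm)
    have h2 : (fun x : Fin m → Fin n → ℝ => ∑ i, g (x i)) =
      ∑ i, fun x : Fin m → Fin n → ℝ => g (x i) := by ext; simp
    rw [h2, this]
    simp
    field_simp
  have := meas_ge_le_variance_div_sq hX hη
  rw [hE, hV] at this
  refine this.trans (ENNReal.ofReal_le_ofReal ?_)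
  rw [div_div]
  gcongr
  exact em_var α hk h

open Classical in
lemma em_surj {n k : ℕ} (α : Fin n → ℕ) (h : ∑ j, α j ≤ k) :
    ∃ f : Fin k → Option (Fin n), (fun j => (Finset.univ.filter fun i => f i = some j).card) = α := by
  have hc : Fintype.card (Σ j, Fin (α j)) ≤ Fintype.card (Fin k) := by simpa using h
  obtain ⟨e⟩ := Function.Embedding.nonempty_of_card_le hc
  refine ⟨fun i => (Function.partialInv e i).map Sigma.fst, ?_⟩
  ext j
  have : (Finset.univ.filter fun i => (Function.partialInv e i).map Sigma.fst = some j) =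
      Finset.univ.image (fun t : Fin (α j) => e ⟨j, t⟩) := by
    ext i
    simp only [Finset.mem_filter, Finset.mem_univ, true_and, Option.map_eq_some_iff,
      Finset.mem_image, (Function.Injective.isPartialInv e.injective) _ _]
    constructor
    · rintro ⟨⟨j', t⟩, h1, rfl⟩; exact ⟨t, h1⟩
    · rintro ⟨t, h1⟩; exact ⟨⟨j, t⟩, h1, rfl⟩
  rw [this, Finset.card_image_of_injective]
  · simp
  · intro s t hst
    simpa using e.injective hst

theorem empirical_moments_concentrate :
    ∃ c : ℝ, 0 < c ∧
      ∀ (n k : ℕ), 1 ≤ n → 1 ≤ k →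
      ∀ η : ℝ, η ∈ Set.Ioo (0 : ℝ) 1 →
      ∀ m : ℕ, c * ((2 * k * n : ℕ) : ℝ) ^ k / η ^ 2 ≤ (m : ℝ) →
        ENNReal.ofReal 0.99 ≤
          Measure.pi (fun _ : Fin m => stdGaussianPi (Fin n))
            {x | ∀ α : Fin n → ℕ, (∑ j, α j) ≤ k →
              |(1 / (m : ℝ)) * ∑ i, ∏ j, (x i j) ^ α j -
                ∫ y, ∏ j, (y j) ^ α j ∂(stdGaussianPi (Fin n))| ≤ η} := by
  classical
  refine ⟨100, by norm_num, fun n k hn hk η ⟨hη, _⟩ m hm => ?_⟩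
  have hP : (0 : ℝ) < ((2 * k * n : ℕ) : ℝ) ^ k := by
    have : 0 < 2 * k * n := by positivity
    positivity
  have hm' : (0 : ℝ) < m := lt_of_lt_of_le (by positivity) hm
  have hm0 : 0 < m := by exact_mod_cast hm'
  set μ := Measure.pi (fun _ : Fin m => stdGaussianPi (Fin n)) with hμ
  set S := {x : Fin m → Fin n → ℝ | ∀ α : Fin n → ℕ, (∑ j, α j) ≤ k →
              |(1 / (m : ℝ)) * ∑ i, ∏ j, (x i j) ^ α j -
                ∫ y, ∏ j, (y j) ^ α j ∂(stdGaussianPi (Fin n))| ≤ η} with hS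
  let A : (Fin k → Option (Fin n)) → Fin n → ℕ :=
    fun f j => (Finset.univ.filter fun i => f i = some j).card
  let B : (Fin k → Option (Fin n)) → Set (Fin m → Fin n → ℝ) := fun f =>
    {x | ∑ j, A f j ≤ k ∧ η ≤ |(1 / (m : ℝ)) * ∑ i, ∏ j, (x i j) ^ A f j -
                ∫ y, ∏ j, (y j) ^ A f j ∂(stdGaussianPi (Fin n))|}
  have hsub : Sᶜ ⊆ ⋃ f, B f := by
    intro x hx
    simp only [hS, Set.mem_compl_iff, Set.mem_ofPred_eq, not_forall, not_le] at hx
    obtain ⟨α, h1, h2⟩ := hx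
    obtain ⟨f, hf⟩ := em_surj α h1
    have hf' : A f = α := by rw [← hf]
    refine Set.mem_iUnion.2 ⟨f, ?_⟩
    simp only [B, Set.mem_ofPred_eq, hf']
    exact ⟨h1, h2.le⟩
  have hB : ∀ f, μ (B f) ≤ ENNReal.ofReal ((k : ℝ) ^ k / (m * η ^ 2)) := by
    intro f
    by_cases h : ∑ j, A f j ≤ k
    · refine (measure_mono fun x hx => ?_).trans (em_cheb (A f) hk h hm0 hη)
      exact hx.2
    · have : B f = ∅ := by ext x; simp [B, h]
      simp [this]
  have hbad : μ Sᶜ ≤ ENNReal.ofReal 0.01 := by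
    calc μ Sᶜ ≤ μ (⋃ f, B f) := measure_mono hsub
      _ ≤ ∑ f, μ (B f) := measure_iUnion_fintype_le _ _
      _ ≤ ∑ f : Fin k → Option (Fin n), ENNReal.ofReal ((k : ℝ) ^ k / (m * η ^ 2)) :=
          Finset.sum_le_sum fun f _ => hB f
      _ = ENNReal.ofReal (((n + 1 : ℕ) : ℝ) ^ k * ((k : ℝ) ^ k / (m * η ^ 2))) := by
          rw [ENNReal.ofReal_mul (by positivity)]
          simp
          congr 1
          rw [ENNReal.ofReal_pow (by positivity)]
          congr 1
          exact_mod_cast (ENNReal.ofReal_natCast (n + 1)).symm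
      _ ≤ _ := by
          apply ENNReal.ofReal_le_ofReal
          rw [← mul_div_assoc, div_le_iff₀ (by positivity), ← mul_pow]
          rw [div_le_iff₀ (by positivity)] at hm
          have : (((n + 1 : ℕ) : ℝ) * k) ^ k ≤ ((2 * k * n : ℕ) : ℝ) ^ k := by
            gcongr
            exact_mod_cast (by nlinarith : (n + 1) * k ≤ 2 * k * n)
          linarith
  have h1 : (1 : ENNReal) ≤ μ S + μ Sᶜ := by
    rw [← measure_univ (μ := μ), ← Set.union_compl_self S]
    exact measure_union_le _ _
  have h2 : (1 : ENNReal) = ENNReal.ofReal 0.99 + ENNReal.ofReal 0.01 := by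
    rw [← ENNReal.ofReal_add (by norm_num) (by norm_num)]; norm_num
  rw [h2] at h1
  exact (ENNReal.add_le_add_iff_right ENNReal.ofReal_ne_top).1 (h1.trans (by gcongr))
end

section
/- Let N ≥ 1 and let ν_N be the pushforward of the standard Gaussian measure γ_N on ℝ^N under the map g ↦ (g_j − (1/N)·Σ_{j'=1}^N g_{j'})_{j=1}^N. Let μ be a probability measure on ℝ^n that approximately matches the moments of the standard Gaussian up to degree k with slack η. Define T : ℝ^n × (ℝ^N)^n → ℝ^{n×N} by T(x, z)_{(i,j)} = x_i/√N + (z_i)_j. Then the pushforward of the product measure μ ⊗ ν_N^{⊗n} under T approximately matches the moments of the standard Gaussian on ℝ^{n×N} up to degree k with slack (2k)^{k/2}·η. -/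
open MeasureTheory ProbabilityTheory

/-- The centered Gaussian measure on `ℝ^N` with variances `1 - 1/N` and pairwise
covariances `-1/N`, realized as the pushforward of the standard Gaussian under
`g ↦ g - (mean of g) · (1,…,1)`. -/
noncomputable def nuN (N : ℕ) : Measure (Fin N → ℝ) :=
  Measure.map (fun g : Fin N → ℝ => fun j => g j - (1 / (N : ℝ)) * ∑ j', g j')
    (stdGaussianPi (Fin N))


lemma aux_amgm {κ : Type} [Fintype κ] (w : κ → ℝ) (hw : ∀ i, 0 ≤ w i) (α : κ → ℕ)
    (hd : 0 < ∑ i, α i) :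
    ∏ i, w i ^ α i ≤ ∑ i, ((α i : ℝ) / ((∑ i, α i : ℕ) : ℝ)) * w i ^ (∑ i, α i) := by
  set d := ∑ i, α i with hdd
  have hd' : (0 : ℝ) < (d : ℝ) := by exact_mod_cast hd
  have := Real.geom_mean_le_arith_mean_weighted Finset.univ (fun i => (α i : ℝ) / (d : ℝ))
    (fun i => w i ^ d) (fun i _ => by positivity)
    (by rw [← Finset.sum_div, div_eq_one_iff_eq hd'.ne', hdd]; push_cast; rfl)
    (fun i _ => pow_nonneg (hw i) _)
  refine le_trans (le_of_eq ?_) this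
  refine Finset.prod_congr rfl fun i _ => ?_
  rw [← Real.rpow_natCast (w i) d, ← Real.rpow_mul (hw i), mul_div_cancel₀ _ hd'.ne',
    Real.rpow_natCast]

lemma aux_int_pow (v : NNReal) (m : ℕ) : Integrable (fun x : ℝ => x ^ m) (gaussianReal 0 v) := by
  have h := (memLp_id_gaussianReal (μ := 0) (v := v) (p := (m : NNReal))).integrable_norm_pow'
  refine (integrable_norm_iff (by fun_prop)).1 ?_
  simpa using h

lemma aux_int_pow' (v : NNReal) (a : ℝ) (m : ℕ) :
    Integrable (fun x : ℝ => (a + |x|) ^ m) (gaussianReal 0 v) := by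
  have h1 : MemLp (fun x : ℝ => a + |x|) (m : NNReal) (gaussianReal 0 v) :=
    (memLp_const a).add (memLp_id_gaussianReal (μ := 0) (v := v) (p := (m : NNReal))).norm
  have h := h1.integrable_norm_pow'
  refine (integrable_norm_iff (by fun_prop)).1 ?_
  simpa using h

lemma aux_stein (l : ℕ) : ∫ x : ℝ, x ^ (l + 2) ∂(gaussianReal 0 1) =
    (l + 1) * ∫ x : ℝ, x ^ l ∂(gaussianReal 0 1) := by
  have hi : ∀ m : ℕ, Integrable (fun x : ℝ => x ^ m * gaussianPDFReal 0 1 x) := by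
    intro m
    have := aux_int_pow 1 m
    rw [gaussianReal_of_var_ne_zero _ one_ne_zero] at this
    rw [integrable_withDensity_iff (measurable_gaussianPDF 0 1)
      (Filter.Eventually.of_forall fun x => gaussianPDF_lt_top)] at this
    simpa using this
  rw [integral_gaussianReal_eq_integral_smul one_ne_zero,
    integral_gaussianReal_eq_integral_smul one_ne_zero]
  have hd : ∀ x : ℝ, HasDerivAt (gaussianPDFReal 0 1) (- (x * gaussianPDFReal 0 1 x)) x := by
    intro x
    have h1 : HasDerivAt (fun x : ℝ => -(x - 0) ^ 2 / (2 * ((1 : NNReal) : ℝ))) (-x) x := by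
      have := (((hasDerivAt_id x).sub_const 0).pow 2).neg.div_const (2 * ((1 : NNReal) : ℝ))
      convert! this using 1
      simp; ring
    have h2 := (h1.exp).const_mul ((√(2 * Real.pi * ((1 : NNReal) : ℝ)))⁻¹)
    rw [gaussianPDFReal_def]
    convert! h2 using 1
    ring
  have h := integral_mul_deriv_eq_deriv_mul_of_integrable
    (u := fun x : ℝ => x ^ (l + 1)) (u' := fun x => ((l + 1 : ℕ) : ℝ) * x ^ l)
    (v := gaussianPDFReal 0 1) (v' := fun x => - (x * gaussianPDFReal 0 1 x))
    (fun x _ => by simpa using hasDerivAt_pow (l + 1) x) (fun x _ => hd x)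
    (by
      convert! (hi (l + 2)).neg using 1
      ext x; simp; ring)
    (by
      convert! (hi l).const_mul (l + 1 : ℝ) using 1
      ext x; simp; ring)
    (hi (l + 1))
  rw [← integral_const_mul, ← neg_inj, ← integral_neg]
  rw [← integral_neg] at h ⊢
  convert! h using 2
  · ext x; simp; ring
  · ext x; simp; ring

lemma aux_even (d l : ℕ) (hl : l ≤ d) (hd : 1 ≤ d) :
    ∫ x : ℝ, x ^ (2 * l) ∂(gaussianReal 0 1) ≤ (2 * d - 1 : ℝ) ^ l := by
  have hd' : (1 : ℝ) ≤ d := by exact_mod_cast hd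
  induction l with
  | zero => simp
  | succ l ih =>
    rw [show 2 * (l + 1) = 2 * l + 2 by ring, aux_stein]
    have h0 : 0 ≤ ∫ x : ℝ, x ^ (2 * l) ∂(gaussianReal 0 1) :=
      integral_nonneg fun x => by simp only [pow_mul]; positivity
    have hl' : (l : ℝ) + 1 ≤ d := by exact_mod_cast hl
    rw [pow_succ, mul_comm]
    push_cast
    have := ih (by omega)
    exact mul_le_mul this (by linarith) (by positivity) (pow_nonneg (by linarith) _)

lemma aux_expand (d : ℕ) (x : ℝ) :
    (1 + x ^ 2) ^ d = ∑ m ∈ Finset.range (d + 1), (d.choose m : ℝ) * x ^ (2 * m) := by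
  rw [add_comm, add_pow]
  refine Finset.sum_congr rfl fun m _ => ?_
  rw [pow_mul]; simp; ring

lemma aux_even_bound (d : ℕ) (hd : 1 ≤ d) :
    ∫ x : ℝ, (1 + x ^ 2) ^ d ∂(gaussianReal 0 1) ≤ (2 * d : ℝ) ^ d := by
  simp_rw [aux_expand]
  rw [integral_finsetSum _ fun m _ => (aux_int_pow 1 _).const_mul _]
  calc _ ≤ ∑ m ∈ Finset.range (d + 1), (d.choose m : ℝ) * (2 * d - 1 : ℝ) ^ m := by
        refine Finset.sum_le_sum fun m hm => ?_
        rw [integral_const_mul]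
        have := aux_even d m (by simp at hm; omega) hd
        gcongr
    _ = (2 * d : ℝ) ^ d := by
        rw [show (2 * d : ℝ) = (2 * d - 1) + 1 by ring, add_pow]
        refine Finset.sum_congr rfl fun m _ => ?_
        simp; ring

lemma aux_moment (d : ℕ) (hd : 1 ≤ d) (a : ℝ) (v : NNReal) (hav : a ^ 2 + v = 1) :
    ∫ x : ℝ, (a + |x|) ^ d ∂(gaussianReal 0 v) ≤ ((2 * d : ℕ) : ℝ) ^ ((d : ℝ) / 2) := by
  set I := ∫ x : ℝ, (a + |x|) ^ d ∂(gaussianReal 0 v) with hI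
  have h2 : I ^ 2 ≤ ∫ x : ℝ, (a + |x|) ^ (2 * d) ∂(gaussianReal 0 v) := by
    have h0 : 0 ≤ ∫ x : ℝ, ((a + |x|) ^ d - I) ^ 2 ∂(gaussianReal 0 v) :=
      integral_nonneg fun x => sq_nonneg _
    have e : ∀ x : ℝ, ((a + |x|) ^ d - I) ^ 2 =
        (a + |x|) ^ (2 * d) - 2 * I * (a + |x|) ^ d + I ^ 2 := by
      intro x; rw [mul_comm 2 d, pow_mul]; ring
    simp_rw [e] at h0
    have i1 := aux_int_pow' v a d
    have i2 := aux_int_pow' v a (2 * d)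
    rw [integral_add (f := fun x : ℝ => (a + |x|) ^ (2 * d) - 2 * I * (a + |x|) ^ d)
      (i2.sub (i1.const_mul _)) (integrable_const _), integral_sub i2 (i1.const_mul _), integral_const_mul, ← hI] at h0
    simp at h0
    nlinarith
  have h3 : ∫ x : ℝ, (a + |x|) ^ (2 * d) ∂(gaussianReal 0 v) ≤
      ∫ x : ℝ, (1 + x ^ 2) ^ d ∂(gaussianReal 0 1) := by
    have hm : gaussianReal 0 v = (gaussianReal 0 1).map (fun x => √(v : ℝ) * x) := by
      rw [gaussianReal_map_const_mul]
      congr 1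
      · simp
      · ext; simp
    rw [hm, integral_map (by fun_prop) (by fun_prop)]
    refine integral_mono ?_ ?_ ?_
    · have := aux_int_pow' v a (2 * d)
      rw [hm, integrable_map_measure (by fun_prop) (by fun_prop)] at this
      exact this
    · simp_rw [aux_expand]
      exact integrable_finsetSum _ fun m _ => (aux_int_pow 1 _).const_mul _
    · intro x
      simp only
      rw [pow_mul]
      have hs : √(v : ℝ) ^ 2 = v := Real.sq_sqrt v.2
      have h4 : (a + |√(v : ℝ) * x|) ^ 2 ≤ 1 + x ^ 2 := by
        rw [abs_mul, abs_of_nonneg (Real.sqrt_nonneg _), ← sq_abs x]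
        nlinarith [sq_nonneg (a * |x| - √(v : ℝ))]
      gcongr
  have h5 := h2.trans (h3.trans (aux_even_bound d hd))
  refine (Real.le_sqrt_of_sq_le h5).trans (le_of_eq ?_)
  rw [Real.sqrt_eq_rpow, ← Real.rpow_natCast, ← Real.rpow_mul (by positivity)]
  push_cast
  congr 1
  ring

instance aux_prob_std (ι : Type) [Fintype ι] : IsProbabilityMeasure (stdGaussianPi ι) := by
  unfold stdGaussianPi; infer_instance

instance aux_prob_nu (N : ℕ) : IsProbabilityMeasure (nuN N) := by
  unfold nuN; exact Measure.isProbabilityMeasure_map (by fun_prop)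

lemma aux_exp {ι : Type} [Fintype ι] (c : ι → ℝ) :
    ∫ x, Complex.exp (((∑ i, c i * x i : ℝ) : ℂ) * Complex.I) ∂(stdGaussianPi ι) =
      Complex.exp (((-(∑ i, c i ^ 2) / 2 : ℝ) : ℂ)) := by
  have h : ∀ x : ι → ℝ, Complex.exp (((∑ i, c i * x i : ℝ) : ℂ) * Complex.I) =
      ∏ i, Complex.exp ((c i : ℂ) * (x i : ℂ) * Complex.I) := by
    intro x
    rw [← Complex.exp_sum, ← Finset.sum_mul]; push_cast; rfl
  simp_rw [h, stdGaussianPi]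
  rw [integral_fintype_prod_eq_prod (𝕜 := ℂ)
    (fun i (y : ℝ) => Complex.exp ((c i : ℂ) * (y : ℂ) * Complex.I))]
  simp_rw [← charFun_apply_real, charFun_gaussianReal]
  rw [← Complex.exp_sum]
  congr 1
  push_cast
  simp [Finset.sum_neg_distrib, Finset.sum_div, neg_div]

lemma aux_lin {ι : Type} [Fintype ι] (c : ι → ℝ) (v : NNReal) (hv : ∑ i, c i ^ 2 = v) :
    (stdGaussianPi ι).map (fun x => ∑ i, c i * x i) = gaussianReal 0 v := by
  have hm : Measurable (fun x : ι → ℝ => ∑ i, c i * x i) := by fun_prop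
  have : IsProbabilityMeasure ((stdGaussianPi ι).map (fun x => ∑ i, c i * x i)) :=
    Measure.isProbabilityMeasure_map hm.aemeasurable
  apply Measure.ext_of_charFun
  ext t
  rw [charFun_gaussianReal, charFun_apply_real, integral_map hm.aemeasurable (by fun_prop)]
  have := aux_exp (fun i => t * c i)
  simp_rw [mul_assoc t, ← Finset.mul_sum, mul_pow, ← Finset.mul_sum, hv] at this
  simp only [Complex.ofReal_mul t] at this
  rw [this]
  congr 1
  push_cast
  ring

lemma aux_center {N : ℕ} (c g : Fin N → ℝ) :
    ∑ j, c j * (g j - (1 / (N : ℝ)) * ∑ j', g j') =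
      ∑ j, (c j - (1 / (N : ℝ)) * ∑ j', c j') * g j := by
  simp_rw [mul_sub, sub_mul, Finset.sum_sub_distrib]
  congr 1
  rw [← Finset.sum_mul, ← Finset.mul_sum]
  ring

lemma aux_sq {N : ℕ} (hN : 1 ≤ N) (c : Fin N → ℝ) :
    ∑ j, (c j - (1 / (N : ℝ)) * ∑ j', c j') ^ 2 =
      ∑ j, c j ^ 2 - (1 / (N : ℝ)) * (∑ j', c j') ^ 2 := by
  have hN' : (N : ℝ) ≠ 0 := by positivity
  simp_rw [sub_sq, Finset.sum_add_distrib, Finset.sum_sub_distrib]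
  rw [← Finset.sum_mul, ← Finset.mul_sum]
  simp
  field_simp
  ring

lemma aux_marg {n N : ℕ} (hN : 1 ≤ N) (v : NNReal) (hv : 1 / (N : ℝ) + v = 1)
    (i : Fin n) (j : Fin N) :
    (Measure.pi fun _ : Fin n => nuN N).map (fun z => z i j) = gaussianReal 0 v := by
  have h1 : (Measure.pi fun _ : Fin n => nuN N).map (fun z => z i) = nuN N :=
    (measurePreserving_eval (fun _ : Fin n => nuN N) i).map_eq
  have h2 : (Measure.pi fun _ : Fin n => nuN N).map (fun z => z i j) =
      (nuN N).map (fun z => z j) := by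
    conv_rhs => rw [← h1]
    rw [Measure.map_map (by fun_prop) (by fun_prop)]; rfl
  rw [h2, nuN, Measure.map_map (by fun_prop) (by fun_prop)]
  have h3 : ((fun z : Fin N → ℝ => z j) ∘
      fun g : Fin N → ℝ => fun j => g j - (1 / (N : ℝ)) * ∑ j', g j') =
      fun g => ∑ j', ((Pi.single j 1 : Fin N → ℝ) j' - (1 / (N : ℝ)) *
        ∑ j'', (Pi.single j 1 : Fin N → ℝ) j'') * g j' := by
    ext g
    rw [← aux_center]
    simp [Pi.single_apply]
  rw [h3]
  apply aux_lin
  rw [aux_sq hN]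
  simp [Pi.single_apply]
  simp at hv
  linarith

lemma aux_law {n N : ℕ} (hN : 1 ≤ N) :
    ((stdGaussianPi (Fin n)).prod (Measure.pi fun _ : Fin n => nuN N)).map
        (fun q : (Fin n → ℝ) × (Fin n → Fin N → ℝ) =>
          fun ij : Fin n × Fin N => q.1 ij.1 / Real.sqrt N + q.2 ij.1 ij.2) =
      stdGaussianPi (Fin n × Fin N) := by
  have hm : Measurable (fun q : (Fin n → ℝ) × (Fin n → Fin N → ℝ) =>
          fun ij : Fin n × Fin N => q.1 ij.1 / Real.sqrt N + q.2 ij.1 ij.2) := by fun_prop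
  have := Measure.isProbabilityMeasure_map
    (μ := (stdGaussianPi (Fin n)).prod (Measure.pi fun _ : Fin n => nuN N)) hm.aemeasurable
  apply Measure.ext_of_charFunDual
  ext L
  obtain ⟨c, hc⟩ : ∃ c : Fin n × Fin N → ℝ, ∀ y, L y = ∑ ij, c ij * y ij := by
    refine ⟨fun ij => L (Pi.single ij 1), fun y => ?_⟩
    conv_lhs => rw [pi_eq_sum_univ' y]
    rw [map_sum]
    refine Finset.sum_congr rfl fun ij _ => ?_
    rw [map_smul, smul_eq_mul, mul_comm]
  rw [charFunDual_apply, charFunDual_apply, integral_map hm.aemeasurable (by fun_prop)]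
  simp_rw [hc]
  rw [aux_exp]
  have e1 : ∀ q : (Fin n → ℝ) × (Fin n → Fin N → ℝ),
      Complex.exp (((∑ ij : Fin n × Fin N, c ij *
        (q.1 ij.1 / Real.sqrt N + q.2 ij.1 ij.2) : ℝ) : ℂ) * Complex.I) =
      Complex.exp (((∑ i, ((∑ j, c (i, j)) / Real.sqrt N) * q.1 i : ℝ) : ℂ) * Complex.I) *
      ∏ i, Complex.exp (((∑ j, c (i, j) * q.2 i j : ℝ) : ℂ) * Complex.I) := by
    intro q
    rw [← Complex.exp_sum, ← Finset.sum_mul, ← Complex.exp_add, ← add_mul, ← Complex.ofReal_sum,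
      ← Complex.ofReal_add]
    congr 3
    rw [← Finset.sum_add_distrib, Fintype.sum_prod_type]
    refine Finset.sum_congr rfl fun i _ => ?_
    simp_rw [mul_add, Finset.sum_add_distrib, Finset.sum_div, Finset.sum_mul]
    congr 1
    refine Finset.sum_congr rfl fun j _ => ?_
    ring
  simp_rw [e1]
  rw [integral_prod_mul (fun x : Fin n → ℝ =>
      Complex.exp (((∑ i, ((∑ j, c (i, j)) / Real.sqrt N) * x i : ℝ) : ℂ) * Complex.I))
    (fun z : Fin n → Fin N → ℝ =>
      ∏ i, Complex.exp (((∑ j, c (i, j) * z i j : ℝ) : ℂ) * Complex.I)), aux_exp,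
    integral_fintype_prod_eq_prod (𝕜 := ℂ)
      (fun i (y : Fin N → ℝ) => Complex.exp (((∑ j, c (i, j) * y j : ℝ) : ℂ) * Complex.I))]
  have e2 : ∀ i : Fin n, ∫ y, Complex.exp (((∑ j, c (i, j) * y j : ℝ) : ℂ) * Complex.I) ∂(nuN N) =
      Complex.exp (((-(∑ j, c (i, j) ^ 2 - (1 / (N : ℝ)) * (∑ j', c (i, j')) ^ 2) / 2 : ℝ) : ℂ)) := by
    intro i
    have hm2 : Continuous (fun y : Fin N → ℝ =>
        Complex.exp (((∑ j, c (i, j) * y j : ℝ) : ℂ) * Complex.I)) := by fun_prop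
    rw [nuN, integral_map (by fun_prop) hm2.aestronglyMeasurable]
    simp_rw [aux_center (fun j => c (i, j))]
    rw [aux_exp, aux_sq hN (fun j => c (i, j))]
  simp_rw [e2]
  rw [← Complex.exp_sum, ← Complex.exp_add, ← Complex.ofReal_sum, ← Complex.ofReal_add]
  congr 2
  rw [Fintype.sum_prod_type]
  simp_rw [div_pow, Real.sq_sqrt (Nat.cast_nonneg N : (0 : ℝ) ≤ N)]
  rw [← Finset.sum_div, ← Finset.sum_neg_distrib, Finset.sum_div, Finset.sum_div,
    ← Finset.sum_neg_distrib, Finset.sum_div, ← Finset.sum_add_distrib]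
  refine Finset.sum_congr rfl fun i _ => ?_
  ring

lemma aux_poly {κ : Type} [Fintype κ] [DecidableEq κ] (x z : κ → ℝ) (a : ℝ) (α : κ → ℕ) :
    ∏ p, (x p * a + z p) ^ α p =
      ∑ β ∈ Fintype.piFinset (fun p => Finset.range (α p + 1)), (∏ p, x p ^ β p) *
        ∏ p, (a ^ β p * z p ^ (α p - β p) * ((α p).choose (β p) : ℝ)) := by
  simp_rw [add_pow]
  rw [Finset.prod_univ_sum]
  refine Finset.sum_congr rfl fun β _ => ?_
  rw [← Finset.prod_mul_distrib]
  refine Finset.prod_congr rfl fun p _ => ?_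
  ring

lemma aux_wint {Ω κ : Type} [MeasurableSpace Ω] (ρ : Measure Ω) [IsProbabilityMeasure ρ]
    [Fintype κ] (w : κ → Ω → ℝ) (hw : ∀ p z, 0 ≤ w p z) (hm : ∀ p, Measurable (w p))
    (hi : ∀ p m, Integrable (fun z => w p z ^ m) ρ) (α : κ → ℕ) :
    Integrable (fun z => ∏ p, w p z ^ α p) ρ := by
  rcases Nat.eq_zero_or_pos (∑ p, α p) with h0 | h0
  · have : ∀ p, α p = 0 := by simpa using h0
    simp [this]
  · refine Integrable.mono' (g := fun z => ∑ p, ((α p : ℝ) / ((∑ p, α p : ℕ) : ℝ)) *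
      w p z ^ (∑ p, α p)) (integrable_finsetSum _ fun p _ => (hi p _).const_mul _) ?_ ?_
    · exact (Finset.measurable_fun_prod _ fun p _ => (hm p).pow_const _).aestronglyMeasurable
    · refine Filter.Eventually.of_forall fun z => ?_
      rw [Real.norm_of_nonneg (Finset.prod_nonneg fun p _ => pow_nonneg (hw p z) _)]
      exact aux_amgm (fun p => w p z) (fun p => hw p z) α h0

lemma aux_wbound {Ω κ : Type} [MeasurableSpace Ω] (ρ : Measure Ω) [IsProbabilityMeasure ρ]
    [Fintype κ] (w : κ → Ω → ℝ) (hw : ∀ p z, 0 ≤ w p z) (hm : ∀ p, Measurable (w p))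
    (hi : ∀ p m, Integrable (fun z => w p z ^ m) ρ) (α : κ → ℕ) (hα : 0 < ∑ p, α p) (B : ℝ)
    (hB : ∀ p, ∫ z, w p z ^ (∑ p, α p) ∂ρ ≤ B) :
    ∫ z, ∏ p, w p z ^ α p ∂ρ ≤ B := by
  have hd' : (0 : ℝ) < ((∑ p, α p : ℕ) : ℝ) := by exact_mod_cast hα
  calc _ ≤ ∫ z, ∑ p, ((α p : ℝ) / ((∑ p, α p : ℕ) : ℝ)) * w p z ^ (∑ p, α p) ∂ρ :=
        integral_mono (aux_wint ρ w hw hm hi α)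
          (integrable_finsetSum _ fun p _ => (hi p _).const_mul _)
          (fun z => aux_amgm (fun p => w p z) (fun p => hw p z) α hα)
    _ = ∑ p, ((α p : ℝ) / ((∑ p, α p : ℕ) : ℝ)) * ∫ z, w p z ^ (∑ p, α p) ∂ρ := by
        rw [integral_finsetSum _ fun p _ => (hi p _).const_mul _]
        simp_rw [integral_const_mul]
    _ ≤ ∑ p, ((α p : ℝ) / ((∑ p, α p : ℕ) : ℝ)) * B := by
        gcongr with p; exact hB p
    _ = B := by
        rw [← Finset.sum_mul, ← Finset.sum_div, ← Nat.cast_sum, div_self hd'.ne', one_mul]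

/-- coefficient of the expansion -/
noncomputable def auxc {n N : ℕ} (a : ℝ) (α β : Fin n × Fin N → ℕ) (z : Fin n → Fin N → ℝ) : ℝ :=
  ∏ p, (a ^ β p * z p.1 p.2 ^ (α p - β p) * ((α p).choose (β p) : ℝ))

lemma auxc_abs {n N : ℕ} (a : ℝ) (ha : 0 ≤ a) (α β : Fin n × Fin N → ℕ)
    (z : Fin n → Fin N → ℝ) : |auxc a α β z| = auxc a α β (fun i j => |z i j|) := by
  unfold auxc
  rw [Finset.abs_prod]
  refine Finset.prod_congr rfl fun p _ => ?_
  rw [abs_mul, abs_mul, abs_pow, abs_pow, abs_of_nonneg ha, Nat.abs_cast]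

lemma auxc_meas {n N : ℕ} (a : ℝ) (α β : Fin n × Fin N → ℕ) : Measurable (auxc a α β) := by
  unfold auxc
  fun_prop

lemma aux_pow_int {n N : ℕ} (hN : 1 ≤ N) (v : NNReal) (hv : 1 / (N : ℝ) + v = 1) (a : ℝ)
    (p : Fin n × Fin N) (m : ℕ) :
    Integrable (fun z : Fin n → Fin N → ℝ => (a + |z p.1 p.2|) ^ m)
      (Measure.pi fun _ : Fin n => nuN N) := by
  have := aux_int_pow' v a m
  rw [← aux_marg hN v hv p.1 p.2, integrable_map_measure (by fun_prop)
    (by exact Measurable.aemeasurable (by fun_prop))] at this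
  exact this

lemma auxc_int {n N : ℕ} (hN : 1 ≤ N) (v : NNReal) (hv : 1 / (N : ℝ) + v = 1) (a : ℝ)
    (ha : 0 ≤ a) (α β : Fin n × Fin N → ℕ) :
    Integrable (auxc a α β) (Measure.pi fun _ : Fin n => nuN N) := by
  refine (integrable_norm_iff (auxc_meas a α β).aestronglyMeasurable).1 ?_
  simp_rw [Real.norm_eq_abs, auxc_abs a ha]
  have h := aux_wint (Measure.pi fun _ : Fin n => nuN N)
    (fun (p : Fin n × Fin N) z => 0 + |z p.1 p.2|) (fun p z => by positivity)
    (fun p => by fun_prop) (fun p m => aux_pow_int hN v hv 0 p m) (fun p => α p - β p)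
  refine (h.const_mul (∏ p, (a ^ β p * ((α p).choose (β p) : ℝ)))).congr ?_
  refine Filter.Eventually.of_forall fun z => ?_
  simp only [auxc, zero_add]
  rw [← Finset.prod_mul_distrib]
  refine Finset.prod_congr rfl fun p _ => ?_
  ring

lemma aux_formula {n N k : ℕ} (hN : 1 ≤ N) (v : NNReal) (hv : 1 / (N : ℝ) + v = 1)
    (μ : Measure (Fin n → ℝ)) [IsProbabilityMeasure μ]
    (hint : ∀ β : Fin n → ℕ, ∑ i, β i ≤ k → Integrable (fun x => ∏ i, x i ^ β i) μ)
    (α : Fin n × Fin N → ℕ) (hα : ∑ p, α p ≤ k) :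
    Integrable (fun q : (Fin n → ℝ) × (Fin n → Fin N → ℝ) =>
      ∏ p : Fin n × Fin N, (q.1 p.1 / √(N : ℝ) + q.2 p.1 p.2) ^ α p)
      (μ.prod (Measure.pi fun _ : Fin n => nuN N)) ∧
    ∫ q : (Fin n → ℝ) × (Fin n → Fin N → ℝ),
      ∏ p : Fin n × Fin N, (q.1 p.1 / √(N : ℝ) + q.2 p.1 p.2) ^ α p
      ∂(μ.prod (Measure.pi fun _ : Fin n => nuN N)) =
    ∑ β ∈ Fintype.piFinset (fun p => Finset.range (α p + 1)),
      (∫ x, ∏ i, x i ^ (∑ j, β (i, j)) ∂μ) *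
        ∫ z, auxc (√(N : ℝ))⁻¹ α β z ∂(Measure.pi fun _ : Fin n => nuN N) := by
  have e : ∀ q : (Fin n → ℝ) × (Fin n → Fin N → ℝ),
      ∏ p : Fin n × Fin N, (q.1 p.1 / √(N : ℝ) + q.2 p.1 p.2) ^ α p =
      ∑ β ∈ Fintype.piFinset (fun p => Finset.range (α p + 1)),
        (∏ i, q.1 i ^ (∑ j, β (i, j))) * auxc (√(N : ℝ))⁻¹ α β q.2 := by
    intro q
    simp_rw [div_eq_mul_inv]
    rw [aux_poly (fun p : Fin n × Fin N => q.1 p.1) (fun p => q.2 p.1 p.2)]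
    refine Finset.sum_congr rfl fun β _ => ?_
    rw [Fintype.prod_prod_type]
    simp_rw [Finset.prod_pow_eq_pow_sum]
    rfl
  have hI : ∀ β ∈ Fintype.piFinset (fun p => Finset.range (α p + 1)),
      Integrable (fun q : (Fin n → ℝ) × (Fin n → Fin N → ℝ) =>
        (∏ i, q.1 i ^ (∑ j, β (i, j))) * auxc (√(N : ℝ))⁻¹ α β q.2)
        (μ.prod (Measure.pi fun _ : Fin n => nuN N)) := by
    intro β hβ
    refine Integrable.mul_prod (hint (fun i => ∑ j, β (i, j)) ?_)
      (auxc_int hN v hv _ (by positivity) α β)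
    rw [← Fintype.sum_prod_type]
    refine le_trans (Finset.sum_le_sum fun p _ => ?_) hα
    have := Fintype.mem_piFinset.1 hβ p
    simp at this; omega
  simp_rw [e]
  refine ⟨integrable_finsetSum _ hI, ?_⟩
  rw [integral_finsetSum _ hI]
  refine Finset.sum_congr rfl fun β _ => ?_
  exact integral_prod_mul (fun x : Fin n → ℝ => ∏ i, x i ^ (∑ j, β (i, j))) (auxc (√(N : ℝ))⁻¹ α β)

theorem momentMatches_of_lift (n N k : ℕ) (hn : 1 ≤ n) (hN : 1 ≤ N) (η : ℝ)
    (μ : Measure (Fin n → ℝ)) [IsProbabilityMeasure μ]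
    (hμ : MomentMatches k η μ) :
    MomentMatches k (((2 * k : ℕ) : ℝ) ^ ((k : ℝ) / 2) * η)
      (Measure.map
        (fun q : (Fin n → ℝ) × (Fin n → Fin N → ℝ) =>
          fun ij : Fin n × Fin N => q.1 ij.1 / Real.sqrt N + q.2 ij.1 ij.2)
        (μ.prod (Measure.pi fun _ : Fin n => nuN N))) := by
  have hN1 : (1 : ℝ) ≤ N := by exact_mod_cast hN
  have hη : 0 ≤ η := (abs_nonneg _).trans (hμ 0 (by simp)).2
  obtain ⟨v, hv⟩ : ∃ v : NNReal, 1 / (N : ℝ) + v = 1 :=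
    ⟨⟨1 - 1 / (N : ℝ), by rw [sub_nonneg, div_le_one (by linarith)]; exact hN1⟩, by
      show 1 / (N : ℝ) + (1 - 1 / (N : ℝ)) = 1; ring⟩
  have hm : Measurable (fun q : (Fin n → ℝ) × (Fin n → Fin N → ℝ) =>
          fun ij : Fin n × Fin N => q.1 ij.1 / Real.sqrt N + q.2 ij.1 ij.2) := by fun_prop
  set a : ℝ := (√(N : ℝ))⁻¹ with ha
  have ha0 : 0 ≤ a := by positivity
  have hav : a ^ 2 + v = 1 := by
    rw [ha, inv_pow, Real.sq_sqrt (by linarith), ← hv, one_div]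
  intro α hα
  have hintμ : ∀ β : Fin n → ℕ, ∑ i, β i ≤ k → Integrable (fun x => ∏ i, x i ^ β i) μ := by
    intro β hβ
    refine (integrable_norm_iff (by exact Measurable.aestronglyMeasurable (by fun_prop))).1 ?_
    refine (hμ β hβ).1.congr (Filter.Eventually.of_forall fun x => ?_)
    simp
  have hintγ : ∀ β : Fin n → ℕ, ∑ i, β i ≤ k →
      Integrable (fun x => ∏ i, x i ^ β i) (stdGaussianPi (Fin n)) := by
    intro β _
    exact Integrable.fintype_prod (f := fun i (y : ℝ) => y ^ β i) fun i => aux_int_pow 1 (β i)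
  obtain ⟨i1, f1⟩ := aux_formula hN v hv μ hintμ α hα
  obtain ⟨i2, f2⟩ := aux_formula hN v hv (stdGaussianPi (Fin n)) hintγ α hα
  constructor
  · rw [integrable_map_measure (by exact Measurable.aestronglyMeasurable (by fun_prop))
      hm.aemeasurable]
    refine i1.norm.congr (Filter.Eventually.of_forall fun q => ?_)
    simp
  · rw [← aux_law hN, integral_map hm.aemeasurable (by exact Measurable.aestronglyMeasurable (by fun_prop)),
      integral_map hm.aemeasurable (by exact Measurable.aestronglyMeasurable (by fun_prop)), f1, f2, ← Finset.sum_sub_distrib]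
    refine (Finset.abs_sum_le_sum_abs _ _).trans ?_
    have key : ∫ z, ∏ p : Fin n × Fin N, (a + |z p.1 p.2|) ^ α p
        ∂(Measure.pi fun _ : Fin n => nuN N) ≤ ((2 * k : ℕ) : ℝ) ^ ((k : ℝ) / 2) := by
      rcases Nat.eq_zero_or_pos k with hk | hk
      · subst hk
        have : ∀ p, α p = 0 := by simpa using hα
        simp [this]
      have hk1 : (1 : ℝ) ≤ ((2 * k : ℕ) : ℝ) := by exact_mod_cast (by omega : 1 ≤ 2 * k)
      rcases Nat.eq_zero_or_pos (∑ p, α p) with h0 | h0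
      · have : ∀ p, α p = 0 := by simpa using h0
        simp only [this, pow_zero, Finset.prod_const_one, integral_const]
        simpa using Real.one_le_rpow hk1 (by positivity)
      refine aux_wbound _ (fun (p : Fin n × Fin N) (z : Fin n → Fin N → ℝ) => a + |z p.1 p.2|)
        (fun p z => by positivity) (fun p => by fun_prop)
        (fun p m => aux_pow_int hN v hv a p m) α h0 _ fun p => ?_
      have h1 := aux_moment (∑ p, α p) h0 a v hav
      rw [← aux_marg hN v hv p.1 p.2, integral_map
        (by exact Measurable.aemeasurable (by fun_prop)) (by fun_prop)] at h1
      refine h1.trans ?_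
      calc ((2 * (∑ p, α p) : ℕ) : ℝ) ^ (((∑ p, α p : ℕ) : ℝ) / 2)
          ≤ ((2 * k : ℕ) : ℝ) ^ (((∑ p, α p : ℕ) : ℝ) / 2) := by
            apply Real.rpow_le_rpow (by positivity) _ (by positivity)
            exact_mod_cast (by omega : 2 * (∑ p, α p) ≤ 2 * k)
        _ ≤ _ := by
            apply Real.rpow_le_rpow_of_exponent_le hk1
            have : ((∑ p, α p : ℕ) : ℝ) ≤ k := by exact_mod_cast hα
            linarith
    refine le_trans ?_ (mul_le_mul_of_nonneg_right key hη)
    have hsum : ∀ z : Fin n → Fin N → ℝ, ∏ p : Fin n × Fin N, (a + |z p.1 p.2|) ^ α p =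
        ∑ β ∈ Fintype.piFinset (fun p => Finset.range (α p + 1)), |auxc a α β z| := by
      intro z
      have := aux_poly (fun _ => 1) (fun p : Fin n × Fin N => |z p.1 p.2|) a α
      simp only [one_mul, one_pow, Finset.prod_const_one] at this
      rw [this]
      refine Finset.sum_congr rfl fun β _ => ?_
      rw [auxc_abs a ha0]; rfl
    simp_rw [hsum]
    rw [integral_finsetSum _ fun β _ => (auxc_int hN v hv a ha0 α β).abs, Finset.sum_mul]
    refine Finset.sum_le_sum fun β hβ => ?_
    rw [← sub_mul, abs_mul, mul_comm]
    refine mul_le_mul abs_integral_le_integral_abs ?_ (abs_nonneg _)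
      (integral_nonneg fun z => abs_nonneg _)
    refine (hμ (fun i => ∑ j, β (i, j)) ?_).2
    rw [← Fintype.sum_prod_type]
    refine le_trans (Finset.sum_le_sum fun p _ => ?_) hα
    have := Fintype.mem_piFinset.1 hβ p
    simp at this; omega
end

section
/- Let N ≥ 1 and let ν_N be the pushforward of the standard Gaussian measure γ_N on ℝ^N under the map g ↦ (g_j − (1/N)·Σ_{j'=1}^N g_{j'})_{j=1}^N. Define T : ℝ^n × (ℝ^N)^n → ℝ^{n×N} by T(y, z)_{(i,j)} = y_i/√N + (z_i)_j. Then the pushforward of the product measure γₙ ⊗ ν_N^{⊗n} under T equals the standard Gaussian measure on ℝ^{n×N}. -/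
open MeasureTheory ProbabilityTheory

instance stdGaussianPi_prob (ι : Type) [Fintype ι] : IsProbabilityMeasure (stdGaussianPi ι) := by
  unfold stdGaussianPi; infer_instance

lemma nuN_meas (N : ℕ) :
    Measurable (fun g : Fin N → ℝ => fun j => g j - (1 / (N : ℝ)) * ∑ j', g j') := by
  fun_prop

instance nuN_prob (N : ℕ) : IsProbabilityMeasure (nuN N) := by
  unfold nuN
  exact Measure.isProbabilityMeasure_map (nuN_meas N).aemeasurable

lemma cf_one (t : ℝ) : ∫ x, Complex.exp (((t * x : ℝ) : ℂ) * Complex.I) ∂(gaussianReal 0 1)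
    = Complex.exp ((-(t ^ 2) / 2 : ℝ) : ℂ) := by
  have h := charFun_gaussianReal (μ := 0) (v := 1) t
  rw [charFun_apply_real] at h
  push_cast at h ⊢
  rw [h]
  congr 1
  simp
  ring

lemma cf_pi {ι : Type} [Fintype ι] {E : Type} [MeasurableSpace E] (μ : Measure E) [SigmaFinite μ]
    (f : ι → E → ℝ) : ∫ x, Complex.exp (((∑ k, f k (x k) : ℝ) : ℂ) * Complex.I)
      ∂(Measure.pi fun _ : ι => μ)
    = ∏ k, ∫ x, Complex.exp (((f k x : ℝ) : ℂ) * Complex.I) ∂μ := by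
  rw [← integral_fintype_prod_eq_prod (𝕜 := ℂ) (μ := fun _ : ι => μ)]
  congr 1
  ext x
  rw [← Complex.exp_sum, ← Finset.sum_mul]
  push_cast
  rfl

lemma cf_std {ι : Type} [Fintype ι] (t : ι → ℝ) :
    ∫ x, Complex.exp (((∑ k, t k * x k : ℝ) : ℂ) * Complex.I) ∂(stdGaussianPi ι)
    = Complex.exp ((∑ k, -(t k ^ 2) / 2 : ℝ) : ℂ) := by
  unfold stdGaussianPi
  rw [cf_pi _ (fun k x => t k * x)]
  simp_rw [cf_one]
  rw [← Complex.exp_sum]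
  push_cast
  rfl

lemma cf_nu (N : ℕ) (t : Fin N → ℝ) :
    ∫ x, Complex.exp (((∑ k, t k * x k : ℝ) : ℂ) * Complex.I) ∂(nuN N)
    = Complex.exp ((∑ k, -((t k - (1 / (N : ℝ)) * ∑ j, t j) ^ 2) / 2 : ℝ) : ℂ) := by
  unfold nuN
  rw [integral_map (nuN_meas N).aemeasurable
    (by apply Continuous.aestronglyMeasurable; fun_prop), ← cf_std]
  congr 1
  ext x
  congr 3
  simp only [mul_sub, sub_mul, Finset.sum_sub_distrib, ← Finset.sum_mul, ← Finset.mul_sum]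
  ring

lemma ext_pi {ι : Type} [Fintype ι] (μ ν : Measure (ι → ℝ)) [IsFiniteMeasure μ]
    [IsFiniteMeasure ν]
    (h : ∀ t : ι → ℝ, ∫ x, Complex.exp (((∑ k, t k * x k : ℝ) : ℂ) * Complex.I) ∂μ =
      ∫ x, Complex.exp (((∑ k, t k * x k : ℝ) : ℂ) * Complex.I) ∂ν) : μ = ν := by
  classical
  apply Measure.ext_of_charFunDual
  ext L
  rw [charFunDual_apply, charFunDual_apply]
  have hL : ∀ x : ι → ℝ, L x = ∑ k, L (Pi.single k 1) * x k := by
    intro x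
    conv_lhs => rw [pi_eq_sum_univ' x]
    rw [map_sum]
    refine Finset.sum_congr rfl fun k _ => ?_
    rw [map_smul, smul_eq_mul, mul_comm]
  have e : ∀ x : ι → ℝ, Complex.exp ((L x : ℂ) * Complex.I) = Complex.exp
      (((∑ k, L (Pi.single k 1) * x k : ℝ) : ℂ) * Complex.I) := fun x => by rw [← hL x]
  rw [integral_congr_ae (.of_forall e), integral_congr_ae (.of_forall e)]
  exact h _

theorem lift_of_gaussian_is_gaussian (n N : ℕ) (hn : 1 ≤ n) (hN : 1 ≤ N) :
    Measure.map
      (fun q : (Fin n → ℝ) × (Fin n → Fin N → ℝ) =>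
        fun ij : Fin n × Fin N => q.1 ij.1 / Real.sqrt N + q.2 ij.1 ij.2)
      ((stdGaussianPi (Fin n)).prod (Measure.pi fun _ : Fin n => nuN N)) =
      stdGaussianPi (Fin n × Fin N) := by
  have hm : Measurable (fun q : (Fin n → ℝ) × (Fin n → Fin N → ℝ) =>
        fun ij : Fin n × Fin N => q.1 ij.1 / Real.sqrt N + q.2 ij.1 ij.2) := by
    fun_prop
  apply ext_pi
  intro t
  rw [integral_map hm.aemeasurable
    (by apply Continuous.aestronglyMeasurable; fun_prop), cf_std]
  have h1 : ∀ q : (Fin n → ℝ) × (Fin n → Fin N → ℝ),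
      Complex.exp (((∑ k : Fin n × Fin N,
        t k * (q.1 k.1 / Real.sqrt N + q.2 k.1 k.2) : ℝ) : ℂ) * Complex.I)
      = Complex.exp (((∑ i, ((∑ j, t (i, j)) / Real.sqrt N) * q.1 i : ℝ) : ℂ) * Complex.I) *
        Complex.exp (((∑ i, ∑ j, t (i, j) * q.2 i j : ℝ) : ℂ) * Complex.I) := by
    intro q
    rw [← Complex.exp_add, ← add_mul, ← Complex.ofReal_add, ← Finset.sum_add_distrib,
      Fintype.sum_prod_type]
    congr 3
    refine Finset.sum_congr rfl fun i _ => ?_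
    simp only [mul_add, Finset.sum_add_distrib, ← Finset.sum_mul]
    ring
  simp_rw [h1]
  rw [integral_prod_mul (fun y : Fin n → ℝ => Complex.exp
      (((∑ i, ((∑ j, t (i, j)) / Real.sqrt N) * y i : ℝ) : ℂ) * Complex.I))
    (fun z : Fin n → Fin N → ℝ => Complex.exp
      (((∑ i, ∑ j, t (i, j) * z i j : ℝ) : ℂ) * Complex.I)), cf_std,
    cf_pi _ (fun i (z : Fin N → ℝ) => ∑ j, t (i, j) * z j)]
  simp_rw [cf_nu]
  rw [← Complex.exp_sum, ← Complex.exp_add, ← Complex.ofReal_sum, ← Complex.ofReal_add,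
    ← Finset.sum_add_distrib, Fintype.sum_prod_type]
  congr 2
  refine Finset.sum_congr rfl fun i _ => ?_
  have hN' : (N : ℝ) ≠ 0 := by positivity
  rw [div_pow, Real.sq_sqrt (by positivity), ← Finset.sum_div, ← Finset.sum_div]
  simp only [sub_sq, Finset.sum_neg_distrib, Finset.sum_add_distrib, Finset.sum_sub_distrib,
    ← Finset.sum_mul, ← Finset.mul_sum, Finset.sum_const, Finset.card_univ, Fintype.card_fin,
    nsmul_eq_mul]
  field_simp
  ring
end

section
/- Let d ≥ 1, N ≥ 1, δ' ∈ (0,1), and η̂ ≥ 0 with η̂ ≤ ((δ'^{2d+3})/d − 2/N)/3. Let μ be a probability measure on ℝ^N that approximately matches the moments of the standard Gaussian up to degree 4 with slack η̂. Then μ({x ∈ ℝ^N : |(1/N)·Σ_{j=1}^N x_j² − 1| > δ'^{d+1}}) ≤ δ'/d. -/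
open MeasureTheory ProbabilityTheory

lemma deriv_poly_gauss (p q : ℝ → ℝ) (h : ∀ t, HasDerivAt p (q t - t * p t) t) :
    deriv (fun t : ℝ => p t * Real.exp (t ^ 2 / 2)) = fun t => q t * Real.exp (t ^ 2 / 2) := by
  funext t
  have h1 : HasDerivAt (fun t : ℝ => t ^ 2 / 2) t t := by
    have := (hasDerivAt_pow 2 t).div_const 2
    refine this.congr_deriv ?_
    norm_num
  have := (h t).mul h1.exp
  refine HasDerivAt.deriv (this.congr_deriv ?_)
  ring

lemma gauss_derivs (t : ℝ) :
    iteratedDeriv 2 (fun t : ℝ => Real.exp (t ^ 2 / 2)) t = (t ^ 2 + 1) * Real.exp (t ^ 2 / 2) ∧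
    iteratedDeriv 4 (fun t : ℝ => Real.exp (t ^ 2 / 2)) t =
      (t ^ 4 + 6 * t ^ 2 + 3) * Real.exp (t ^ 2 / 2) := by
  have e0 : (fun t : ℝ => Real.exp (t ^ 2 / 2)) = fun t : ℝ => 1 * Real.exp (t ^ 2 / 2) := by simp
  have d1 := deriv_poly_gauss (fun _ => 1) (fun t => t) (fun t => by
    simpa using hasDerivAt_const t (1 : ℝ))
  have d2 := deriv_poly_gauss (fun t => t) (fun t => t ^ 2 + 1) (fun t => by
    refine (hasDerivAt_id' t).congr_deriv ?_
    ring)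
  have d3 := deriv_poly_gauss (fun t => t ^ 2 + 1) (fun t => t ^ 3 + 3 * t) (fun t => by
    refine ((hasDerivAt_pow 2 t).add_const 1).congr_deriv ?_
    norm_num
    ring)
  have d4 := deriv_poly_gauss (fun t => t ^ 3 + 3 * t) (fun t => t ^ 4 + 6 * t ^ 2 + 3) (fun t => by
    refine ((hasDerivAt_pow 3 t).add ((hasDerivAt_id' t).const_mul 3)).congr_deriv ?_
    norm_num
    ring)
  rw [e0]
  constructor <;> simp only [iteratedDeriv_succ, iteratedDeriv_zero, d1, d2, d3, d4]

lemma gauss_moment (n : ℕ) : ∫ x, x ^ n ∂(gaussianReal 0 1) =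
    iteratedDeriv n (fun t : ℝ => Real.exp (t ^ 2 / 2)) 0 := by
  have h := iteratedDeriv_mgf_zero (X := fun x : ℝ => x) (μ := gaussianReal 0 1) (by simp) n
  rw [mgf_fun_id_gaussianReal] at h
  simp only [zero_mul, zero_add, NNReal.coe_one, one_mul] at h
  rw [h]
  simp

lemma gauss_m2 : ∫ x, x ^ 2 ∂(gaussianReal 0 1) = 1 := by
  rw [gauss_moment, (gauss_derivs 0).1]; simp

lemma gauss_m4 : ∫ x, x ^ 4 ∂(gaussianReal 0 1) = 3 := by
  rw [gauss_moment, (gauss_derivs 0).2]; simp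

lemma prod_single {N : ℕ} (y : Fin N → ℝ) (i : Fin N) (n : ℕ) :
    ∏ k, y k ^ (Pi.single i n : Fin N → ℕ) k = y i ^ n := by
  rw [Finset.prod_eq_single i]
  · simp
  · intro b _ hb
    simp [hb]
  · simp

lemma gauss_prod {N : ℕ} (α : Fin N → ℕ) :
    ∫ y, ∏ i, (y i) ^ α i ∂(stdGaussianPi (Fin N)) = ∏ i, ∫ x, x ^ α i ∂(gaussianReal 0 1) :=
  integral_fintype_prod_eq_prod (fun i (x : ℝ) => x ^ α i)

theorem match_two {N : ℕ} {η : ℝ} {μ : Measure (Fin N → ℝ)} (hμ : MomentMatches 4 η μ)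
    (i : Fin N) : Integrable (fun x => x i ^ 2) μ ∧ 1 - η ≤ ∫ x, x i ^ 2 ∂μ := by
  obtain ⟨h1, h2⟩ := hμ (Pi.single i 2) (by simp)
  rw [gauss_prod] at h2
  have hg : ∏ k, ∫ x, x ^ (Pi.single i 2 : Fin N → ℕ) k ∂(gaussianReal 0 1) = 1 := by
    apply Finset.prod_eq_one
    intro k _
    by_cases hk : k = i
    · subst hk; simp [gauss_m2]
    · simp [hk]
  rw [hg] at h2
  simp only [prod_single] at h2
  have e : (fun x : Fin N → ℝ => ∏ k, |x k| ^ (Pi.single i 2 : Fin N → ℕ) k) =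
      fun x => x i ^ 2 := by
    funext x
    rw [prod_single (fun k => |x k|)]
    simp
  rw [e] at h1
  exact ⟨h1, by linarith [(abs_le.1 h2).1]⟩

theorem match_four {N : ℕ} {η : ℝ} {μ : Measure (Fin N → ℝ)} (hμ : MomentMatches 4 η μ)
    (i j : Fin N) : Integrable (fun x => x i ^ 2 * x j ^ 2) μ ∧
      ∫ x, x i ^ 2 * x j ^ 2 ∂μ ≤ (1 + η) + if i = j then 2 else 0 := by
  obtain ⟨h1, h2⟩ := hμ (Pi.single i 2 + Pi.single j 2) (by simp [Finset.sum_add_distrib])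
  rw [gauss_prod] at h2
  have hg : ∏ k, ∫ x, x ^ (Pi.single i 2 + Pi.single j 2 : Fin N → ℕ) k ∂(gaussianReal 0 1)
      = 1 + if i = j then 2 else 0 := by
    by_cases hij : i = j
    · subst hij
      rw [Finset.prod_eq_single i]
      · simp [gauss_m4]; norm_num
      · intro k _ hk
        simp [hk]
      · simp
    · rw [Finset.prod_eq_one]
      · simp [hij]
      intro k _
      by_cases hk : k = i
      · subst hk; simp [gauss_m2, hij]
      · by_cases hk' : k = j
        · subst hk'; simp [gauss_m2, hk]
        · simp [hk, hk']
  rw [hg] at h2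
  simp only [Pi.add_apply, pow_add, Finset.prod_mul_distrib, prod_single] at h2
  have e : (fun x : Fin N → ℝ => ∏ k, |x k| ^ (Pi.single i 2 + Pi.single j 2 : Fin N → ℕ) k) =
      fun x => x i ^ 2 * x j ^ 2 := by
    funext x
    simp only [Pi.add_apply, pow_add, Finset.prod_mul_distrib]
    rw [prod_single (fun k => |x k|), prod_single (fun k => |x k|)]
    simp
  rw [e] at h1
  exact ⟨h1, by linarith [(abs_le.1 h2).2]⟩

theorem concentration_sum_squares (d N : ℕ) (hd : 1 ≤ d) (hN : 1 ≤ N)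
    (δ' ηh : ℝ) (hδ' : δ' ∈ Set.Ioo (0 : ℝ) 1) (hη0 : 0 ≤ ηh)
    (hη : ηh ≤ (δ' ^ (2 * d + 3) / d - 2 / N) / 3)
    (μ : Measure (Fin N → ℝ)) [IsProbabilityMeasure μ]
    (hμ : MomentMatches 4 ηh μ) :
    μ {x | δ' ^ (d + 1) < |(1 / (N : ℝ)) * ∑ j, (x j) ^ 2 - 1|} ≤
      ENNReal.ofReal (δ' / d) := by
  have hδ := hδ'.1
  have hNp : (0 : ℝ) < N := by exact_mod_cast hN
  have hdp : (0 : ℝ) < d := by exact_mod_cast hd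
  set F : (Fin N → ℝ) → ℝ := fun x => ((1 / (N : ℝ)) * ∑ j, (x j) ^ 2 - 1) ^ 2 with hF
  have hFe : F = fun x => (1 / (N : ℝ) ^ 2) * (∑ i, ∑ j, x i ^ 2 * x j ^ 2)
      - (2 / N) * (∑ j, x j ^ 2) + 1 := by
    funext x
    rw [← Finset.sum_mul_sum]
    simp only [hF]
    field_simp
    ring
  have i4 : Integrable (fun x : Fin N → ℝ => ∑ i, ∑ j, x i ^ 2 * x j ^ 2) μ :=
    integrable_finsetSum _ fun i _ => integrable_finsetSum _ fun j _ => (match_four hμ i j).1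
  have i2 : Integrable (fun x : Fin N → ℝ => ∑ j, x j ^ 2) μ :=
    integrable_finsetSum _ fun i _ => (match_two hμ i).1
  have hFi : Integrable F μ := by
    rw [hFe]
    exact ((i4.const_mul _).sub (i2.const_mul _)).add (integrable_const _)
  have b4 : ∫ x, ∑ i, ∑ j, x i ^ 2 * x j ^ 2 ∂μ ≤ N ^ 2 * (1 + ηh) + 2 * N := by
    rw [integral_finsetSum _ fun i _ => integrable_finsetSum _ fun j _ => (match_four hμ i j).1]
    calc _ ≤ ∑ i : Fin N, ∑ j : Fin N, ((1 + ηh) + if i = j then 2 else 0) := by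
          refine Finset.sum_le_sum fun i _ => ?_
          rw [integral_finsetSum _ fun j _ => (match_four hμ i j).1]
          exact Finset.sum_le_sum fun j _ => (match_four hμ i j).2
      _ = _ := by
          simp [Finset.sum_add_distrib]
          ring
  have b2 : N * (1 - ηh) ≤ ∫ x, ∑ j, x j ^ 2 ∂μ := by
    rw [integral_finsetSum _ fun i _ => (match_two hμ i).1]
    calc _ = ∑ i : Fin N, (1 - ηh) := by simp; ring
      _ ≤ _ := Finset.sum_le_sum fun i _ => (match_two hμ i).2
  have bF : ∫ x, F x ∂μ ≤ δ' ^ (2 * d + 3) / d := by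
    have e : ∫ x, F x ∂μ = (1 / (N : ℝ) ^ 2) * (∫ x, ∑ i, ∑ j, x i ^ 2 * x j ^ 2 ∂μ)
      - (2 / N) * (∫ x, ∑ j, x j ^ 2 ∂μ) + 1 := by
      have i3 : Integrable (fun x : Fin N → ℝ => (1 / (N : ℝ) ^ 2) *
          (∑ i, ∑ j, x i ^ 2 * x j ^ 2) - (2 / N) * (∑ j, x j ^ 2)) μ :=
        (i4.const_mul _).sub (i2.const_mul _)
      rw [hFe]
      beta_reduce
      rw [integral_add i3 (integrable_const _), integral_sub (i4.const_mul _) (i2.const_mul _), integral_const_mul, integral_const_mul]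
      simp
    rw [e]
    have c4 := mul_le_mul_of_nonneg_left b4 (by positivity : 0 ≤ 1 / (N : ℝ) ^ 2)
    have c2 := mul_le_mul_of_nonneg_left b2 (by positivity : 0 ≤ 2 / (N : ℝ))
    have s4 : 1 / (N : ℝ) ^ 2 * (N ^ 2 * (1 + ηh) + 2 * N) = 1 + ηh + 2 / N := by
      field_simp
    have s2 : 2 / (N : ℝ) * (N * (1 - ηh)) = 2 * (1 - ηh) := by
      field_simp
    linarith
  have hM := mul_meas_ge_le_integral_of_nonneg (μ := μ) (f := F)
    (ae_of_all _ fun x => sq_nonneg _) hFi (δ' ^ (2 * d + 2))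
  have hR : μ.real {x | δ' ^ (2 * d + 2) ≤ F x} ≤ δ' / d := by
    have hp : 0 < δ' ^ (2 * d + 2) := by positivity
    refine le_of_mul_le_mul_left (hM.trans (bF.trans (le_of_eq ?_))) hp
    ring
  refine (measure_mono (t := {x | δ' ^ (2 * d + 2) ≤ F x}) ?_).trans ?_
  · intro x hx
    simp only [Set.mem_ofPred_eq] at hx ⊢
    have := pow_le_pow_left₀ (by positivity) hx.le 2
    rw [sq_abs, ← pow_mul] at this
    calc δ' ^ (2 * d + 2) = δ' ^ ((d + 1) * 2) := by
          congr 1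
          ring
      _ ≤ F x := this
  · rw [← ENNReal.ofReal_toReal (measure_ne_top μ _)]
    exact ENNReal.ofReal_le_ofReal hR
end
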